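/- For the supersymmetric sigma model on any finite ladder graph Γ_L over a finite base graph G_0 with translation-invariant edge weights β, there exist constants c₁,c₂>0 depending only on G_0 and β such that for any width parameters L=(−L̲,L̄), any two distinct vertices x,y∈V_L with π_x,π_y>0, and c₃(π):=min{π_x,π_y}^{−1}, one has 0 < lim_{ε↓0} ε E_{μ^ε_L}[G^ε_xy] ≤ c₁ c₃ e^{−c₂|x−y|}, where |x−y| is the horizontal distance. -/

import Mathlib

/-!
The tree sum in the density is a determinant, `det (A(t) + ε̂(t))`, by the matrix-tree theorem, and
the field `s` is Gaussian with the same matrix as precision matrix. Integrating both out leaves the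
marginal density `margT` of the field `t`, proportional to
`exp (-∑ t) * exp (-energy t) * exp (-∑ ε (cosh t - 1)) * √det (A(t) + ε̂(t))` (`expect_eq`).

After the shift `t = u - log ε` the integrand of `ε * E[G_xy]` converges as `ε ↓ 0` to `limDens`,
in which `√det` times the Green function has become `√(cof / ∑ p i e^{u i})`, with `cof` the spanning
tree sum of the unpinned graph. The energy dominates uniformly in `ε`, so the
limit is the integral of the positive function `limDens` (`tendsto_expect`).

For the upper bound, the constant mode of `u` is integrated out explicitly, which leaves the
integral of `freeDens u * e^{(u x + u y) / 2}` over fields modulo constants, times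
`min (p x) (p y)⁻¹` up to a constant (`lintegral_limDens_le`). Let `h` be a function with `h x = 0`,
and replace the weights `W i j` by `W i j / cosh (h i - h j)`. The addition formula for `cosh`
compares the energies of `u + h` and `u - h` with that of `u`, and the tree sum is log-convex in the
field, as a polynomial with nonnegative coefficients in exponentials of linear functions. Hence
`freeDens u` is at most a constant times the geometric mean of the tilted densities at `u + h` and
`u - h` (`freeDens_sq_le`). Shifting back by `± h` gains a factor `e^{-h y / 2}`, while the two
remaining integrals are masses of sigma models pinned at one vertex, with tilted weights. The cost
is of order `∑ (h i - h j)^2` together with the loss of tree weights where `h` varies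
(`integral_limDens_le`).

That these masses are at most those of a probability measure, `lintegral_margT_le`, is needed for
arbitrary weights. It follows from the substitution `β = potOf t`, under which `A(t) + ε̂(t)` is
conjugate to the Schrödinger operator `diag β - W`, and integration over `β` one vertex at a time
through Schur complements, each step being a reciprocal inverse Gaussian integral.

On the ladder, `h` is `r` times the horizontal distance to `x`, truncated at `m = |x - y|`. It
varies only inside a window of `O(m)` vertices, so that the cost is `exp (O(r^2 (m + 1)))` against
the gain `exp (-r m / 2)`, and a small `r` depending only on the base graph and the horizontal
weights gives exponential decay.
-/


open MeasureTheory Real Filter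
open scoped BigOperators

attribute [local instance] Classical.propDecidable

namespace H22

variable {V : Type*} [Fintype V] [DecidableEq V]

/-- The augmented graph `Γ_ρ`: add an extra vertex `ρ` (encoded by `none`)
joined to every vertex of the original graph. -/
def aug (G : SimpleGraph V) : SimpleGraph (Option V) :=
  SimpleGraph.fromRel (fun a b =>
    match a, b with
    | some i, some j => G.Adj i j
    | _, _ => True)

/-- `T` is (the edge set of) a spanning tree of `G`. -/
def IsSpanningTree {α : Type*} (G : SimpleGraph α) (T : Finset (Sym2 α)) : Prop :=
  ↑T ⊆ G.edgeSet ∧ (SimpleGraph.fromEdgeSet (↑T : Set (Sym2 α))).IsTree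

/-- The finset of all spanning trees of `G`. -/
noncomputable def STrees {α : Type*} [Fintype α] [DecidableEq α] (G : SimpleGraph α) :
    Finset (Finset (Sym2 α)) :=
  Finset.univ.filter (fun T => IsSpanningTree G T)

/-- Extension of a vector `t : V → ℝ` to `Option V` by `t_ρ := 0`. -/
def extV (t : V → ℝ) : Option V → ℝ := fun a => Option.elim a 0 t

/-- Lift of a (symmetrized) function of two vertices to unordered pairs. -/
noncomputable def esym {α : Type*} (f : α → α → ℝ) : Sym2 α → ℝ :=
  Sym2.lift ⟨fun a b => (f a b + f b a) / 2, fun a b => by ring⟩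

/-- Combined edge weights on the augmented graph: `β` on edges of `Γ`,
`ε_i` on the edge `i ∼ ρ`. -/
def bres (β : V → V → ℝ) (ε : V → ℝ) : Option V → Option V → ℝ := fun a b =>
  match a, b with
  | some i, some j => β i j
  | some i, none => ε i
  | none, some j => ε j
  | none, none => 0

/-- `B_{ij}(t,s) = cosh(t_i - t_j) + ½ (s_i - s_j)² e^{t_i+t_j}` on the augmented graph. -/
noncomputable def Bfun (t s : V → ℝ) (a b : Option V) : ℝ :=
  Real.cosh (extV t a - extV t b) +
    (1 / 2) * (extV s a - extV s b) ^ 2 * Real.exp (extV t a + extV t b)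

/-- Weight `β_{ij} e^{t_i+t_j}` of an edge of the augmented graph. -/
noncomputable def treeW (β : V → V → ℝ) (ε : V → ℝ) (t : V → ℝ) : Sym2 (Option V) → ℝ :=
  esym (fun a b => bres β ε a b * Real.exp (extV t a + extV t b))

/-- Gibbs factor `e^{-β_{ij}(B_{ij}(t,s)-1)}` of an edge of the augmented graph. -/
noncomputable def gibbs (β : V → V → ℝ) (ε : V → ℝ) (t s : V → ℝ) : Sym2 (Option V) → ℝ :=
  esym (fun a b => Real.exp (-(bres β ε a b * (Bfun t s a b - 1))))

/-- The density of the measure `μ^ε` with respect to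
(Lebesgue on `ℝ^V × ℝ^V`) × (counting measure on spanning trees). -/
noncomputable def dens (G : SimpleGraph V) (β : V → V → ℝ) (ε : V → ℝ)
    (t s : V → ℝ) (T : Finset (Sym2 (Option V))) : ℝ :=
  (∏ j, Real.exp (-t j) / (2 * Real.pi)) *
  (∏ e ∈ Finset.univ.filter (fun e : Sym2 (Option V) => e ∈ (aug G).edgeSet),
      gibbs β ε t s e) *
  (∏ e ∈ T, treeW β ε t e)

/-- Expectation of an observable `f(t,s,T)` under the measure `μ^ε`. -/
noncomputable def expect (G : SimpleGraph V) (β : V → V → ℝ) (ε : V → ℝ)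
    (f : (V → ℝ) → (V → ℝ) → Finset (Sym2 (Option V)) → ℝ) : ℝ :=
  ∑ T ∈ STrees (aug G), ∫ p : (V → ℝ) × (V → ℝ), dens G β ε p.1 p.2 T * f p.1 p.2 T

/-- The weighted graph Laplacian `A(t)` of `Γ`. -/
noncomputable def Amat (G : SimpleGraph V) (β : V → V → ℝ) (t : V → ℝ) : Matrix V V ℝ :=
  Matrix.of fun i j =>
    if i = j then ∑ k ∈ Finset.univ.filter (fun k => G.Adj k j), β k j * Real.exp (t k + t j)
    else if G.Adj i j then -(β i j * Real.exp (t i + t j)) else 0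

/-- The pinning diagonal matrix `ε̂(t) = diag(ε_i e^{t_i})`. -/
noncomputable def epsHat (ε : V → ℝ) (t : V → ℝ) : Matrix V V ℝ :=
  Matrix.diagonal fun i => ε i * Real.exp (t i)

/-- The Green's function `G^ε_{xy} = e^{t_x+t_y} (A(t)+ε̂(t))⁻¹_{xy}`. -/
noncomputable def Gfun (G : SimpleGraph V) (β : V → V → ℝ) (ε : V → ℝ)
    (t : V → ℝ) (x y : V) : ℝ :=
  Real.exp (t x + t y) * (Amat G β t + epsHat ε t)⁻¹ x y

/-- The edge `i ∼ ρ` of the augmented graph. -/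
def rootEdge (i : V) : Sym2 (Option V) := s(some i, none)

/-- The set of roots `R(T) = {i ∈ V : (i ∼ ρ) ∈ T}`. -/
noncomputable def roots (T : Finset (Sym2 (Option V))) : Finset V :=
  Finset.univ.filter fun i => rootEdge i ∈ T

/-- The forest `F(T) = T ∩ E`: edges of `T` not incident to `ρ`. -/
noncomputable def forestOf (T : Finset (Sym2 (Option V))) : Finset (Sym2 (Option V)) :=
  T.filter fun e => ¬ ((none : Option V) ∈ e)

/-- `x ↔_T y`: `x` and `y` are connected in `T` through a path not using `ρ`. -/
def connIn (T : Finset (Sym2 (Option V))) (x y : V) : Prop :=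
  (SimpleGraph.fromEdgeSet (↑(forestOf T) : Set (Sym2 (Option V)))).Reachable (some x) (some y)

/-- The observable `O^π_{xy}`. -/
noncomputable def obs (pv : V → ℝ) (x y : V) (t : V → ℝ)
    (T : Finset (Sym2 (Option V))) : ℝ :=
  Real.exp (t x + t y) / (pv x * Real.exp (t x) + pv y * Real.exp (t y)) *
    (if rootEdge x ∈ T ∧ connIn T x y then 1 else 0)

/-- The pinning `ε = (π_i ε)_{i ∈ V}`. -/
def pinOf (pv : V → ℝ) (ε : ℝ) : V → ℝ := fun i => pv i * ε

/-- The pinning `c δ_x` concentrated at the single vertex `x`. -/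
def singlePin (x : V) (c : ℝ) : V → ℝ := fun i => if i = x then c else 0

end H22

open scoped Topology

namespace H22

/-- The finite ladder graph `Γ_L` over the base graph `G₀`, with vertex set
`{-L̲,…,L̄} × V₀`: 'vertical' edges `((n,v) ∼ (n,v'))` for `(v ∼ v') ∈ E₀` and
'horizontal' edges `((n,v) ∼ (n+1,v))`. -/
def ladderL {V0 : Type*} (G0 : SimpleGraph V0) (L1 L2 : ℕ) :
    SimpleGraph (↥(Set.Icc (-(L1 : ℤ)) (L2 : ℤ)) × V0) :=
  SimpleGraph.fromRel (fun a b =>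
    ((a.1 : ℤ) = (b.1 : ℤ) ∧ G0.Adj a.2 b.2) ∨ (a.2 = b.2 ∧ (b.1 : ℤ) = (a.1 : ℤ) + 1))

/-- Translation-invariant edge weights on the ladder, determined by the vertical
weights `βV` (one for each edge of `G₀`) and the horizontal weights `βH`
(one for each vertex of `G₀`). -/
def ladderWeights {V0 : Type*} [DecidableEq V0] (βV : V0 → V0 → ℝ) (βH : V0 → ℝ) (L1 L2 : ℕ) :
    (↥(Set.Icc (-(L1 : ℤ)) (L2 : ℤ)) × V0) → (↥(Set.Icc (-(L1 : ℤ)) (L2 : ℤ)) × V0) → ℝ :=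
  fun a b => if a.2 = b.2 then βH a.2 else βV a.2 b.2

section

variable {V : Type*} [Fintype V] [DecidableEq V]

set_option linter.unusedSectionVars false

/-! ### The weighted Laplacian -/

/-- A symmetric nonnegative weight function on pairs of vertices whose positive weights connect
all vertices: a connected weighted graph, with absent edges encoded by weight zero. -/
structure IsNet (W : V → V → ℝ) : Prop where
  symm : ∀ i j, W i j = W j i
  nonneg : ∀ i j, 0 ≤ W i j
  conn : ∀ i j, Relation.ReflTransGen (fun a b => 0 < W a b) i j

/-- The Laplacian `A(t)` with edge weights `W i j * exp (t i + t j)`; diagonal values of `W`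
cancel. -/
noncomputable def lap (W : V → V → ℝ) (t : V → ℝ) : Matrix V V ℝ :=
  Matrix.diagonal (fun i => ∑ k, W i k * Real.exp (t i + t k)) -
    Matrix.of fun i j => W i j * Real.exp (t i + t j)

/-- The pinned Laplacian `A(t) + ε̂(t)`. -/
noncomputable def pinLap (W : V → V → ℝ) (ε t : V → ℝ) : Matrix V V ℝ :=
  lap W t + epsHat ε t

lemma lap_mulVec (W : V → V → ℝ) (t v : V → ℝ) (i : V) :
    (lap W t).mulVec v i = ∑ j, W i j * Real.exp (t i + t j) * (v i - v j) := by
  simp only [lap, Matrix.sub_mulVec, Pi.sub_apply, Matrix.mulVec_diagonal, mul_sub,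
    Finset.sum_sub_distrib, Finset.sum_mul]
  rfl

lemma lap_quad {W : V → V → ℝ} (hW : IsNet W) (t v : V → ℝ) :
    v ⬝ᵥ (lap W t).mulVec v =
      (1 / 2) * ∑ i, ∑ j, W i j * Real.exp (t i + t j) * (v i - v j) ^ 2 := by
  have h1 : v ⬝ᵥ (lap W t).mulVec v =
      ∑ i, ∑ j, W i j * Real.exp (t i + t j) * (v i - v j) * v i := by
    simp only [dotProduct, lap_mulVec, Finset.mul_sum]
    exact Finset.sum_congr rfl fun i _ => Finset.sum_congr rfl fun j _ => by ring
  have h2 : v ⬝ᵥ (lap W t).mulVec v =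
      ∑ i, ∑ j, W i j * Real.exp (t i + t j) * (v j - v i) * v j := by
    rw [h1, Finset.sum_comm]
    refine Finset.sum_congr rfl fun i _ => Finset.sum_congr rfl fun j _ => ?_
    rw [hW.symm j i, add_comm (t j)]
  have h3 : 2 * (v ⬝ᵥ (lap W t).mulVec v) =
      ∑ i, ∑ j, W i j * Real.exp (t i + t j) * (v i - v j) ^ 2 := by
    rw [two_mul]; nth_rewrite 1 [h1]; rw [h2]
    simp only [← Finset.sum_add_distrib]
    exact Finset.sum_congr rfl fun i _ => Finset.sum_congr rfl fun j _ => by ring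
  linarith

lemma lap_symm {W : V → V → ℝ} (hW : IsNet W) (t : V → ℝ) : (lap W t).transpose = lap W t := by
  unfold lap
  rw [Matrix.transpose_sub, Matrix.diagonal_transpose]
  congr 1
  ext i j
  simp [hW.symm j i, add_comm (t j)]

lemma pinLap_symm {W : V → V → ℝ} (hW : IsNet W) (ε t : V → ℝ) :
    (pinLap W ε t).transpose = pinLap W ε t := by
  unfold pinLap epsHat
  rw [Matrix.transpose_add, lap_symm hW, Matrix.diagonal_transpose]

lemma pinLap_quad {W : V → V → ℝ} (hW : IsNet W) (ε t v : V → ℝ) :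
    v ⬝ᵥ (pinLap W ε t).mulVec v =
      (1 / 2) * (∑ i, ∑ j, W i j * Real.exp (t i + t j) * (v i - v j) ^ 2) +
        ∑ i, ε i * Real.exp (t i) * v i ^ 2 := by
  unfold pinLap epsHat
  rw [Matrix.add_mulVec, dotProduct_add, lap_quad hW]
  congr 1
  simp only [dotProduct, Matrix.mulVec_diagonal]
  exact Finset.sum_congr rfl fun i _ => by ring

lemma IsNet.const_of_sum_eq_zero {W : V → V → ℝ} (hW : IsNet W) {t v : V → ℝ}
    (h : ∑ i, ∑ j, W i j * Real.exp (t i + t j) * (v i - v j) ^ 2 ≤ 0) (i j : V) : v i = v j := by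
  have hn : ∀ i j, 0 ≤ W i j * Real.exp (t i + t j) * (v i - v j) ^ 2 := fun i j =>
    mul_nonneg (mul_nonneg (hW.nonneg i j) (Real.exp_pos _).le) (sq_nonneg _)
  have h0 := (Finset.sum_eq_zero_iff_of_nonneg
    (fun i _ => Finset.sum_nonneg fun j _ => hn i j)).1
    (le_antisymm h (Finset.sum_nonneg fun i _ => Finset.sum_nonneg fun j _ => hn i j))
  have hstep : ∀ a b, 0 < W a b → v a = v b := by
    intro a b hab
    have := (Finset.sum_eq_zero_iff_of_nonneg (fun j _ => hn a j)).1 (h0 a (Finset.mem_univ _)) b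
      (Finset.mem_univ _)
    have hp := Real.exp_pos (t a + t b)
    have : (v a - v b) ^ 2 = 0 := by
      rcases mul_eq_zero.1 this with h | h
      · exact absurd h (mul_pos hab hp).ne'
      · exact h
    exact sub_eq_zero.1 (pow_eq_zero_iff two_ne_zero |>.1 this)
  have := hW.conn i j
  induction this with
  | refl => rfl
  | tail _ hbc ih => rw [ih, hstep _ _ hbc]

lemma pinLap_posDef {W : V → V → ℝ} (hW : IsNet W) {ε : V → ℝ} (hε : ∀ i, 0 ≤ ε i)
    (hε' : ∃ i, 0 < ε i) (t : V → ℝ) : (pinLap W ε t).PosDef := by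
  refine Matrix.PosDef.of_dotProduct_mulVec_pos ?_ ?_
  · rw [Matrix.IsHermitian, Matrix.conjTranspose_eq_transpose_of_trivial]
    exact pinLap_symm hW ε t
  intro v hv
  simp only [star_trivial]
  rw [pinLap_quad hW]
  have h1 : 0 ≤ ∑ i, ∑ j, W i j * Real.exp (t i + t j) * (v i - v j) ^ 2 :=
    Finset.sum_nonneg fun i _ => Finset.sum_nonneg fun j _ =>
    mul_nonneg (mul_nonneg (hW.nonneg i j) (Real.exp_pos _).le) (sq_nonneg _)
  have h2' : ∀ i, 0 ≤ ε i * Real.exp (t i) * v i ^ 2 := fun i =>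
    mul_nonneg (mul_nonneg (hε i) (Real.exp_pos _).le) (sq_nonneg _)
  have h2 : 0 ≤ ∑ i, ε i * Real.exp (t i) * v i ^ 2 := Finset.sum_nonneg fun i _ => h2' i
  by_contra hcon
  push Not at hcon
  have hc := hW.const_of_sum_eq_zero (t := t) (v := v) (by linarith)
  have h3 := (Finset.sum_eq_zero_iff_of_nonneg (fun i _ => h2' i)).1
    (le_antisymm (by linarith) h2)
  obtain ⟨i0, hi0⟩ := hε'
  have h4 : v i0 = 0 := by
    rcases mul_eq_zero.1 (h3 i0 (Finset.mem_univ _)) with h | h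
    · exact absurd h (mul_pos hi0 (Real.exp_pos _)).ne'
    · exact pow_eq_zero_iff two_ne_zero |>.1 h
  exact hv (funext fun i => by rw [hc i i0, h4]; rfl)

lemma pinLap_det_pos {W : V → V → ℝ} (hW : IsNet W) {ε : V → ℝ} (hε : ∀ i, 0 ≤ ε i)
    (hε' : ∃ i, 0 < ε i) (t : V → ℝ) : 0 < (pinLap W ε t).det :=
  (pinLap_posDef hW hε hε' t).det_pos

lemma pinLap_mulVec (W : V → V → ℝ) (ε t v : V → ℝ) (i : V) :
    (pinLap W ε t).mulVec v i =
      (∑ j, W i j * Real.exp (t i + t j) * (v i - v j)) + ε i * Real.exp (t i) * v i := by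
  unfold pinLap epsHat
  rw [Matrix.add_mulVec, Pi.add_apply, lap_mulVec, Matrix.mulVec_diagonal]

lemma pinLap_mulVec_one (W : V → V → ℝ) (ε t : V → ℝ) :
    (pinLap W ε t).mulVec (fun _ => 1) = fun i => ε i * Real.exp (t i) := by
  ext i
  simp [pinLap, Matrix.add_mulVec, lap_mulVec, epsHat, Matrix.mulVec_diagonal]

/-- Minimum principle: the pinned Laplacian is an `M`-matrix. -/
lemma pinLap_min_principle {W : V → V → ℝ} (hW : IsNet W) {ε : V → ℝ} (hε : ∀ i, 0 ≤ ε i)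
    (hε' : ∃ i, 0 < ε i) (t v : V → ℝ) (hv : ∀ i, 0 ≤ (pinLap W ε t).mulVec v i) (i : V) :
    0 ≤ v i := by
  -- Test the inequality against the negative part of `v`.
  set n : V → ℝ := fun i => max (-v i) 0 with hn
  have h1 : n ⬝ᵥ (pinLap W ε t).mulVec n ≤ - (n ⬝ᵥ (pinLap W ε t).mulVec v) := by
    rw [← sub_nonneg]
    have : - (n ⬝ᵥ (pinLap W ε t).mulVec v) - n ⬝ᵥ (pinLap W ε t).mulVec n =
        ∑ i, ∑ j, n i * (W i j * Real.exp (t i + t j)) * ((v j + n j) - (v i + n i)) -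
          ∑ i, ε i * Real.exp (t i) * (n i * (v i + n i)) := by
      simp only [dotProduct, pinLap_mulVec, mul_add, Finset.mul_sum]
      simp only [← Finset.sum_sub_distrib, ← Finset.sum_neg_distrib]
      refine Finset.sum_congr rfl fun i _ => ?_
      rw [neg_add, ← sub_sub, ← Finset.sum_neg_distrib, add_sub_right_comm,
        ← Finset.sum_sub_distrib, add_sub_assoc, sub_eq_add_neg (∑ j, _)]
      congr 1
      · exact Finset.sum_congr rfl fun j _ => by ring
      · ring
    rw [this]
    have hz : ∀ i, n i * (v i + n i) = 0 := by
      intro i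
      simp only [hn]
      rcases le_total (-v i) 0 with h | h
      · rw [max_eq_right h]; ring
      · rw [max_eq_left h]; ring
    have hp : ∀ i, 0 ≤ v i + n i := fun i => by
      have := le_max_left (-v i) 0
      simp only [hn]; linarith
    simp only [hz, mul_zero, Finset.sum_const_zero, sub_zero]
    refine Finset.sum_nonneg fun i _ => Finset.sum_nonneg fun j _ => ?_
    have : n i * (W i j * Real.exp (t i + t j)) * ((v j + n j) - (v i + n i)) =
      n i * (W i j * Real.exp (t i + t j)) * (v j + n j) -
        (W i j * Real.exp (t i + t j)) * (n i * (v i + n i)) := by ring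
    rw [this, hz, mul_zero, sub_zero]
    exact mul_nonneg (mul_nonneg (le_max_right _ _)
      (mul_nonneg (hW.nonneg i j) (Real.exp_pos _).le)) (hp j)
  have h2 : 0 ≤ n ⬝ᵥ (pinLap W ε t).mulVec v :=
    Finset.sum_nonneg fun i _ => mul_nonneg (le_max_right _ _) (hv i)
  have h3 : n = 0 := by
    by_contra hne
    have := (pinLap_posDef hW hε hε' t).dotProduct_mulVec_pos hne
    simp only [star_trivial] at this
    linarith
  have h4 : n i = 0 := by rw [h3]; rfl
  have := le_max_left (-v i) 0
  simp only [hn] at h4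
  linarith

lemma pinLap_inv_nonneg {W : V → V → ℝ} (hW : IsNet W) {ε : V → ℝ} (hε : ∀ i, 0 ≤ ε i)
    (hε' : ∃ i, 0 < ε i) (t : V → ℝ) (i j : V) : 0 ≤ (pinLap W ε t)⁻¹ i j := by
  have hu : IsUnit (pinLap W ε t).det := (pinLap_det_pos hW hε hε' t).ne'.isUnit
  refine pinLap_min_principle hW hε hε' t (fun k => (pinLap W ε t)⁻¹ k j) (fun k => ?_) i
  have : (pinLap W ε t).mulVec (fun k => (pinLap W ε t)⁻¹ k j) k = (1 : Matrix V V ℝ) k j := by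
    rw [← Matrix.mul_nonsing_inv _ hu]; rfl
  rw [this, Matrix.one_apply]
  split_ifs <;> norm_num

/-- The potential theoretic bound on the Green function: `A(t) + ε̂(t)` maps the constant `1` to
the vector `ε̂(t)`, so the nonnegative entries of the inverse satisfy
`∑ j, G i j * (ε j * exp (t j)) = 1`. -/
lemma pinLap_inv_le {W : V → V → ℝ} (hW : IsNet W) {ε : V → ℝ} (hε : ∀ i, 0 ≤ ε i)
    (t : V → ℝ) (i j : V) (hj : 0 < ε j) :
    (pinLap W ε t)⁻¹ i j ≤ (ε j * Real.exp (t j))⁻¹ := by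
  have hε' : ∃ i, 0 < ε i := ⟨j, hj⟩
  have hu : IsUnit (pinLap W ε t).det := (pinLap_det_pos hW hε hε' t).ne'.isUnit
  have h1 : (pinLap W ε t)⁻¹.mulVec (fun i => ε i * Real.exp (t i)) = fun _ => 1 := by
    rw [← pinLap_mulVec_one W ε t, Matrix.mulVec_mulVec, Matrix.nonsing_inv_mul _ hu,
      Matrix.one_mulVec]
  have h2 := congrFun h1 i
  simp only [Matrix.mulVec, dotProduct] at h2
  have h3 : (pinLap W ε t)⁻¹ i j * (ε j * Real.exp (t j)) ≤ 1 := by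
    rw [← h2]
    exact Finset.single_le_sum (f := fun k => (pinLap W ε t)⁻¹ i k * (ε k * Real.exp (t k)))
      (fun k _ => mul_nonneg (pinLap_inv_nonneg hW hε hε' t i k)
        (mul_nonneg (hε k) (Real.exp_pos _).le)) (Finset.mem_univ j)
  have h4 := (le_div_iff₀ (mul_pos hj (Real.exp_pos _))).2 h3
  rwa [one_div] at h4

/-- The common value of all cofactors of the Laplacian (the weighted number of spanning trees of
the unpinned graph), read off at the vertex `x`. -/
noncomputable def cof (W : V → V → ℝ) (x : V) (t : V → ℝ) : ℝ := (lap W t).adjugate x x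

lemma lap_det_eq_zero (W : V → V → ℝ) (x : V) (t : V → ℝ) : (lap W t).det = 0 := by
  refine Matrix.exists_mulVec_eq_zero_iff.1 ⟨fun _ => 1, ?_, ?_⟩
  · intro h; exact one_ne_zero (congrFun h x)
  · ext i; simp [lap_mulVec]

lemma lap_adjugate_eq {W : V → V → ℝ} (hW : IsNet W) (t : V → ℝ) (x i j : V) :
    (lap W t).adjugate i j = cof W x t := by
  have hcol : ∀ i k j, (lap W t).adjugate i j = (lap W t).adjugate k j := by
    intro i k j
    have h := Matrix.mul_adjugate (lap W t)
    rw [lap_det_eq_zero W x t, zero_smul] at h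
    have hv : (lap W t).mulVec (fun i => (lap W t).adjugate i j) = 0 := by
      ext k
      exact congrFun (congrFun h k) j
    have hq := lap_quad hW t (fun i => (lap W t).adjugate i j)
    rw [hv, dotProduct_zero] at hq
    exact hW.const_of_sum_eq_zero (t := t) (v := fun i => (lap W t).adjugate i j)
      (by linarith) i k
  have hs : ∀ i j, (lap W t).adjugate i j = (lap W t).adjugate j i := by
    intro i j
    conv_lhs => rw [← lap_symm hW t, ← Matrix.adjugate_transpose]
    rfl
  unfold cof
  rw [hcol i x j, hs x j, hcol j x x]

/-- The adjugate applied to `(A(t) + ε̂(t)) 1 = ε̂(t)`, with `1` the constant vector. -/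
lemma pinLap_det_eq (W : V → V → ℝ) (ε t : V → ℝ) (i : V) :
    (pinLap W ε t).det = ∑ j, (pinLap W ε t).adjugate i j * (ε j * Real.exp (t j)) := by
  have h := congrArg (fun v => (pinLap W ε t).adjugate.mulVec v i) (pinLap_mulVec_one W ε t)
  simp only [Matrix.mulVec_mulVec, Matrix.adjugate_mul] at h
  rw [Matrix.smul_mulVec, Matrix.one_mulVec] at h
  simpa [Matrix.mulVec, dotProduct] using h

lemma pinLap_single_det (W : V → V → ℝ) (x : V) (t : V → ℝ) :
    (pinLap W (singlePin x 1) t).det = Real.exp (t x) * cof W x t := by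
  rw [pinLap_det_eq W _ t x, Finset.sum_eq_single x]
  · have : (pinLap W (singlePin x 1) t).adjugate x x = cof W x t := by
      rw [cof, Matrix.adjugate_apply, Matrix.adjugate_apply]
      congr 1
      ext i j
      rcases eq_or_ne i x with h | h
      · subst h; simp
      · simp only [Matrix.updateRow_apply, if_neg h, pinLap, epsHat, Matrix.add_apply,
          Matrix.diagonal_apply, singlePin]
        simp
    rw [this]; simp [singlePin, mul_comm]
  · intro b _ hb; simp [singlePin, hb]
  · simp

lemma singlePin_nonneg (x : V) : ∀ i, 0 ≤ singlePin x 1 i := by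
  intro i; unfold singlePin; split_ifs <;> norm_num

lemma singlePin_pos (x : V) : ∃ i, 0 < singlePin x 1 i := ⟨x, by simp [singlePin]⟩

lemma cof_pos {W : V → V → ℝ} (hW : IsNet W) (x : V) (t : V → ℝ) : 0 < cof W x t := by
  have := pinLap_det_pos hW (singlePin_nonneg x) (singlePin_pos x) t
  rw [pinLap_single_det] at this
  exact pos_of_mul_pos_right this (Real.exp_pos _).le

lemma cof_eq {W : V → V → ℝ} (hW : IsNet W) (x y : V) (t : V → ℝ) : cof W x t = cof W y t :=
  lap_adjugate_eq hW t y x x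

/-! ### The matrix-tree theorem -/

/-- The Laplacian minor (root `none` removed) of directed weights `w i k`, `i : V`,
`k : Option V`. -/
noncomputable def dirLap (w : V → Option V → ℝ) : Matrix V V ℝ :=
  Matrix.of fun i j => (if i = j then ∑ k, w i k else 0) - w i (some j)

/-- The determinant `det (1 - P)` attached to a parent function `p : V → Option V`. -/
noncomputable def parentDet (p : V → Option V) : ℝ :=
  (Matrix.of fun i j : V => (if i = j then (1 : ℝ) else 0) - if p i = some j then 1 else 0).det

/-- A parent function whose iterates all lead to the root `none`, certified by a height. -/
def AcyclicParent (p : V → Option V) : Prop :=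
  ∃ h : Option V → ℕ, ∀ i, h (p i) < h (some i)

/-- Multilinearity of the determinant in the rows. -/
lemma dirLap_det (w : V → Option V → ℝ) :
    (dirLap w).det = ∑ p : V → Option V, (∏ i, w i (p i)) * parentDet p := by
  have hrow : dirLap w = fun i => ∑ k : Option V, w i k •
      (fun j : V => (if i = j then (1 : ℝ) else 0) - if k = some j then 1 else 0) := by
    ext i j
    simp only [dirLap, Matrix.of_apply, Finset.sum_apply, Pi.smul_apply, smul_eq_mul, mul_sub,
      Finset.sum_sub_distrib, mul_ite, mul_one, mul_zero]
    congr 1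
    · split_ifs <;> simp
    · simp
  rw [hrow]
  change Matrix.detRowAlternating.toMultilinearMap _ = _
  rw [MultilinearMap.map_sum]
  refine Finset.sum_congr rfl fun p _ => ?_
  rw [MultilinearMap.map_smul_univ]
  rfl

/-- Ordered by height, `1 - P` is triangular with unit diagonal. -/
lemma parentDet_of_acyclic {p : V → Option V} (hp : AcyclicParent p) : parentDet p = 1 := by
  obtain ⟨h, hh⟩ := hp
  have hne : ∀ i, p i ≠ some i := fun i hi => by
    have := hh i; rw [hi] at this; exact lt_irrefl _ this
  unfold parentDet
  rw [Matrix.det_apply, Finset.sum_eq_single 1]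
  · simp [hne]
  · intro σ _ hσ
    by_contra hprod0
    have hprod := Finset.prod_ne_zero_iff.1 fun h => hprod0 (by rw [h, smul_zero])
    have key : ∀ i, σ i ≠ i → h (some i) < h (some (σ i)) := by
      intro i hi
      have h1 := hprod i (Finset.mem_univ _)
      simp only [Matrix.of_apply, if_neg hi, zero_sub, neg_ne_zero] at h1
      have h2 : p (σ i) = some i := by
        by_contra hcon; simp [hcon] at h1
      have := hh (σ i)
      rwa [h2] at this
    obtain ⟨i, hi⟩ : ∃ i, σ i ≠ i := by
      by_contra hcon; push Not at hcon; exact hσ (Equiv.ext hcon)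
    have hlt : ∑ i, h (some i) < ∑ i, h (some (σ i)) := by
      refine Finset.sum_lt_sum (fun i _ => ?_) ⟨i, Finset.mem_univ _, key i hi⟩
      by_cases hc : σ i = i
      · rw [hc]
      · exact (key i hc).le
    rw [Equiv.sum_comp σ (fun i => h (some i))] at hlt
    exact lt_irrefl _ hlt
  · simp

/-- A cycle of `p` makes the indicator function of the vertices that never reach the root a
kernel vector of `1 - P`. -/
lemma parentDet_of_not_acyclic {p : V → Option V} (hp : ¬ AcyclicParent p) : parentDet p = 0 := by
  set st : Option V → Option V := fun a => a.bind p with hst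
  have hbad : ∃ i : V, ∀ n, st^[n] (some i) ≠ none := by
    by_contra hcon
    push Not at hcon
    have hall : ∀ a : Option V, ∃ n, st^[n] a = none := by
      rintro (_ | i)
      · exact ⟨0, rfl⟩
      · exact hcon i
    refine hp ⟨fun a => Nat.find (hall a), fun i => ?_⟩
    have h1 := Nat.find_spec (hall (some i))
    cases hn : Nat.find (hall (some i)) with
    | zero => rw [hn] at h1; simp at h1
    | succ n =>
      rw [hn, Function.iterate_succ_apply] at h1
      have h2 : Nat.find (hall (p i)) ≤ n := Nat.find_min' (hall (p i)) h1
      have h3 : Nat.find (hall (p i)) < Nat.find (hall (some i)) := by omega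
      exact h3
  obtain ⟨i0, hi0⟩ := hbad
  let v : Option V → ℝ := fun a => if ∀ n, st^[n] a ≠ none then 1 else 0
  have hv : ∀ i, v (p i) = v (some i) := by
    intro i
    have : (∀ n, st^[n] (p i) ≠ none) ↔ ∀ n, st^[n] (some i) ≠ none := by
      constructor
      · rintro h (_ | n)
        · simp
        · rw [Function.iterate_succ_apply]; exact h n
      · intro h n
        have := h (n + 1)
        rwa [Function.iterate_succ_apply] at this
    simp only [v, this]
  refine Matrix.exists_mulVec_eq_zero_iff.1 ⟨fun i => v (some i), ?_, ?_⟩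
  · intro h
    have := congrFun h i0
    simp [v, hi0] at this
  · ext i
    simp only [Matrix.mulVec, dotProduct, Matrix.of_apply, sub_mul, Finset.sum_sub_distrib,
      ite_mul, one_mul, zero_mul, Finset.sum_ite_eq, Finset.mem_univ, if_true, Pi.zero_apply]
    rw [← hv i]
    cases hpi : p i with
    | none => simp [v]; exact ⟨0, rfl⟩
    | some j => simp

lemma parentDet_nonneg (p : V → Option V) : 0 ≤ parentDet p := by
  by_cases hp : AcyclicParent p
  · rw [parentDet_of_acyclic hp]; exact zero_le_one
  · rw [parentDet_of_not_acyclic hp]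

/-- The edges `i ∼ p i` of a parent function. -/
noncomputable def parentEdges (p : V → Option V) : Finset (Sym2 (Option V)) :=
  Finset.univ.image fun i => s(some i, p i)

lemma AcyclicParent.edge_injective {p : V → Option V} (hp : AcyclicParent p) :
    Function.Injective fun i => s(some i, p i) := by
  obtain ⟨h, hh⟩ := hp
  intro i j hij
  simp only [Sym2.eq_iff] at hij
  rcases hij with ⟨h1, _⟩ | ⟨h1, h2⟩
  · exact Option.some_injective _ h1
  · have a := hh i
    have b := hh j
    rw [h2] at a
    rw [← h1] at b
    omega

lemma AcyclicParent.card_edges {p : V → Option V} (hp : AcyclicParent p) :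
    (parentEdges p).card = Fintype.card V := by
  unfold parentEdges
  rw [Finset.card_image_of_injective _ hp.edge_injective, Finset.card_univ]

lemma AcyclicParent.edges_inj {p q : V → Option V} (hp : AcyclicParent p)
    (h : parentEdges p = parentEdges q) : p = q := by
  obtain ⟨f, hf⟩ := hp
  have key : ∀ n i, f (some i) = n → q i = p i := by
    intro n
    induction n using Nat.strong_induction_on with
    | _ n ih =>
      intro i hi
      have hmem : s(some i, p i) ∈ parentEdges q := by
        rw [← h]; exact Finset.mem_image_of_mem _ (Finset.mem_univ i)
      obtain ⟨j, _, hj⟩ := Finset.mem_image.1 hmem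
      simp only [Sym2.eq_iff] at hj
      rcases hj with ⟨h1, h2⟩ | ⟨h1, h2⟩
      · rw [← Option.some_injective _ h1, h2, Option.some_injective _ h1]
      · have h3 := hf i
        rw [← h1, hi] at h3
        have h4 := ih _ h3 j rfl
        have h5 := hf j
        rw [← h4, h2, h1] at h5
        have := hf i
        omega
  exact funext fun i => (key _ i rfl).symm

lemma not_isDiag_of_aug {G : SimpleGraph V} {T : Finset (Sym2 (Option V))}
    (hT : (T : Set (Sym2 (Option V))) ⊆ (aug G).edgeSet) :
    (SimpleGraph.fromEdgeSet (T : Set (Sym2 (Option V)))).edgeSet = T := by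
  rw [SimpleGraph.edgeSet_fromEdgeSet, sdiff_eq_left, Set.disjoint_left]
  intro e he hd
  exact (aug G).not_isDiag_of_mem_edgeSet (hT he) hd

lemma AcyclicParent.mem_STrees {G : SimpleGraph V} {p : V → Option V} (hp : AcyclicParent p)
    (hadj : ∀ i, (aug G).Adj (some i) (p i)) : parentEdges p ∈ STrees (aug G) := by
  have hsub : (parentEdges p : Set (Sym2 (Option V))) ⊆ (aug G).edgeSet := by
    intro e he
    obtain ⟨i, _, rfl⟩ := Finset.mem_image.1 he
    exact hadj i
  refine Finset.mem_filter.2 ⟨Finset.mem_univ _, hsub, ?_⟩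
  rw [SimpleGraph.isTree_iff_connected_and_card]
  constructor
  · obtain ⟨f, hf⟩ := hp
    have key : ∀ n i, f (some i) = n →
        (SimpleGraph.fromEdgeSet (parentEdges p : Set (Sym2 (Option V)))).Reachable
          (some i) none := by
      intro n
      induction n using Nat.strong_induction_on with
      | _ n ih =>
        intro i hi
        have h1 : (SimpleGraph.fromEdgeSet (parentEdges p : Set (Sym2 (Option V)))).Adj
            (some i) (p i) := by
          rw [SimpleGraph.fromEdgeSet_adj]
          exact ⟨Finset.mem_image_of_mem _ (Finset.mem_univ i), (hadj i).ne⟩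
        have h2 := hf i
        cases hpi : p i with
        | none => rw [hpi] at h1; exact h1.reachable
        | some j =>
          rw [hpi] at h1 h2
          exact h1.reachable.trans (ih _ (hi ▸ h2) j rfl)
    have hall : ∀ a, (SimpleGraph.fromEdgeSet
        (parentEdges p : Set (Sym2 (Option V)))).Reachable a none := by
      rintro (_ | i)
      · exact SimpleGraph.Reachable.refl _
      · exact key _ i rfl
    have : Nonempty (Option V) := ⟨none⟩
    exact SimpleGraph.Connected.mk fun a b => (hall a).trans (hall b).symm
  · rw [not_isDiag_of_aug hsub]
    simp [hp.card_edges]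

/-- Orienting a spanning tree towards the root `none` gives an acyclic parent function. -/
lemma exists_parent {G : SimpleGraph V} {T : Finset (Sym2 (Option V))}
    (hT : T ∈ STrees (aug G)) :
    ∃ p : V → Option V, AcyclicParent p ∧ (∀ i, (aug G).Adj (some i) (p i)) ∧
      parentEdges p = T := by
  obtain ⟨hsub, htree⟩ := (Finset.mem_filter.1 hT).2
  set F := SimpleGraph.fromEdgeSet (T : Set (Sym2 (Option V))) with hF
  -- The parent of `i` is a neighbour closer to the root in the graph distance of the tree.
  have hex : ∀ i : V, ∃ k, F.Adj (some i) k ∧ F.dist k none < F.dist (some i) none := by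
    intro i
    obtain ⟨w, hw⟩ := htree.1.exists_walk_length_eq_dist (some i) none
    cases w with
    | cons h q =>
      refine ⟨_, h, ?_⟩
      rw [← hw, SimpleGraph.Walk.length_cons]
      exact Nat.lt_succ_of_le (SimpleGraph.dist_le q)
  choose p hp1 hp2 using hex
  have hac : AcyclicParent p := ⟨fun a => F.dist a none, hp2⟩
  have hpT : ∀ i, s(some i, p i) ∈ T := fun i => by
    have := hp1 i
    rw [hF, SimpleGraph.fromEdgeSet_adj] at this
    exact this.1
  refine ⟨p, hac, fun i => hsub (hpT i), ?_⟩
  refine Finset.eq_of_subset_of_card_le ?_ ?_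
  · intro e he
    obtain ⟨i, _, rfl⟩ := Finset.mem_image.1 he
    exact hpT i
  · rw [hac.card_edges]
    have := (SimpleGraph.isTree_iff_connected_and_card.1 htree).2
    rw [not_isDiag_of_aug hsub] at this
    simp at this
    omega

/-- Matrix-tree theorem: the tree sum of the augmented graph is a determinant. -/
lemma matrix_tree (G : SimpleGraph V) (g : Sym2 (Option V) → ℝ) :
    ∑ T ∈ STrees (aug G), ∏ e ∈ T, g e =
      (dirLap fun i k => if (aug G).Adj (some i) k then g s(some i, k) else 0).det := by
  rw [dirLap_det]
  have h1 : ∀ p : V → Option V,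
      (∏ i, if (aug G).Adj (some i) (p i) then g s(some i, p i) else 0) * parentDet p =
      if AcyclicParent p ∧ ∀ i, (aug G).Adj (some i) (p i) then ∏ i, g s(some i, p i) else 0 := by
    intro p
    by_cases hp : AcyclicParent p
    · rw [parentDet_of_acyclic hp, mul_one]
      by_cases ha : ∀ i, (aug G).Adj (some i) (p i)
      · rw [if_pos ⟨hp, ha⟩]
        exact Finset.prod_congr rfl fun i _ => if_pos (ha i)
      · rw [if_neg (fun h => ha h.2)]
        push Not at ha
        obtain ⟨i, hi⟩ := ha
        exact Finset.prod_eq_zero (Finset.mem_univ i) (if_neg hi)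
    · rw [parentDet_of_not_acyclic hp, mul_zero, if_neg (fun h => hp h.1)]
  simp_rw [h1]
  rw [← Finset.sum_filter]
  symm
  refine Finset.sum_bij (fun p _ => parentEdges p) ?_ ?_ ?_ ?_
  · intro p hp
    obtain ⟨h1, h2⟩ := (Finset.mem_filter.1 hp).2
    exact h1.mem_STrees h2
  · intro p hp q _ h
    exact (Finset.mem_filter.1 hp).2.1.edges_inj h
  · intro T hT
    obtain ⟨p, h1, h2, h3⟩ := exists_parent hT
    exact ⟨p, Finset.mem_filter.2 ⟨Finset.mem_univ _, h1, h2⟩, h3⟩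
  · intro p hp
    rw [parentEdges, Finset.prod_image fun i _ j _ h =>
      (Finset.mem_filter.1 hp).2.1.edge_injective h]

/-! ### Log-convexity and monotonicity of the tree sums -/

/-- The directed edge weights whose Laplacian minor is the pinned Laplacian. -/
noncomputable def pinW (W : V → V → ℝ) (ε t : V → ℝ) (i : V) : Option V → ℝ
  | some j => W i j * Real.exp (t i + t j)
  | none => ε i * Real.exp (t i)

lemma pinLap_eq_dirLap (W : V → V → ℝ) (ε t : V → ℝ) :
    pinLap W ε t = dirLap (pinW W ε t) := by
  ext i j
  simp only [pinLap, lap, epsHat, dirLap, pinW, Matrix.add_apply, Matrix.sub_apply,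
    Matrix.diagonal_apply, Matrix.of_apply, Fintype.sum_option]
  split_ifs <;> ring

lemma pinW_nonneg {W : V → V → ℝ} (hW : ∀ i j, 0 ≤ W i j) {ε : V → ℝ} (hε : ∀ i, 0 ≤ ε i)
    (t : V → ℝ) (i : V) (k : Option V) : 0 ≤ pinW W ε t i k := by
  cases k with
  | none => exact mul_nonneg (hε i) (Real.exp_pos _).le
  | some j => exact mul_nonneg (hW i j) (Real.exp_pos _).le

/-- Logarithmic convexity of the determinant in `t`: it is a polynomial with nonnegative
coefficients in the weights, which are exponentials of linear functions of `t`. -/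
lemma pinLap_det_log_convex {W : V → V → ℝ} (hW : ∀ i j, 0 ≤ W i j) {ε : V → ℝ}
    (hε : ∀ i, 0 ≤ ε i) (u h : V → ℝ) :
    (pinLap W ε u).det ≤ √(pinLap W ε (u + h)).det * √(pinLap W ε (u - h)).det := by
  simp only [pinLap_eq_dirLap, dirLap_det]
  have hn : ∀ (t : V → ℝ) (p : V → Option V), 0 ≤ (∏ i, pinW W ε t i (p i)) * parentDet p :=
    fun t p => mul_nonneg (Finset.prod_nonneg fun i _ => pinW_nonneg hW hε t i _)
      (parentDet_nonneg p)
  refine le_trans (le_of_eq ?_) (Real.sum_sqrt_mul_sqrt_le Finset.univ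
    (fun p => hn (u + h) p) (fun p => hn (u - h) p))
  refine Finset.sum_congr rfl fun p _ => ?_
  rw [← Real.sqrt_mul (hn _ p), eq_comm, Real.sqrt_eq_iff_mul_self_eq (mul_nonneg (hn _ p) (hn _ p))
    (hn u p)]
  have : (∏ i, pinW W ε (u + h) i (p i)) * (∏ i, pinW W ε (u - h) i (p i)) =
      (∏ i, pinW W ε u i (p i)) * (∏ i, pinW W ε u i (p i)) := by
    simp only [← Finset.prod_mul_distrib]
    refine Finset.prod_congr rfl fun i _ => ?_
    cases p i with
    | none =>
      simp only [pinW, Pi.add_apply, Pi.sub_apply]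
      rw [mul_mul_mul_comm, mul_mul_mul_comm (ε i) _ (ε i), ← Real.exp_add, ← Real.exp_add]
      ring_nf
    | some j =>
      simp only [pinW, Pi.add_apply, Pi.sub_apply]
      rw [mul_mul_mul_comm, mul_mul_mul_comm (W i j) _ (W i j), ← Real.exp_add, ← Real.exp_add]
      ring_nf
  linear_combination (parentDet p ^ 2) * this

/-- Each parent function contributes at most one weight from each row, and `a i ≤ 1` absorbs
the rows that use the edge to the root. -/
lemma pinLap_det_mono {W W' : V → V → ℝ} (hW : ∀ i j, 0 ≤ W i j) {ε : V → ℝ}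
    (hε : ∀ i, 0 ≤ ε i) {a : V → ℝ} (ha0 : ∀ i, 0 ≤ a i) (ha1 : ∀ i, a i ≤ 1)
    (h : ∀ i j, a i * W i j ≤ W' i j) (u : V → ℝ) :
    (∏ i, a i) * (pinLap W ε u).det ≤ (pinLap W' ε u).det := by
  simp only [pinLap_eq_dirLap, dirLap_det]
  rw [Finset.mul_sum]
  refine Finset.sum_le_sum fun p _ => ?_
  rw [← mul_assoc, ← Finset.prod_mul_distrib]
  refine mul_le_mul_of_nonneg_right (Finset.prod_le_prod
    (fun i _ => mul_nonneg (ha0 i) (pinW_nonneg hW hε u i _)) fun i _ => ?_) (parentDet_nonneg p)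
  cases p i with
  | none =>
    exact mul_le_of_le_one_left (mul_nonneg (hε i) (Real.exp_pos _).le) (ha1 i)
  | some j =>
    simp only [pinW]
    rw [← mul_assoc]
    exact mul_le_mul_of_nonneg_right (h i j) (Real.exp_pos _).le

lemma cof_log_convex {W : V → V → ℝ} (hW : IsNet W) (x : V) (u h : V → ℝ) :
    cof W x u ≤ √(cof W x (u + h)) * √(cof W x (u - h)) := by
  have h1 := pinLap_det_log_convex hW.nonneg (singlePin_nonneg x) u h
  simp only [pinLap_single_det] at h1
  rw [Real.sqrt_mul (Real.exp_pos _).le, Real.sqrt_mul (Real.exp_pos _).le, mul_mul_mul_comm,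
    ← Real.sqrt_mul (Real.exp_pos _).le, ← Real.exp_add,
    show (u + h) x + (u - h) x = u x + u x by simp, Real.exp_add,
    Real.sqrt_mul_self (Real.exp_pos _).le] at h1
  exact le_of_mul_le_mul_left h1 (Real.exp_pos _)

lemma cof_mono {W W' : V → V → ℝ} (hW : ∀ i j, 0 ≤ W i j) {a : V → ℝ} (ha0 : ∀ i, 0 ≤ a i)
    (ha1 : ∀ i, a i ≤ 1) (h : ∀ i j, a i * W i j ≤ W' i j) (x : V) (u : V → ℝ) :
    (∏ i, a i) * cof W x u ≤ cof W' x u := by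
  have h1 := pinLap_det_mono hW (singlePin_nonneg x) ha0 ha1 h u
  simp only [pinLap_single_det] at h1
  rw [mul_left_comm] at h1
  exact le_of_mul_le_mul_left h1 (Real.exp_pos _)

lemma lap_shift (W : V → V → ℝ) (u : V → ℝ) (c : ℝ) :
    lap W (fun i => u i + c) = Real.exp (2 * c) • lap W u := by
  ext i j
  have : ∀ a b : ℝ, Real.exp (a + c + (b + c)) = Real.exp (2 * c) * Real.exp (a + b) := by
    intro a b; rw [← Real.exp_add]; congr 1; ring
  simp only [lap, Matrix.sub_apply, Matrix.diagonal_apply, Matrix.of_apply, Matrix.smul_apply,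
    smul_eq_mul, this, mul_sub, mul_ite, mul_zero, Finset.mul_sum]
  congr 1
  · split_ifs
    · exact Finset.sum_congr rfl fun k _ => by ring
    · rfl
  · ring

lemma cof_shift (W : V → V → ℝ) (x : V) (u : V → ℝ) (c : ℝ) :
    cof W x (fun i => u i + c) = Real.exp (2 * c) ^ (Fintype.card V - 1) * cof W x u := by
  unfold cof
  rw [lap_shift, Matrix.adjugate_smul]; rfl

lemma continuous_lap (W : V → V → ℝ) : Continuous (lap W) := by
  unfold lap
  refine Continuous.sub ?_ ?_
  · exact Continuous.matrix_diagonal (by fun_prop)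
  · exact continuous_matrix fun i j => by simp only [Matrix.of_apply]; fun_prop

lemma continuous_pinLap (W : V → V → ℝ) (ε : V → ℝ) : Continuous (pinLap W ε) := by
  unfold pinLap epsHat
  exact (continuous_lap W).add (Continuous.matrix_diagonal (by fun_prop))

lemma continuous_cof (W : V → V → ℝ) (x : V) : Continuous (cof W x) :=
  (continuous_lap W).matrix_adjugate.matrix_elem x x

/-! ### Gaussian integrals -/

open scoped MatrixOrder ComplexOrder in
/-- A factorisation `M = Bᵀ B`, which turns the Gaussian with precision matrix `M` into a
product of standard Gaussians under the linear change of variables `B`. -/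
lemma posDef_factor {M : Matrix V V ℝ} (hM : M.PosDef) :
    ∃ B : Matrix V V ℝ, M = B.transpose * B ∧ |B.det| = √M.det := by
  obtain ⟨B, hB⟩ := CStarAlgebra.nonneg_iff_eq_star_mul_self.mp hM.posSemidef.nonneg
  have hB' : M = B.transpose * B := by
    rw [hB, Matrix.star_eq_conjTranspose, Matrix.conjTranspose_eq_transpose_of_trivial]
  refine ⟨B, hB', ?_⟩
  rw [hB', Matrix.det_mul, Matrix.det_transpose, Real.sqrt_mul_self_eq_abs]

lemma gaussian_quad {M B : Matrix V V ℝ} (hB : M = B.transpose * B) (s : V → ℝ) :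
    Real.exp (-(1 / 2) * (s ⬝ᵥ M.mulVec s)) =
      ∏ i, Real.exp (-(1 / 2) * (Matrix.toLin' B s i) ^ 2) := by
  rw [← Real.exp_sum, ← Finset.mul_sum, hB, ← Matrix.mulVec_mulVec, Matrix.dotProduct_mulVec,
    Matrix.vecMul_transpose, Matrix.toLin'_apply, dotProduct]
  congr 2
  exact Finset.sum_congr rfl fun i _ => by ring

lemma gaussian_integrable {M : Matrix V V ℝ} (hM : M.PosDef) :
    Integrable fun s : V → ℝ => Real.exp (-(1 / 2) * (s ⬝ᵥ M.mulVec s)) := by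
  obtain ⟨B, hB, hd⟩ := posDef_factor hM
  have hd0 : B.det ≠ 0 := by
    rw [← abs_pos, hd]; exact Real.sqrt_pos.2 hM.det_pos
  simp only [gaussian_quad hB]
  have h1 : Integrable (fun v : V → ℝ => ∏ i, Real.exp (-(1 / 2) * (v i) ^ 2)) :=
    Integrable.fintype_prod (f := fun _ x => Real.exp (-(1 / 2) * x ^ 2))
      fun _ => integrable_exp_neg_mul_sq (by norm_num)
  have h2 := Real.map_matrix_volume_pi_eq_smul_volume_pi hd0
  have h3 : Integrable (fun v : V → ℝ => ∏ i, Real.exp (-(1 / 2) * (v i) ^ 2))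
      (Measure.map (Matrix.toLin' B) volume) := by
    rw [h2]; exact h1.smul_measure ENNReal.ofReal_ne_top
  exact h3.comp_measurable (LinearMap.continuous_of_finiteDimensional _).measurable

lemma gaussian_integral {M : Matrix V V ℝ} (hM : M.PosDef) :
    ∫ s : V → ℝ, Real.exp (-(1 / 2) * (s ⬝ᵥ M.mulVec s)) =
      √(2 * π) ^ Fintype.card V / √M.det := by
  obtain ⟨B, hB, hd⟩ := posDef_factor hM
  have hd0 : B.det ≠ 0 := by
    rw [← abs_pos, hd]; exact Real.sqrt_pos.2 hM.det_pos
  simp only [gaussian_quad hB]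
  have h2 := Real.map_matrix_volume_pi_eq_smul_volume_pi hd0
  have h3 := integral_map (μ := (volume : Measure (V → ℝ))) (φ := Matrix.toLin' B)
    (LinearMap.continuous_of_finiteDimensional _).measurable.aemeasurable
    (f := fun v : V → ℝ => ∏ i, Real.exp (-(1 / 2) * (v i) ^ 2))
    (Continuous.aestronglyMeasurable (by fun_prop))
  rw [← h3, h2, integral_smul_measure, ENNReal.toReal_ofReal (abs_nonneg _),
    integral_fintype_prod_volume_eq_pow (fun x : ℝ => Real.exp (-(1 / 2) * x ^ 2)),
    integral_gaussian, abs_inv, hd, smul_eq_mul, ← div_eq_inv_mul,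
    show π / (1 / 2) = 2 * π by ring]

/-! ### The marginal of the field `t` -/

/-- The edge weights `β` of `G`, extended by zero to pairs of non-adjacent vertices. -/
noncomputable def netW (G : SimpleGraph V) (β : V → V → ℝ) : V → V → ℝ :=
  fun i j => if G.Adj i j then β i j else 0

/-- The energy of the field `u`: the sum over unordered edges of `W i j * (cosh (u i - u j) - 1)`,
written as half the sum over ordered pairs. -/
noncomputable def energy (W : V → V → ℝ) (u : V → ℝ) : ℝ :=
  (1 / 2) * ∑ i, ∑ j, W i j * (Real.cosh (u i - u j) - 1)

lemma Amat_eq (G : SimpleGraph V) {β : V → V → ℝ} (hβ : ∀ i j, β i j = β j i) (t : V → ℝ) :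
    Amat G β t = lap (netW G β) t := by
  ext i j
  simp only [Amat, lap, netW, Matrix.of_apply, Matrix.sub_apply, Matrix.diagonal_apply]
  by_cases h : i = j
  · subst h
    simp only [if_true, SimpleGraph.irrefl, if_false, zero_mul, sub_zero, Finset.sum_filter]
    refine Finset.sum_congr rfl fun k _ => ?_
    rw [SimpleGraph.adj_comm, hβ k i, add_comm (t k)]
    split_ifs <;> simp
  · simp only [if_neg h, zero_sub]
    split_ifs <;> simp

lemma sum_edges {α : Type*} [Fintype α] [DecidableEq α] (G : SimpleGraph α) (f : α → α → ℝ) :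
    ∑ e ∈ Finset.univ.filter (fun e : Sym2 α => e ∈ G.edgeSet), esym f e =
      (1 / 2) * ∑ a, ∑ b, if G.Adj a b then f a b else 0 := by
  have h1 : ∑ a, ∑ b, (if G.Adj a b then f a b else 0) =
      ∑ p : α × α, if G.Adj p.1 p.2 then esym f s(p.1, p.2) else 0 := by
    have h2 : ∑ a, ∑ b, (if G.Adj a b then f a b else 0) =
        ∑ a, ∑ b, (if G.Adj a b then f b a else 0) := by
      rw [Finset.sum_comm]
      simp only [SimpleGraph.adj_comm]
    rw [Fintype.sum_prod_type]
    have h3 : ∑ a, ∑ b, (if G.Adj a b then esym f s(a, b) else 0) =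
        (∑ a, ∑ b, (if G.Adj a b then f a b else 0) +
          ∑ a, ∑ b, (if G.Adj a b then f b a else 0)) / 2 := by
      rw [← Finset.sum_add_distrib, Finset.sum_div]
      refine Finset.sum_congr rfl fun a _ => ?_
      rw [← Finset.sum_add_distrib, Finset.sum_div]
      refine Finset.sum_congr rfl fun b _ => ?_
      split_ifs <;> simp [esym]
    simp only [h3, ← h2]
    ring
  rw [h1, ← Finset.sum_filter, ← Finset.sum_fiberwise_of_maps_to
    (s := Finset.univ.filter fun p : α × α => G.Adj p.1 p.2)
    (t := Finset.univ.filter (fun e : Sym2 α => e ∈ G.edgeSet)) (g := fun p => s(p.1, p.2))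
    (by intro p hp; simpa using hp), Finset.mul_sum]
  refine Finset.sum_congr rfl fun e he => ?_
  induction e using Sym2.ind with
  | _ a b =>
    simp only [Finset.mem_filter, Finset.mem_univ, true_and, SimpleGraph.mem_edgeSet] at he
    have : (Finset.univ.filter fun p : α × α => G.Adj p.1 p.2).filter
        (fun p => s(p.1, p.2) = s(a, b)) = {(a, b), (b, a)} := by
      ext ⟨c, d⟩
      simp only [Finset.mem_filter, Finset.mem_univ, true_and, Sym2.eq_iff, Finset.mem_insert,
        Finset.mem_singleton, Prod.mk.injEq]
      constructor
      · exact fun h => h.2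
      · rintro (⟨rfl, rfl⟩ | ⟨rfl, rfl⟩)
        · exact ⟨he, by simp⟩
        · exact ⟨he.symm, by simp⟩
    rw [this, Finset.sum_pair (by intro h; exact he.ne (Prod.mk.inj h).1), Sym2.eq_swap (a := b)]
    ring

lemma aug_adj_some_some (G : SimpleGraph V) (i j : V) :
    (aug G).Adj (some i) (some j) ↔ G.Adj i j := by
  simp only [aug, SimpleGraph.fromRel_adj, ne_eq, Option.some.injEq]
  constructor
  · rintro ⟨_, h | h⟩
    · exact h
    · exact h.symm
  · exact fun h => ⟨h.ne, Or.inl h⟩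

lemma aug_adj_some_none (G : SimpleGraph V) (i : V) : (aug G).Adj (some i) none := by
  simp [aug]

lemma aug_adj_none_some (G : SimpleGraph V) (i : V) : (aug G).Adj none (some i) := by
  simp [aug]

lemma bres_symm {β : V → V → ℝ} (hβ : ∀ i j, β i j = β j i) (ε : V → ℝ) (a b : Option V) :
    bres β ε a b = bres β ε b a := by
  cases a <;> cases b <;> simp [bres, hβ]

lemma Bfun_symm (t s : V → ℝ) (a b : Option V) : Bfun t s a b = Bfun t s b a := by
  unfold Bfun
  rw [← Real.cosh_neg, neg_sub, add_comm (extV t a)]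
  ring

lemma gibbs_eq {β : V → V → ℝ} (hβ : ∀ i j, β i j = β j i) (ε t s : V → ℝ)
    (e : Sym2 (Option V)) : gibbs β ε t s e =
      Real.exp (-esym (fun a b => bres β ε a b * (Bfun t s a b - 1)) e) := by
  induction e using Sym2.ind with
  | _ a b =>
    simp only [gibbs, esym, Sym2.lift_mk, bres_symm hβ ε b a, Bfun_symm t s b a]
    ring_nf

/-- The Gibbs factor: the energy of `t`, the pinning of `t`, and a Gaussian weight in `s` with
precision matrix `A(t) + ε̂(t)`. -/
lemma gibbs_prod (G : SimpleGraph V) {β : V → V → ℝ} (hβ : ∀ i j, β i j = β j i)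
    (hW : IsNet (netW G β)) (ε t s : V → ℝ) :
    ∏ e ∈ Finset.univ.filter (fun e : Sym2 (Option V) => e ∈ (aug G).edgeSet), gibbs β ε t s e =
      Real.exp (-energy (netW G β) t) * Real.exp (-∑ i, ε i * (Real.cosh (t i) - 1)) *
        Real.exp (-(1 / 2) * (s ⬝ᵥ (pinLap (netW G β) ε t).mulVec s)) := by
  simp only [gibbs_eq hβ]
  rw [← Real.exp_sum, ← Real.exp_add, ← Real.exp_add, Finset.sum_neg_distrib, sum_edges]
  congr 1
  have h1 : ∀ i j, (if (aug G).Adj (some i) (some j) then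
      bres β ε (some i) (some j) * (Bfun t s (some i) (some j) - 1) else 0) =
      netW G β i j * (Real.cosh (t i - t j) - 1) +
        (1 / 2) * (netW G β i j * Real.exp (t i + t j) * (s i - s j) ^ 2) := by
    intro i j
    rw [aug_adj_some_some]
    simp only [netW, bres, Bfun, extV, Option.elim]
    split_ifs <;> ring
  have h2 : ∀ i, (if (aug G).Adj (some i) none then
      bres β ε (some i) none * (Bfun t s (some i) none - 1) else 0) =
      ε i * (Real.cosh (t i) - 1) + (1 / 2) * (ε i * Real.exp (t i) * s i ^ 2) := by
    intro i
    rw [if_pos (aug_adj_some_none G i)]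
    simp only [bres, Bfun, extV, Option.elim, sub_zero, add_zero]
    ring
  have h3 : ∀ i, (if (aug G).Adj none (some i) then
      bres β ε none (some i) * (Bfun t s none (some i) - 1) else 0) =
      ε i * (Real.cosh (t i) - 1) + (1 / 2) * (ε i * Real.exp (t i) * s i ^ 2) := by
    intro i
    rw [← h2 i, bres_symm hβ, Bfun_symm]
    simp [SimpleGraph.adj_comm]
  simp only [Fintype.sum_option, h1, h2, h3, SimpleGraph.irrefl, if_false]
  rw [pinLap_quad hW]
  simp only [energy, Finset.sum_add_distrib, ← Finset.mul_sum]
  ring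

lemma tree_sum (G : SimpleGraph V) {β : V → V → ℝ} (hβ : ∀ i j, β i j = β j i) (ε t : V → ℝ) :
    ∑ T ∈ STrees (aug G), ∏ e ∈ T, treeW β ε t e = (pinLap (netW G β) ε t).det := by
  rw [matrix_tree, pinLap_eq_dirLap]
  congr 2
  funext i k
  cases k with
  | none => simp [aug_adj_some_none, pinW, treeW, esym, bres, extV]
  | some j =>
    simp only [aug_adj_some_some, pinW, treeW, esym, bres, extV, netW, Sym2.lift_mk, Option.elim]
    rw [hβ j i, add_comm (t j)]
    split_ifs <;> ring

/-- The marginal density in `t` of the sigma model, up to the factor `(2π)^(-|V|/2)`. The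
square root of the determinant is what remains of the tree sum after the Gaussian integral
over `s`. -/
noncomputable def margT (W : V → V → ℝ) (ε t : V → ℝ) : ℝ :=
  Real.exp (-∑ i, t i) * Real.exp (-energy W t) * Real.exp (-∑ i, ε i * (Real.cosh (t i) - 1)) *
    √(pinLap W ε t).det

/-- The density summed over spanning trees, the tree sum being a determinant. -/
lemma dens_sum (G : SimpleGraph V) {β : V → V → ℝ} (hβ : ∀ i j, β i j = β j i)
    (hW : IsNet (netW G β)) (ε t s : V → ℝ) :
    ∑ T ∈ STrees (aug G), dens G β ε t s T =
      ((√(2 * π) ^ Fintype.card V)⁻¹) ^ 2 * (Real.exp (-∑ i, t i) * Real.exp (-energy (netW G β) t) *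
        Real.exp (-∑ i, ε i * (Real.cosh (t i) - 1)) * (pinLap (netW G β) ε t).det) *
        Real.exp (-(1 / 2) * (s ⬝ᵥ (pinLap (netW G β) ε t).mulVec s)) := by
  simp only [dens, ← Finset.mul_sum, tree_sum G hβ, gibbs_prod G hβ hW]
  have : ∏ j, Real.exp (-t j) / (2 * π) =
      Real.exp (-∑ i, t i) * ((√(2 * π) ^ Fintype.card V)⁻¹) ^ 2 := by
    rw [Finset.prod_div_distrib, ← Real.exp_sum, Finset.sum_neg_distrib, Finset.prod_const,
      Finset.card_univ, inv_pow, ← pow_mul, mul_comm (Fintype.card V) 2, pow_mul,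
      Real.sq_sqrt (by positivity), div_eq_mul_inv]
  rw [this]
  ring

lemma dens_nonneg (G : SimpleGraph V) {β : V → V → ℝ} (hβ : ∀ i j, β i j = β j i)
    (hW : IsNet (netW G β)) {ε : V → ℝ} (hε : ∀ i, 0 ≤ ε i) (t s : V → ℝ)
    {T : Finset (Sym2 (Option V))} (hT : T ∈ STrees (aug G)) : 0 ≤ dens G β ε t s T := by
  have hTs : (T : Set (Sym2 (Option V))) ⊆ (aug G).edgeSet := (Finset.mem_filter.1 hT).2.1
  refine mul_nonneg (mul_nonneg (Finset.prod_nonneg fun j _ => by positivity)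
    (Finset.prod_nonneg fun e _ => ?_)) (Finset.prod_nonneg fun e he => ?_)
  · rw [gibbs_eq hβ]; positivity
  · have he' := hTs he
    clear he
    induction e using Sym2.ind with
    | _ a b =>
      rw [SimpleGraph.mem_edgeSet] at he'
      have key : ∀ a b, (aug G).Adj a b → 0 ≤ bres β ε a b := by
        intro a b hab
        cases a with
        | none => cases b with
          | none => exact le_rfl
          | some j => exact hε j
        | some i => cases b with
          | none => exact hε i
          | some j =>
            have h := hW.nonneg i j
            rwa [netW, if_pos ((aug_adj_some_some G i j).1 hab)] at h
      have h1 := key a b he'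
      have h2 := key b a he'.symm
      simp only [treeW, esym, Sym2.lift_mk]
      positivity

lemma continuous_extV (a : Option V) : Continuous fun t : V → ℝ => extV t a := by
  cases a <;> simp only [extV, Option.elim] <;> fun_prop

lemma continuous_dens (G : SimpleGraph V) (β : V → V → ℝ) (ε : V → ℝ)
    (T : Finset (Sym2 (Option V))) :
    Continuous fun p : (V → ℝ) × (V → ℝ) => dens G β ε p.1 p.2 T := by
  have h1 : ∀ a, Continuous fun p : (V → ℝ) × (V → ℝ) => extV p.1 a :=
    fun a => (continuous_extV a).comp continuous_fst
  have h2 : ∀ a, Continuous fun p : (V → ℝ) × (V → ℝ) => extV p.2 a :=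
    fun a => (continuous_extV a).comp continuous_snd
  unfold dens
  refine Continuous.mul (Continuous.mul (by fun_prop) ?_) ?_
  · refine continuous_finsetProd _ fun e _ => ?_
    induction e using Sym2.ind with
    | _ a b => simp only [gibbs, esym, Sym2.lift_mk, Bfun]; fun_prop
  · refine continuous_finsetProd _ fun e _ => ?_
    induction e using Sym2.ind with
    | _ a b => simp only [treeW, esym, Sym2.lift_mk]; fun_prop

/-- Integrating out the spanning trees (matrix-tree theorem) and the Gaussian field `s`. -/
lemma expect_eq (G : SimpleGraph V) {β : V → V → ℝ} (hβ : ∀ i j, β i j = β j i)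
    (hW : IsNet (netW G β)) {ε : V → ℝ} (hε : ∀ i, 0 ≤ ε i) (hε' : ∃ i, 0 < ε i)
    {g : (V → ℝ) → ℝ} (hg : Continuous g) (hg0 : ∀ t, 0 ≤ g t)
    (hI : Integrable fun t => margT (netW G β) ε t * g t) :
    expect G β ε (fun t _ _ => g t) =
      (√(2 * π) ^ Fintype.card V)⁻¹ * ∫ t, margT (netW G β) ε t * g t := by
  set W := netW G β with hWdef
  set c : ℝ := √(2 * π) ^ Fintype.card V with hc
  have hc0 : 0 < c := by positivity
  have hpd := fun t => pinLap_posDef hW hε hε' t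
  set A : (V → ℝ) → ℝ := fun t => Real.exp (-∑ i, t i) * Real.exp (-energy W t) *
        Real.exp (-∑ i, ε i * (Real.cosh (t i) - 1)) * (pinLap W ε t).det with hA
  have htot : ∀ t s : V → ℝ,
      ∑ T ∈ STrees (aug G), dens G β ε t s T * g t = (c⁻¹ ^ 2 * A t * g t) *
        Real.exp (-(1 / 2) * (s ⬝ᵥ (pinLap W ε t).mulVec s)) := by
    intro t s
    rw [← Finset.sum_mul, dens_sum G hβ hW]
    ring
  have hs : ∀ t, ∫ s : V → ℝ, (c⁻¹ ^ 2 * A t * g t) *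
        Real.exp (-(1 / 2) * (s ⬝ᵥ (pinLap W ε t).mulVec s)) = c⁻¹ * (margT W ε t * g t) := by
    intro t
    have hd := (hpd t).det_pos
    rw [integral_const_mul, gaussian_integral (hpd t), ← hc]
    simp only [hA, margT]
    have h1 : (pinLap W ε t).det = √(pinLap W ε t).det * √(pinLap W ε t).det :=
      (Real.mul_self_sqrt hd.le).symm
    nth_rewrite 1 [h1]
    have := Real.sqrt_pos.2 hd
    field_simp
  have hcont : Continuous fun p : (V → ℝ) × (V → ℝ) =>
      ∑ T ∈ STrees (aug G), dens G β ε p.1 p.2 T * g p.1 :=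
    continuous_finsetSum _ fun T _ => (continuous_dens G β ε T).mul (hg.comp continuous_fst)
  have hA0 : ∀ t, 0 ≤ A t := fun t => by
    have := (hpd t).det_pos
    simp only [hA]; positivity
  have hint : Integrable fun p : (V → ℝ) × (V → ℝ) =>
      ∑ T ∈ STrees (aug G), dens G β ε p.1 p.2 T * g p.1 := by
    refine (integrable_prod_iff hcont.aestronglyMeasurable).2 ⟨?_, ?_⟩
    · refine Eventually.of_forall fun t => ?_
      simp only [htot]
      exact (gaussian_integrable (hpd t)).const_mul _
    · refine (hI.const_mul c⁻¹).congr (Eventually.of_forall fun t => ?_)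
      beta_reduce
      rw [← hs t]
      refine integral_congr_ae (Eventually.of_forall fun s => ?_)
      simp only [htot]
      refine (Real.norm_of_nonneg ?_).symm
      have := hA0 t
      have := hg0 t
      positivity
  have hint' : ∀ T ∈ STrees (aug G), Integrable fun p : (V → ℝ) × (V → ℝ) =>
      dens G β ε p.1 p.2 T * g p.1 := by
    intro T hT
    refine hint.mono' ((continuous_dens G β ε T).mul (hg.comp continuous_fst)).aestronglyMeasurable
      (Eventually.of_forall fun p => ?_)
    rw [Real.norm_of_nonneg (mul_nonneg (dens_nonneg G hβ hW hε _ _ hT) (hg0 _))]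
    exact Finset.single_le_sum (f := fun T => dens G β ε p.1 p.2 T * g p.1)
      (fun T hT => mul_nonneg (dens_nonneg G hβ hW hε _ _ hT) (hg0 _)) hT
  unfold expect
  rw [← integral_finsetSum _ hint', Measure.volume_eq_prod, integral_prod _ hint,
    ← integral_const_mul]
  refine integral_congr_ae (Eventually.of_forall fun t => ?_)
  simp only [htot]
  exact hs t

/-! ### Coercivity of the energy and entrywise bounds -/

lemma sq_div_two_le_cosh_sub_one (a : ℝ) : a ^ 2 / 2 ≤ Real.cosh a - 1 := by
  have h1 : Real.cosh a = 1 + 2 * Real.sinh (a / 2) ^ 2 := by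
    have := Real.cosh_two_mul (a / 2)
    rw [show 2 * (a / 2) = a by ring, Real.cosh_sq] at this
    linarith
  have h2 : (a / 2) ^ 2 ≤ Real.sinh (a / 2) ^ 2 := by
    rw [sq_le_sq]
    rcases le_total 0 (a / 2) with h | h
    · rw [abs_of_nonneg h, abs_of_nonneg (Real.sinh_nonneg_iff.2 h)]
      exact Real.self_le_sinh_iff.2 h
    · rw [abs_of_nonpos h, abs_of_nonpos (Real.sinh_nonpos_iff.2 h)]
      exact neg_le_neg (Real.sinh_le_self_iff.2 h)
  rw [h1]; nlinarith

lemma energy_nonneg {W : V → V → ℝ} (hW : ∀ i j, 0 ≤ W i j) (u : V → ℝ) : 0 ≤ energy W u := by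
  unfold energy
  refine mul_nonneg (by norm_num) (Finset.sum_nonneg fun i _ => Finset.sum_nonneg fun j _ =>
    mul_nonneg (hW i j) ?_)
  have := Real.one_le_cosh (u i - u j)
  linarith

lemma energy_term_le {W : V → V → ℝ} (hW : ∀ i j, 0 ≤ W i j) (u : V → ℝ) (i j : V) :
    (1 / 2) * (W i j * (Real.cosh (u i - u j) - 1)) ≤ energy W u := by
  have h0 : ∀ i j, 0 ≤ W i j * (Real.cosh (u i - u j) - 1) := fun i j => by
    have := Real.one_le_cosh (u i - u j)
    exact mul_nonneg (hW i j) (by linarith)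
  refine mul_le_mul_of_nonneg_left ?_ (by norm_num)
  exact (Finset.single_le_sum (f := fun j => W i j * (Real.cosh (u i - u j) - 1))
      (fun j _ => h0 i j) (Finset.mem_univ j)).trans
    (Finset.single_le_sum (f := fun i => ∑ j, W i j * (Real.cosh (u i - u j) - 1))
      (fun i _ => Finset.sum_nonneg fun j _ => h0 i j) (Finset.mem_univ i))

/-- On a connected graph the energy controls every difference with an arbitrarily large slope,
since `cosh` grows faster than linearly. -/
lemma energy_coercive_pt {W : V → V → ℝ} (hW : IsNet W) (y i : V) :
    ∀ K : ℝ, 0 ≤ K → ∃ C : ℝ, ∀ u : V → ℝ, K * |u i - u y| ≤ energy W u + C := by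
  induction hW.conn y i with
  | refl =>
    intro K _
    exact ⟨0, fun u => by simpa using energy_nonneg hW.nonneg u⟩
  | @tail j k _ hjk ih =>
    intro K hK
    obtain ⟨C, hC⟩ := ih (2 * K) (by positivity)
    refine ⟨C / 2 + 4 * K ^ 2 / W j k, fun u => ?_⟩
    have h1 := hC u
    have h2 := energy_term_le hW.nonneg u j k
    have h3 := sq_div_two_le_cosh_sub_one (u j - u k)
    have h4 : |u k - u y| ≤ |u j - u k| + |u j - u y| := by
      rw [abs_sub_comm (u j) (u k)]; exact abs_sub_le _ _ _
    have h5 : 2 * K * |u j - u k| ≤ W j k * |u j - u k| ^ 2 / 8 + 8 * K ^ 2 / W j k := by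
      rw [← sub_nonneg]
      have : W j k * |u j - u k| ^ 2 / 8 + 8 * K ^ 2 / W j k - 2 * K * |u j - u k| =
        (W j k * |u j - u k| - 8 * K) ^ 2 / (8 * W j k) := by field_simp; ring
      rw [this]; positivity
    rw [sq_abs] at h5
    have h6 := mul_le_mul_of_nonneg_left h4 hK
    have h7 := mul_le_mul_of_nonneg_left h3 hjk.le
    have h8 : 8 * K ^ 2 / W j k = 2 * (4 * K ^ 2 / W j k) := by ring
    have h9 : 0 ≤ 4 * K ^ 2 / W j k := by positivity
    have h10 := energy_nonneg hW.nonneg u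
    have h11 : 0 ≤ W j k * (u j - u k) ^ 2 := by positivity
    nlinarith

lemma energy_coercive {W : V → V → ℝ} (hW : IsNet W) (y : V) (K : ℝ) (hK : 0 ≤ K) :
    ∃ C : ℝ, ∀ u : V → ℝ, K * ∑ i, |u i - u y| ≤ energy W u + C := by
  have hN : (0 : ℝ) < Fintype.card V := by exact_mod_cast Fintype.card_pos_iff.2 ⟨y⟩
  choose C hC using fun i => energy_coercive_pt hW y i (Fintype.card V * K) (by positivity)
  refine ⟨(∑ i, C i) / Fintype.card V, fun u => ?_⟩
  have h : ∑ i, Fintype.card V * K * |u i - u y| ≤ ∑ i, (energy W u + C i) :=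
    Finset.sum_le_sum fun i _ => hC i u
  rw [← Finset.mul_sum, Finset.sum_add_distrib, Finset.sum_const, Finset.card_univ,
    nsmul_eq_mul] at h
  have h2 : energy W u + (∑ i, C i) / Fintype.card V =
      (Fintype.card V * energy W u + ∑ i, C i) / Fintype.card V := by field_simp
  rw [h2, le_div_iff₀ hN]
  linarith

lemma integrable_exp_neg_abs {c : ℝ} (hc : 0 < c) :
    Integrable fun x : ℝ => Real.exp (-(c * |x|)) := by
  rw [← integrableOn_univ, ← Set.Iic_union_Ioi (a := (0 : ℝ))]
  refine IntegrableOn.union ?_ ?_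
  · refine (integrableOn_exp_mul_Iic hc 0).congr_fun (fun x hx => ?_) measurableSet_Iic
    simp only [abs_of_nonpos (Set.mem_Iic.1 hx), mul_neg, neg_neg]
  · refine (integrableOn_exp_mul_Ioi (neg_neg_iff_pos.2 hc) 0).congr_fun (fun x hx => ?_)
      measurableSet_Ioi
    simp only [abs_of_pos (Set.mem_Ioi.1 hx), neg_mul]

lemma integrable_exp_neg_sum_abs {c : ℝ} (hc : 0 < c) :
    Integrable fun u : V → ℝ => Real.exp (-(c * ∑ i, |u i|)) := by
  have : ∀ u : V → ℝ, Real.exp (-(c * ∑ i, |u i|)) = ∏ i, Real.exp (-(c * |u i|)) := by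
    intro u; rw [← Real.exp_sum, Finset.mul_sum, Finset.sum_neg_distrib]
  simp only [this]
  exact Integrable.fintype_prod (f := fun _ x => Real.exp (-(c * |x|)))
    fun _ => integrable_exp_neg_abs hc

lemma det_le_of_entry_le {A : Matrix V V ℝ} {x : ℝ} (h : ∀ i j, |A i j| ≤ x) :
    |A.det| ≤ (Fintype.card V).factorial * x ^ Fintype.card V := by
  have := Matrix.det_le (abv := AbsoluteValue.abs) h
  rwa [nsmul_eq_mul] at this

lemma adjugate_le_of_entry_le {A : Matrix V V ℝ} {x : ℝ} (hx : 1 ≤ x) (h : ∀ i j, |A i j| ≤ x)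
    (i j : V) : |A.adjugate i j| ≤ (Fintype.card V).factorial * x ^ Fintype.card V := by
  rw [Matrix.adjugate_apply]
  refine det_le_of_entry_le fun k l => ?_
  rw [Matrix.updateRow_apply]
  split_ifs
  · rw [Pi.single_apply]; split_ifs <;> simp <;> linarith
  · exact h k l

lemma pinLap_entry_le {W : V → V → ℝ} (hW : ∀ i j, 0 ≤ W i j) {p : V → ℝ} (hp : ∀ i, 0 ≤ p i)
    {κ : ℝ} (hκ : 0 ≤ κ) (v : V → ℝ) (i j : V) :
    |pinLap W (fun i => κ * p i) v i j| ≤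
      (2 * (∑ i, ∑ j, W i j) + ∑ i, p i + 1) * (1 + κ) * Real.exp (2 * ∑ i, |v i|) := by
  set A := ∑ i, |v i| with hA
  have hA0 : 0 ≤ A := Finset.sum_nonneg fun i _ => abs_nonneg _
  have hvi : ∀ i, v i ≤ A := fun i => (le_abs_self _).trans
    (Finset.single_le_sum (f := fun i => |v i|) (fun i _ => abs_nonneg _) (Finset.mem_univ i))
  set S := ∑ i, ∑ j, W i j with hS
  have hrow : ∀ i, ∑ j, W i j ≤ S := fun i =>
    Finset.single_le_sum (f := fun i => ∑ j, W i j)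
      (fun i _ => Finset.sum_nonneg fun j _ => hW i j) (Finset.mem_univ i)
  have hWS : ∀ i j, W i j ≤ S := fun i j => le_trans
    (Finset.single_le_sum (f := fun j => W i j) (fun j _ => hW i j) (Finset.mem_univ j)) (hrow i)
  have hS0 : 0 ≤ S := le_trans (hW i i) (hWS i i)
  have hpi : ∀ i, p i ≤ ∑ i, p i := fun i =>
    Finset.single_le_sum (f := p) (fun i _ => hp i) (Finset.mem_univ i)
  have hP0 : 0 ≤ ∑ i, p i := (hp i).trans (hpi i)
  have hE1 : ∀ i j, Real.exp (v i + v j) ≤ Real.exp (2 * A) := fun i j =>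
    Real.exp_le_exp.2 (by linarith [hvi i, hvi j])
  have hE2 : ∀ i, Real.exp (v i) ≤ Real.exp (2 * A) := fun i =>
    Real.exp_le_exp.2 (by linarith [hvi i])
  set X := Real.exp (2 * A) with hX
  have hX0 : 0 < X := Real.exp_pos _
  have hd1 : ∀ i, |∑ k, W i k * Real.exp (v i + v k)| ≤ S * X := by
    intro i
    rw [abs_of_nonneg (Finset.sum_nonneg fun k _ => mul_nonneg (hW i k) (Real.exp_pos _).le)]
    refine le_trans (Finset.sum_le_sum fun k _ =>
      mul_le_mul_of_nonneg_left (hE1 i k) (hW i k)) ?_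
    rw [← Finset.sum_mul]
    exact mul_le_mul_of_nonneg_right (hrow i) hX0.le
  have hd2 : |W i j * Real.exp (v i + v j)| ≤ S * X := by
    rw [abs_of_nonneg (mul_nonneg (hW i j) (Real.exp_pos _).le)]
    exact mul_le_mul (hWS i j) (hE1 i j) (Real.exp_pos _).le hS0
  have hd3 : |κ * p i * Real.exp (v i)| ≤ κ * (∑ i, p i) * X := by
    have h0 : 0 ≤ κ * p i := mul_nonneg hκ (hp i)
    rw [abs_of_nonneg (mul_nonneg h0 (Real.exp_pos _).le)]
    exact mul_le_mul (mul_le_mul_of_nonneg_left (hpi i) hκ) (hE2 i) (Real.exp_pos _).le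
      (mul_nonneg hκ hP0)
  have hfin : S * X + S * X + κ * (∑ i, p i) * X ≤ (2 * S + ∑ i, p i + 1) * (1 + κ) * X := by
    have h1 : 0 ≤ S * κ * X := by positivity
    have h2 : 0 ≤ (∑ i, p i) * X := by positivity
    have h3 : 0 ≤ (1 + κ) * X := by positivity
    nlinarith
  refine le_trans ?_ hfin
  simp only [pinLap, lap, epsHat, Matrix.add_apply, Matrix.sub_apply, Matrix.diagonal_apply,
    Matrix.of_apply]
  split_ifs
  · refine (abs_add_le _ _).trans (add_le_add ((abs_sub _ _).trans (add_le_add (hd1 i) hd2)) hd3)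
  · rw [zero_sub, add_zero, abs_neg]
    have h0 : 0 ≤ κ * (∑ i, p i) * X := by positivity
    have h1 : 0 ≤ S * X := by positivity
    linarith

/-! ### The shifted density and its domination -/

lemma pinLap_add_const (W : V → V → ℝ) (ε u : V → ℝ) (c : ℝ) :
    pinLap W ε (fun i => u i + c) =
      Real.exp (2 * c) • pinLap W (fun i => Real.exp (-c) * ε i) u := by
  simp only [pinLap, lap_shift, smul_add, epsHat]
  congr 1
  ext i j
  rw [Matrix.smul_apply, Matrix.diagonal_apply, Matrix.diagonal_apply, smul_eq_mul]
  split_ifs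
  · have : Real.exp (2 * c) * Real.exp (-c) = Real.exp c := by rw [← Real.exp_add]; ring_nf
    rw [Real.exp_add]
    linear_combination (-(ε i * Real.exp (u i))) * this
  · simp

lemma pow_mul_exp_le (n : ℕ) {b : ℝ} (hb : 0 < b) {κ : ℝ} (hκ : 0 ≤ κ) :
    (1 + κ) ^ n * Real.exp (-(b * κ)) ≤ n.factorial / b ^ n * Real.exp b := by
  have h := Real.pow_div_factorial_le_exp ((1 + κ) * b) (by positivity) n
  have hn : (0 : ℝ) < n.factorial := by positivity
  rw [div_le_iff₀ hn, mul_pow, show (1 + κ) * b = b + b * κ by ring, Real.exp_add] at h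
  rw [Real.exp_neg, ← div_eq_mul_inv, div_le_iff₀ (Real.exp_pos _), div_mul_eq_mul_div,
    div_mul_eq_mul_div, le_div_iff₀ (by positivity)]
  linarith

/-- Quantitative bound on the pinned determinant at pinning strength `δ`, divided by `δ`. -/
lemma det_div_le {W : V → V → ℝ} (hW : IsNet W) {p : V → ℝ} (hp : ∀ i, 0 ≤ p i) (y : V) :
    ∃ C : ℝ, 0 < C ∧ ∀ (δ : ℝ) (u : V → ℝ), 0 < δ →
      (pinLap W (fun i => δ * p i) u).det / δ ≤
        C * (1 + δ * Real.exp (-u y)) ^ Fintype.card V *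
          Real.exp ((2 * Fintype.card V - 1) * u y +
            (2 * Fintype.card V + 1) * ∑ i, |u i - u y|) := by
  set N := Fintype.card V with hN
  set c0 : ℝ := 2 * (∑ i, ∑ j, W i j) + ∑ i, p i + 1 with hc0
  have hWs : 0 ≤ ∑ i, ∑ j, W i j :=
    Finset.sum_nonneg fun i _ => Finset.sum_nonneg fun j _ => hW.nonneg i j
  have hps : 0 ≤ ∑ i, p i := Finset.sum_nonneg fun i _ => hp i
  have hc1 : 1 ≤ c0 := by linarith
  refine ⟨N.factorial * c0 ^ N * (∑ i, p i + 1), by positivity, fun δ u hδ => ?_⟩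
  set v : V → ℝ := fun i => u i - u y with hv
  set A := ∑ i, |v i| with hA
  have hA0 : 0 ≤ A := Finset.sum_nonneg fun i _ => abs_nonneg _
  have hvi : ∀ i, v i ≤ A := fun i => (le_abs_self _).trans
    (Finset.single_le_sum (f := fun i => |v i|) (fun i _ => abs_nonneg _) (Finset.mem_univ i))
  set κ := δ * Real.exp (-u y) with hκ
  have hκ0 : 0 < κ := by positivity
  have huv : u = fun i => v i + u y := by funext i; simp [hv]
  have hM : pinLap W (fun i => δ * p i) u =
      Real.exp (2 * u y) • pinLap W (fun i => κ * p i) v := by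
    conv_lhs => rw [huv]
    rw [pinLap_add_const]
    congr 2
    funext i; rw [hκ]; ring
  set x := c0 * (1 + κ) * Real.exp (2 * A) with hx
  have hx1 : 1 ≤ x := by
    have h1 : 1 ≤ Real.exp (2 * A) := Real.one_le_exp (by positivity)
    have h2 : 1 ≤ c0 * (1 + κ) := by nlinarith
    nlinarith
  have hadj : ∀ j, |(pinLap W (fun i => κ * p i) v).adjugate y j| ≤ N.factorial * x ^ N :=
    fun j => adjugate_le_of_entry_le hx1 (fun i j => pinLap_entry_le hW.nonneg hp hκ0.le v i j) y j
  have hdet : (pinLap W (fun i => κ * p i) v).det ≤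
      N.factorial * x ^ N * (κ * (∑ i, p i) * Real.exp A) := by
    rw [pinLap_det_eq W _ v y, Finset.mul_sum, Finset.sum_mul, Finset.mul_sum]
    refine Finset.sum_le_sum fun j _ => ?_
    have h0 : 0 ≤ κ * p j := mul_nonneg hκ0.le (hp j)
    exact mul_le_mul ((le_abs_self _).trans (hadj j))
      (mul_le_mul_of_nonneg_left (Real.exp_le_exp.2 (hvi j)) h0)
      (mul_nonneg h0 (Real.exp_pos _).le) (by positivity)
  rw [hM, Matrix.det_smul, ← hN, div_le_iff₀ hδ]
  calc Real.exp (2 * u y) ^ N * (pinLap W (fun i => κ * p i) v).det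
      ≤ Real.exp (2 * u y) ^ N * (N.factorial * x ^ N * (κ * (∑ i, p i) * Real.exp A)) :=
        mul_le_mul_of_nonneg_left hdet (by positivity)
    _ ≤ Real.exp (2 * u y) ^ N * (N.factorial * x ^ N * (κ * (∑ i, p i + 1) * Real.exp A)) := by
        gcongr; linarith
    _ = _ := by
        have h1 : Real.exp ((2 * N - 1) * u y + (2 * N + 1) * A) =
            Real.exp (2 * u y) ^ N * Real.exp (2 * A) ^ N * Real.exp (-u y) * Real.exp A := by
          rw [← Real.exp_nat_mul, ← Real.exp_nat_mul, ← Real.exp_add, ← Real.exp_add,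
            ← Real.exp_add]
          congr 1; ring
        rw [h1, hx, hκ, mul_pow, mul_pow]
        ring

/-- The integrand of `ε * expect` for the Green's function after the shift `t = u - log ε`. -/
noncomputable def shiftDens (W : V → V → ℝ) (p : V → ℝ) (x y : V) (ε : ℝ) (u : V → ℝ) : ℝ :=
  Real.exp (-∑ i, u i) * Real.exp (-energy W u) *
    Real.exp (-∑ i, p i * ((Real.exp (u i) + ε ^ 2 * Real.exp (-u i)) / 2 - ε)) *
    (Real.exp (u x + u y) * (ε * √(pinLap W (fun i => ε ^ 2 * p i) u).det *
      (pinLap W (fun i => ε ^ 2 * p i) u)⁻¹ x y))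

/-- The pointwise limit of `shiftDens` as `ε ↓ 0`. -/
noncomputable def limDens (W : V → V → ℝ) (p : V → ℝ) (x y : V) (u : V → ℝ) : ℝ :=
  Real.exp (-∑ i, u i) * Real.exp (-energy W u) *
    Real.exp (-∑ i, p i * (Real.exp (u i) / 2)) *
    (Real.exp (u x + u y) * √(cof W x u / ∑ i, p i * Real.exp (u i)))

lemma exp_half_le {b : ℝ} (hb : 0 < b) (a : ℝ) :
    Real.exp (a / 2) * Real.exp (-(b * Real.exp a)) ≤
      Real.exp |Real.log b| * Real.exp (-(|a| / 2)) := by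
  rw [← Real.exp_add, ← Real.exp_add, Real.exp_le_exp]
  rcases le_total a 0 with h | h
  · rw [abs_of_nonpos h]
    have := abs_nonneg (Real.log b)
    have : 0 < b * Real.exp a := by positivity
    linarith
  · rw [abs_of_nonneg h]
    have h1 := Real.add_one_le_exp (a + Real.log b)
    rw [Real.exp_add, Real.exp_log hb] at h1
    have := neg_abs_le (Real.log b)
    linarith

lemma shiftDens_nonneg {W : V → V → ℝ} (hW : IsNet W) {p : V → ℝ} (hp : ∀ i, 0 ≤ p i)
    {x y : V} (hy : 0 < p y) {ε : ℝ} (hε : 0 < ε) (u : V → ℝ) : 0 ≤ shiftDens W p x y ε u := by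
  have hε1 : ∀ i, 0 ≤ ε ^ 2 * p i := fun i => mul_nonneg (by positivity) (hp i)
  have hε2 : ∃ i, 0 < ε ^ 2 * p i := ⟨y, by positivity⟩
  have := pinLap_inv_nonneg hW hε1 hε2 u x y
  unfold shiftDens
  positivity

/-- A dominating function uniform in `ε`: the energy, growing faster than any multiple of
`∑ i, |u i - u y|`, together with the pinning at `y`, beats the polynomial and exponential
factors. -/
lemma shiftDens_le {W : V → V → ℝ} (hW : IsNet W) {p : V → ℝ} (hp : ∀ i, 0 ≤ p i)
    (x : V) {y : V} (hy : 0 < p y) :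
    ∃ C c : ℝ, 0 < c ∧ ∀ (ε : ℝ) (u : V → ℝ), 0 < ε → ε ≤ 1 →
      shiftDens W p x y ε u ≤ C * Real.exp (-(c * ∑ i, |u i|)) := by
  set N := Fintype.card V with hN
  have hN0 : (0 : ℝ) < N := by exact_mod_cast Fintype.card_pos_iff.2 ⟨y⟩
  obtain ⟨C1, hC1, hdet⟩ := det_div_le hW hp y
  obtain ⟨C2, hcoer⟩ := energy_coercive hW y (N + 4) (by positivity)
  set b := p y / 2 with hb
  have hb0 : 0 < b := by positivity
  set C3 : ℝ := N.factorial / b ^ N * Real.exp b with hC3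
  have hC30 : 0 < C3 := by positivity
  refine ⟨Real.exp (∑ i, p i) * (√C1 / p y) * C3 * Real.exp |Real.log b| * Real.exp C2,
    1 / (2 * N), by positivity, fun ε u hε hε1 => ?_⟩
  set A := ∑ i, |u i - u y| with hA
  have hA0 : 0 ≤ A := Finset.sum_nonneg fun i _ => abs_nonneg _
  have hvi : ∀ i, |u i - u y| ≤ A := fun i =>
    Finset.single_le_sum (f := fun i => |u i - u y|) (fun i _ => abs_nonneg _) (Finset.mem_univ i)
  have hδ : ∀ i, 0 ≤ ε ^ 2 * p i := fun i => mul_nonneg (by positivity) (hp i)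
  have hδy : 0 < ε ^ 2 * p y := by positivity
  set κ := ε ^ 2 * Real.exp (-u y) with hκ
  have hκ0 : 0 < κ := by positivity
  set D := (pinLap W (fun i => ε ^ 2 * p i) u).det with hD
  have hDpos : 0 < D := pinLap_det_pos hW hδ ⟨y, hδy⟩ u
  -- the pinning factor
  have e1 : Real.exp (-∑ i, p i * ((Real.exp (u i) + ε ^ 2 * Real.exp (-u i)) / 2 - ε)) ≤
      Real.exp (∑ i, p i) * (Real.exp (-(b * Real.exp (u y))) * Real.exp (-(b * κ))) := by
    rw [← Real.exp_add, ← Real.exp_add, Real.exp_le_exp]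
    have h1 : p y * ((Real.exp (u y) + ε ^ 2 * Real.exp (-u y)) / 2) ≤
        ∑ i, p i * ((Real.exp (u i) + ε ^ 2 * Real.exp (-u i)) / 2) :=
      Finset.single_le_sum (f := fun i => p i * ((Real.exp (u i) + ε ^ 2 * Real.exp (-u i)) / 2))
        (fun i _ => mul_nonneg (hp i) (by positivity)) (Finset.mem_univ y)
    have h2 : ∑ i, p i * ε ≤ ∑ i, p i :=
      Finset.sum_le_sum fun i _ => mul_le_of_le_one_right (hp i) hε1
    simp only [mul_sub, Finset.sum_sub_distrib] at *
    rw [hb, hκ]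
    linarith
  -- the Green's function, bounded by the escape rate at `y`
  have e2 : Real.exp (u x + u y) * (ε * √D * (pinLap W (fun i => ε ^ 2 * p i) u)⁻¹ x y) ≤
      Real.exp (u x) / p y * √(D / ε ^ 2) := by
    have h1 := pinLap_inv_le hW hδ u x y hδy
    have h2 : √(D / ε ^ 2) = √D / ε := by
      rw [Real.sqrt_div' _ (by positivity), Real.sqrt_sq hε.le]
    calc _ ≤ Real.exp (u x + u y) * (ε * √D * (ε ^ 2 * p y * Real.exp (u y))⁻¹) := by gcongr
      _ = _ := by
        rw [h2, Real.exp_add]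
        have := Real.exp_pos (u y)
        field_simp
  have e3 : √(D / ε ^ 2) ≤ √C1 * (1 + κ) ^ N * Real.exp ((N - 1 / 2) * u y + (N + 1) * A) := by
    rw [← Real.sqrt_sq (x := √C1 * (1 + κ) ^ N * Real.exp ((N - 1 / 2) * u y + (N + 1) * A))
      (by positivity)]
    refine Real.sqrt_le_sqrt ((hdet (ε ^ 2) u (by positivity)).trans ?_)
    rw [mul_pow, mul_pow, Real.sq_sqrt hC1.le, ← Real.exp_nat_mul]
    have h1 : (1 : ℝ) ≤ (1 + κ) ^ N := one_le_pow₀ (by linarith)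
    have h2 : (1 + κ) ^ N ≤ ((1 + κ) ^ N) ^ 2 := by nlinarith
    gcongr
    push_cast
    nlinarith
  have e4 : Real.exp (-∑ i, u i) ≤ Real.exp (-(N * u y) + A) := by
    rw [Real.exp_le_exp]
    have h1 : ∑ i, (u y - |u i - u y|) ≤ ∑ i, u i := by
      refine Finset.sum_le_sum fun i _ => ?_
      have := neg_abs_le (u i - u y)
      linarith
    rw [Finset.sum_sub_distrib, Finset.sum_const, Finset.card_univ, nsmul_eq_mul, ← hN, ← hA] at h1
    linarith
  have e5 : Real.exp (u x) ≤ Real.exp (u y + A) := by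
    rw [Real.exp_le_exp]
    have := (le_abs_self _).trans (hvi x)
    linarith
  have e6 := hcoer u
  have e7 := pow_mul_exp_le N hb0 hκ0.le
  have e8 := exp_half_le hb0 (u y)
  have e9 : 1 / (2 * N) * ∑ i, |u i| ≤ A + |u y| / 2 := by
    have h1 : ∑ i, |u i| ≤ ∑ i, (|u i - u y| + |u y|) := by
      refine Finset.sum_le_sum fun i _ => ?_
      have := abs_add_le (u i - u y) (u y)
      simpa using this
    rw [Finset.sum_add_distrib, Finset.sum_const, Finset.card_univ, nsmul_eq_mul, ← hN, ← hA] at h1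
    have hN1 : (1 : ℝ) ≤ N := by exact_mod_cast Fintype.card_pos_iff.2 ⟨y⟩
    rw [one_div, inv_mul_le_iff₀ (by positivity)]
    nlinarith
  calc shiftDens W p x y ε u
      ≤ Real.exp (-(N * u y) + A) * Real.exp (-energy W u) *
        (Real.exp (∑ i, p i) * (Real.exp (-(b * Real.exp (u y))) * Real.exp (-(b * κ)))) *
        (Real.exp (u y + A) / p y *
          (√C1 * (1 + κ) ^ N * Real.exp ((N - 1 / 2) * u y + (N + 1) * A))) := by
        unfold shiftDens
        have hnn := pinLap_inv_nonneg hW hδ ⟨y, hδy⟩ u x y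
        have e10 := e2.trans (mul_le_mul (div_le_div_of_nonneg_right e5 hy.le) e3
          (Real.sqrt_nonneg _) (by positivity))
        exact mul_le_mul (mul_le_mul (mul_le_mul_of_nonneg_right e4 (Real.exp_pos _).le) e1
          (Real.exp_pos _).le (by positivity)) e10 (by positivity) (by positivity)
    _ = Real.exp (∑ i, p i) * (√C1 / p y) * ((1 + κ) ^ N * Real.exp (-(b * κ))) *
        (Real.exp (u y / 2) * Real.exp (-(b * Real.exp (u y)))) *
        Real.exp ((N + 3) * A - energy W u) := by
        have h1 : Real.exp (-(N * u y) + A) * Real.exp (-energy W u) * Real.exp (u y + A) *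
            Real.exp ((N - 1 / 2) * u y + (N + 1) * A) =
            Real.exp (u y / 2) * Real.exp ((N + 3) * A - energy W u) := by
          simp only [← Real.exp_add]
          congr 1; ring
        linear_combination (Real.exp (∑ i, p i) * (√C1 / p y) * ((1 + κ) ^ N *
          Real.exp (-(b * κ))) * Real.exp (-(b * Real.exp (u y)))) * h1
    _ ≤ Real.exp (∑ i, p i) * (√C1 / p y) * C3 *
        (Real.exp |Real.log b| * Real.exp (-(|u y| / 2))) * (Real.exp C2 * Real.exp (-A)) := by
        gcongr
        rw [← Real.exp_add, Real.exp_le_exp]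
        linarith
    _ = Real.exp (∑ i, p i) * (√C1 / p y) * C3 * Real.exp |Real.log b| * Real.exp C2 *
        Real.exp (-(A + |u y| / 2)) := by
        rw [neg_add, Real.exp_add]; ring
    _ ≤ _ := by gcongr

/-! ### Existence and positivity of the limit -/

lemma inv_entry (M : Matrix V V ℝ) (x y : V) : M⁻¹ x y = M.det⁻¹ * M.adjugate x y := by
  rw [Matrix.inv_def, Matrix.smul_apply, Ring.inverse_eq_inv', smul_eq_mul]

lemma continuous_energy (W : V → V → ℝ) : Continuous (energy W) := by
  unfold energy; fun_prop

lemma energy_add_const (W : V → V → ℝ) (u : V → ℝ) (c : ℝ) :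
    energy W (fun i => u i + c) = energy W u := by
  simp only [energy, add_sub_add_right_eq_sub]

lemma continuous_shiftDens {W : V → V → ℝ} (hW : IsNet W) {p : V → ℝ} (hp : ∀ i, 0 ≤ p i)
    (x : V) {y : V} (hy : 0 < p y) {ε : ℝ} (hε : 0 < ε) : Continuous (shiftDens W p x y ε) := by
  have h1 := continuous_pinLap W (fun i => ε ^ 2 * p i)
  have h2 := h1.matrix_det
  have h3 := h1.matrix_adjugate.matrix_elem x y
  have h4 : Continuous fun u => (pinLap W (fun i => ε ^ 2 * p i) u)⁻¹ x y := by
    simp only [inv_entry]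
    exact (h2.inv₀ fun u => (pinLap_det_pos hW (fun i => mul_nonneg (by positivity) (hp i))
      ⟨y, by positivity⟩ u).ne').mul h3
  have h5 := continuous_energy W
  have h6 : Continuous fun u : V → ℝ => Real.exp (u x + u y) := by fun_prop
  have h7 : Continuous fun u : V → ℝ =>
      Real.exp (-∑ i, p i * ((Real.exp (u i) + ε ^ 2 * Real.exp (-u i)) / 2 - ε)) := by fun_prop
  have h8 : Continuous fun u : V → ℝ => Real.exp (-∑ i, u i) := by fun_prop
  exact ((h8.mul (Real.continuous_exp.comp h5.neg)).mul h7).mul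
    (h6.mul ((continuous_const.mul (Real.continuous_sqrt.comp h2)).mul h4))

lemma shiftDens_eq_marg {W : V → V → ℝ} (hW : IsNet W) {p : V → ℝ} (hp : ∀ i, 0 ≤ p i)
    (x : V) {y : V} (hy : 0 < p y) {ε : ℝ} (hε : 0 < ε) (t : V → ℝ) :
    ε * (margT W (pinOf p ε) t * (Real.exp (t x + t y) * (pinLap W (pinOf p ε) t)⁻¹ x y)) =
      shiftDens W p x y ε (t + fun _ => Real.log ε) := by
  set M := pinLap W (pinOf p ε) t with hMdef
  have hM : pinLap W (fun i => ε ^ 2 * p i) (t + fun _ => Real.log ε) = ε ^ 2 • M := by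
    change pinLap W (fun i => ε ^ 2 * p i) (fun i => t i + Real.log ε) = _
    rw [pinLap_add_const, two_mul, Real.exp_add, Real.exp_log hε, Real.exp_neg, Real.exp_log hε,
      hMdef, pow_two]
    congr 2
    funext i; simp only [pinOf]; field_simp
  have hMpos : 0 < M.det := pinLap_det_pos hW (fun i => mul_nonneg (hp i) hε.le)
    ⟨y, mul_pos hy hε⟩ t
  have hdet : √(ε ^ 2 • M).det = ε ^ Fintype.card V * √M.det := by
    rw [Matrix.det_smul, Real.sqrt_mul (by positivity), ← pow_mul, mul_comm 2, pow_mul,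
      Real.sqrt_sq (by positivity)]
  have hinv : (ε ^ 2 • M)⁻¹ x y = (ε ^ 2)⁻¹ * M⁻¹ x y := by
    have h : (ε ^ 2 • M)⁻¹ = (ε ^ 2)⁻¹ • M⁻¹ := by
      refine Matrix.inv_eq_left_inv ?_
      rw [Matrix.smul_mul, Matrix.mul_smul, smul_smul, inv_mul_cancel₀ (by positivity), one_smul,
        Matrix.nonsing_inv_mul _ hMpos.ne'.isUnit]
    rw [h]; rfl
  have hsum : Real.exp (-∑ i, (t i + Real.log ε)) =
      Real.exp (-∑ i, t i) * (ε ^ Fintype.card V)⁻¹ := by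
    rw [Finset.sum_add_distrib, Finset.sum_const, Finset.card_univ, nsmul_eq_mul, neg_add,
      Real.exp_add, Real.exp_neg (_ * _), Real.exp_nat_mul, Real.exp_log hε]
  have hpin : ∀ i, pinOf p ε i * (Real.cosh (t i) - 1) =
      p i * ((Real.exp (t i + Real.log ε) + ε ^ 2 * Real.exp (-(t i + Real.log ε))) / 2 - ε) := by
    intro i
    rw [neg_add, Real.exp_add, Real.exp_add, Real.exp_neg (Real.log ε), Real.exp_log hε, pinOf,
      Real.cosh_eq]
    field_simp
  have hxy : Real.exp (t x + Real.log ε + (t y + Real.log ε)) =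
      Real.exp (t x + t y) * ε ^ 2 := by
    simp only [Real.exp_add, Real.exp_log hε]; ring
  simp only [shiftDens, margT, hM, hdet, hinv, Pi.add_apply, hsum, hpin, hxy]
  rw [show energy W (t + fun _ => Real.log ε) = energy W t from energy_add_const W t _, ← hMdef]
  field_simp

lemma pinLap_zero (W : V → V → ℝ) (u : V → ℝ) : pinLap W (fun _ => 0) u = lap W u := by
  simp [pinLap, epsHat]

/-- With `δ = ε ^ 2`, the determinant divided by `δ` tends to `(∑ i, p i e^{u i}) * cof` and `δ`
times the inverse tends to `(∑ i, p i e^{u i})⁻¹`, all cofactors of the Laplacian being equal. -/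
lemma tendsto_shiftDens {W : V → V → ℝ} (hW : IsNet W) {p : V → ℝ} (hp : ∀ i, 0 ≤ p i)
    (x : V) {y : V} (hy : 0 < p y) (u : V → ℝ) :
    Tendsto (fun ε => shiftDens W p x y ε u) (𝓝[>] 0) (𝓝 (limDens W p x y u)) := by
  set S := ∑ i, p i * Real.exp (u i) with hS
  have hS0 : 0 < S := Finset.sum_pos' (fun i _ => mul_nonneg (hp i) (Real.exp_pos _).le)
    ⟨y, Finset.mem_univ _, by positivity⟩
  have hc0 := cof_pos hW x u
  have hMc : Continuous fun ε : ℝ => pinLap W (fun i => ε ^ 2 * p i) u := by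
    unfold pinLap epsHat
    exact continuous_const.add (Continuous.matrix_diagonal (by fun_prop))
  have hadj : ∀ j, Continuous fun ε : ℝ => (pinLap W (fun i => ε ^ 2 * p i) u).adjugate x j :=
    fun j => hMc.matrix_adjugate.matrix_elem x j
  have h0 : ∀ j, (pinLap W (fun i => (0 : ℝ) ^ 2 * p i) u).adjugate x j = cof W x u := by
    intro j
    simp only [ne_eq, OfNat.ofNat_ne_zero, not_false_eq_true, zero_pow, zero_mul, pinLap_zero]
    exact lap_adjugate_eq hW u x x j
  set Q : ℝ → ℝ := fun ε =>
    ∑ j, (pinLap W (fun i => ε ^ 2 * p i) u).adjugate x j * (p j * Real.exp (u j)) with hQ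
  have hQc : Continuous Q := continuous_finsetSum _ fun j _ => (hadj j).mul continuous_const
  have hQ0 : Q 0 = cof W x u * S := by
    simp only [hQ, h0, ← Finset.mul_sum]; rfl
  set F : ℝ → ℝ := fun ε => Real.exp (-∑ i, u i) * Real.exp (-energy W u) *
    Real.exp (-∑ i, p i * ((Real.exp (u i) + ε ^ 2 * Real.exp (-u i)) / 2 - ε)) *
    (Real.exp (u x + u y) * ((pinLap W (fun i => ε ^ 2 * p i) u).adjugate x y / √(Q ε))) with hF
  have hFt : Tendsto F (𝓝 0) (𝓝 (F 0)) := by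
    have h1 : ContinuousAt (fun ε => (pinLap W (fun i => ε ^ 2 * p i) u).adjugate x y / √(Q ε)) 0 :=
      (hadj y).continuousAt.div (Real.continuous_sqrt.comp hQc).continuousAt
        (by simp only [Function.comp, hQ0]; positivity)
    have h2 : ContinuousAt F 0 := by
      refine ContinuousAt.mul ?_ (continuousAt_const.mul h1)
      exact Continuous.continuousAt (by fun_prop)
    exact h2
  have hF0 : F 0 = limDens W p x y u := by
    simp only [hF, limDens, h0, hQ0, ← hS]
    congr 2
    · simp
    · rw [Real.sqrt_mul hc0.le, Real.sqrt_div hc0.le]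
      have h1 := Real.mul_self_sqrt hc0.le
      have h2 := Real.sqrt_pos.2 hc0
      have h3 := Real.sqrt_pos.2 hS0
      nth_rewrite 1 [← h1]
      field_simp
  rw [← hF0]
  refine (hFt.mono_left nhdsWithin_le_nhds).congr' ?_
  filter_upwards [self_mem_nhdsWithin] with ε hε
  have hε : 0 < ε := hε
  have hdet : (pinLap W (fun i => ε ^ 2 * p i) u).det = ε ^ 2 * Q ε := by
    rw [pinLap_det_eq W _ u x, hQ, Finset.mul_sum]
    exact Finset.sum_congr rfl fun j _ => by ring
  have hdpos := pinLap_det_pos hW (fun i => mul_nonneg (sq_nonneg ε) (hp i)) ⟨y, by positivity⟩ u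
  have hQpos : 0 < Q ε := by
    rw [hdet] at hdpos; exact pos_of_mul_pos_right hdpos (by positivity)
  have h1 := Real.mul_self_sqrt hQpos.le
  have h2 := Real.sqrt_pos.2 hQpos
  simp only [hF, shiftDens, inv_entry, hdet]
  rw [Real.sqrt_mul (by positivity), Real.sqrt_sq hε.le]
  congr 2
  set r := √(Q ε)
  rw [← h1]
  field_simp

lemma continuous_limDens {W : V → V → ℝ} {p : V → ℝ} (hp : ∀ i, 0 ≤ p i)
    (x : V) {y : V} (hy : 0 < p y) : Continuous (limDens W p x y) := by
  have h1 := continuous_cof W x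
  have h2 := continuous_energy W
  have h3 : ∀ u : V → ℝ, ∑ i, p i * Real.exp (u i) ≠ 0 := fun u =>
    (Finset.sum_pos' (fun i _ => mul_nonneg (hp i) (Real.exp_pos _).le)
      ⟨y, Finset.mem_univ _, by positivity⟩).ne'
  unfold limDens
  fun_prop (disch := first | assumption | (intro _; exact h3 _) | exact h3 _)

lemma limDens_pos {W : V → V → ℝ} (hW : IsNet W) {p : V → ℝ} (hp : ∀ i, 0 ≤ p i)
    (x : V) {y : V} (hy : 0 < p y) (u : V → ℝ) : 0 < limDens W p x y u := by
  have h1 := cof_pos hW x u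
  have h3 : 0 < ∑ i, p i * Real.exp (u i) :=
    Finset.sum_pos' (fun i _ => mul_nonneg (hp i) (Real.exp_pos _).le)
      ⟨y, Finset.mem_univ _, by positivity⟩
  unfold limDens
  positivity

/-- Existence and positivity of the limit, by dominated convergence. -/
lemma tendsto_expect (G : SimpleGraph V) {β : V → V → ℝ} (hβ : ∀ i j, β i j = β j i)
    (hW : IsNet (netW G β)) {p : V → ℝ} (hp : ∀ i, 0 ≤ p i) (x : V) {y : V} (hy : 0 < p y) :
    Tendsto (fun ε : ℝ => ε * expect G β (pinOf p ε) (fun t _ _ => Gfun G β (pinOf p ε) t x y))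
      (𝓝[>] 0) (𝓝 ((√(2 * π) ^ Fintype.card V)⁻¹ * ∫ u, limDens (netW G β) p x y u)) ∧
    Integrable (limDens (netW G β) p x y) ∧ 0 < ∫ u, limDens (netW G β) p x y u := by
  set W := netW G β with hWdef
  obtain ⟨C, c, hc, hb⟩ := shiftDens_le hW hp x hy
  have hdom : Integrable fun u : V → ℝ => C * Real.exp (-(c * ∑ i, |u i|)) :=
    (integrable_exp_neg_sum_abs hc).const_mul C
  have hev : ∀ᶠ ε : ℝ in 𝓝[>] 0, 0 < ε ∧ ε ≤ 1 := by
    filter_upwards [Ioc_mem_nhdsGT (zero_lt_one' ℝ)] with ε hε using hε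
  have hint : ∀ ε : ℝ, 0 < ε → ε ≤ 1 → Integrable (shiftDens W p x y ε) := fun ε h0 h1 =>
    hdom.mono' (continuous_shiftDens hW hp x hy h0).aestronglyMeasurable
      (Eventually.of_forall fun u => by
        rw [Real.norm_of_nonneg (shiftDens_nonneg hW hp hy h0 u)]; exact hb ε u h0 h1)
  have hlim : Tendsto (fun ε => ∫ u, shiftDens W p x y ε u) (𝓝[>] 0)
      (𝓝 (∫ u, limDens W p x y u)) := by
    refine tendsto_integral_filter_of_dominated_convergence _ ?_ ?_ hdom
      (Eventually.of_forall fun u => tendsto_shiftDens hW hp x hy u)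
    · filter_upwards [hev] with ε hε
      exact (continuous_shiftDens hW hp x hy hε.1).aestronglyMeasurable
    · filter_upwards [hev] with ε hε
      refine Eventually.of_forall fun u => ?_
      rw [Real.norm_of_nonneg (shiftDens_nonneg hW hp hy hε.1 u)]
      exact hb ε u hε.1 hε.2
  have hlimint : Integrable (limDens W p x y) := by
    refine hdom.mono' (continuous_limDens hp x hy).aestronglyMeasurable
      (Eventually.of_forall fun u => ?_)
    rw [Real.norm_of_nonneg (limDens_pos hW hp x hy u).le]
    refine le_of_tendsto (tendsto_shiftDens hW hp x hy u) ?_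
    filter_upwards [hev] with ε hε
    exact hb ε u hε.1 hε.2
  refine ⟨?_, hlimint, ?_⟩
  · refine (hlim.const_mul _).congr' ?_
    filter_upwards [hev] with ε hε
    have hε0 := hε.1
    set g : (V → ℝ) → ℝ := fun t => Gfun G β (pinOf p ε) t x y with hg
    have hpε : ∀ i, 0 ≤ pinOf p ε i := fun i => mul_nonneg (hp i) hε0.le
    have hpε' : ∃ i, 0 < pinOf p ε i := ⟨y, mul_pos hy hε0⟩
    have hgeq : ∀ t, g t = Real.exp (t x + t y) * (pinLap W (pinOf p ε) t)⁻¹ x y := by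
      intro t; simp only [hg, Gfun, Amat_eq G hβ]; rfl
    have hkey : ∀ t, margT W (pinOf p ε) t * g t =
        ε⁻¹ * shiftDens W p x y ε (t + fun _ => Real.log ε) := by
      intro t
      rw [hgeq, ← shiftDens_eq_marg hW hp x hy hε0, inv_mul_cancel_left₀ hε0.ne']
    have hgc : Continuous g := by
      have h1 := continuous_pinLap W (pinOf p ε)
      have h2 := h1.matrix_det
      have h3 := h1.matrix_adjugate.matrix_elem x y
      have h4 := h2.inv₀ fun u => (pinLap_det_pos hW hpε hpε' u).ne'
      have : g = fun t => Real.exp (t x + t y) * ((pinLap W (pinOf p ε) t).det⁻¹ *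
          (pinLap W (pinOf p ε) t).adjugate x y) := by
        funext t; rw [hgeq, inv_entry]
      rw [this]
      exact Continuous.mul (by fun_prop) (h4.mul h3)
    have hg0 : ∀ t, 0 ≤ g t := fun t => by
      rw [hgeq]
      exact mul_nonneg (Real.exp_pos _).le (pinLap_inv_nonneg hW hpε hpε' t x y)
    have hI : Integrable fun t => margT W (pinOf p ε) t * g t := by
      simp only [hkey]
      exact ((hint ε hε0 hε.2).comp_add_right _).const_mul _
    rw [expect_eq G hβ hW hpε hpε' hgc hg0 hI]
    simp only [← hWdef, hkey]
    rw [integral_const_mul, integral_add_right_eq_self (fun u => shiftDens W p x y ε u)]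
    field_simp
  · rw [integral_pos_iff_support_of_nonneg (fun u => (limDens_pos hW hp x hy u).le) hlimint]
    have : Function.support (limDens W p x y) = Set.univ :=
      Set.eq_univ_of_forall fun u => (limDens_pos hW hp x hy u).ne'
    rw [this]
    exact Measure.measure_univ_pos.2 (NeZero.ne _)

/-! ### The reciprocal inverse Gaussian density -/

/-- The (unnormalised) reciprocal inverse Gaussian density with parameter `q`; for `q = 0` it is
the Gamma density with shape `1 / 2`. -/
noncomputable def rigDens (q y : ℝ) : ENNReal :=
  if 0 < y then ENNReal.ofReal ((√y)⁻¹ * Real.exp (-(y + q ^ 2 / y) / 2)) else 0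

lemma lintegral_rigDens_zero : ∫⁻ y, rigDens 0 y ≤ ENNReal.ofReal √(2 * π) := by
  have himg : (fun z : ℝ => z ^ 2) '' Set.Ioi 0 = Set.Ioi 0 := by
    ext y
    constructor
    · rintro ⟨z, hz, rfl⟩
      exact pow_pos (Set.mem_Ioi.1 hz) 2
    · intro hy
      exact ⟨√y, Real.sqrt_pos.2 hy, Real.sq_sqrt (le_of_lt hy)⟩
  have hcv := lintegral_image_eq_lintegral_abs_deriv_mul (s := Set.Ioi (0 : ℝ))
    (f := fun z => z ^ 2) (f' := fun z => 2 * z) measurableSet_Ioi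
    (fun z _ => by simpa using (hasDerivAt_pow 2 z).hasDerivWithinAt)
    (fun z hz w hw h => by
      exact (pow_left_inj₀ (le_of_lt hz) (le_of_lt hw) two_ne_zero).1 h) (rigDens 0)
  have hsup : ∫⁻ y, rigDens 0 y = ∫⁻ y in Set.Ioi 0, rigDens 0 y := by
    rw [← lintegral_indicator measurableSet_Ioi]
    congr 1
    ext y
    by_cases hy : 0 < y
    · rw [Set.indicator_of_mem (Set.mem_Ioi.2 hy)]
    · rw [Set.indicator_of_notMem (by simpa using hy), rigDens, if_neg hy]
  rw [hsup]
  nth_rewrite 1 [← himg]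
  rw [hcv]
  have hint : Integrable (fun z : ℝ => 2 * Real.exp (-(1 / 2) * z ^ 2))
      (volume.restrict (Set.Ioi 0)) :=
    ((integrable_exp_neg_mul_sq (b := 1 / 2) (by norm_num)).const_mul 2).restrict
  have : ∫⁻ z in Set.Ioi (0 : ℝ), ENNReal.ofReal |2 * z| * rigDens 0 (z ^ 2) =
      ∫⁻ z in Set.Ioi (0 : ℝ), ENNReal.ofReal (2 * Real.exp (-(1 / 2) * z ^ 2)) := by
    refine setLIntegral_congr_fun measurableSet_Ioi fun z hz => ?_
    have hz : 0 < z := hz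
    simp only [rigDens]
    rw [if_pos (by positivity), ← ENNReal.ofReal_mul (abs_nonneg _), abs_of_pos (by positivity),
      Real.sqrt_sq hz.le]
    congr 1
    rw [← mul_assoc]
    congr 1
    · field_simp
    · congr 1; ring
  rw [this, ← ofReal_integral_eq_lintegral_ofReal hint
    (Filter.Eventually.of_forall fun z => by positivity), integral_const_mul,
    integral_gaussian_Ioi]
  apply le_of_eq
  congr 1
  rw [show π / (1 / 2) = 2 * π by ring]; ring

/-- A bound, exact for `q ≥ 0`, on the total mass of `rigDens q`, by the substitution
`z = √y - |q| / √y`, under which the density becomes an even Gaussian plus an odd remainder. -/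
lemma lintegral_rigDens_le (q : ℝ) :
    ∫⁻ y, rigDens q y ≤ ENNReal.ofReal (√(2 * π) * Real.exp (-q)) := by
  by_cases hq : q = 0
  · subst hq; simpa using lintegral_rigDens_zero
  set a := |q| with ha
  have ha0 : 0 < a := abs_pos.2 hq
  have hqa : q ^ 2 = a ^ 2 := (sq_abs q).symm
  set R : ℝ → ℝ := fun z => √(z ^ 2 + 4 * a) with hR
  have hRsq : ∀ z, R z ^ 2 = z ^ 2 + 4 * a := fun z => Real.sq_sqrt (by positivity)
  have hRpos : ∀ z, 0 < R z := fun z => Real.sqrt_pos.2 (by positivity)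
  have hRlt : ∀ z, |z| < R z := fun z => by
    refine lt_of_pow_lt_pow_left₀ 2 (hRpos z).le ?_
    rw [sq_abs, hRsq]; linarith
  set S : ℝ → ℝ := fun z => (z + R z) / 2 with hS
  have hSpos : ∀ z, 0 < S z := fun z => by
    have := hRlt z; have := neg_abs_le z; simp only [hS]; linarith
  have hSeq : ∀ z, S z ^ 2 = z * S z + a := fun z => by
    simp only [hS]; nlinarith [hRsq z]
  have hSd : ∀ z, HasDerivAt S ((1 + z / R z) / 2) z := fun z => by
    have h1 : HasDerivAt (fun z : ℝ => z ^ 2 + 4 * a) (2 * z) z := by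
      simpa using (hasDerivAt_pow 2 z).add_const (4 * a)
    have h2 := h1.sqrt (by positivity)
    have h3 := ((hasDerivAt_id z).add h2).div_const 2
    refine h3.congr_deriv ?_
    change (1 + 2 * z / (2 * R z)) / 2 = _
    rw [mul_div_mul_left _ _ two_ne_zero]
  have hcv := lintegral_image_eq_lintegral_abs_deriv_mul (s := Set.univ)
    (f := fun z => S z ^ 2) (f' := fun z => 2 * S z * ((1 + z / R z) / 2)) MeasurableSet.univ
    (fun z _ => (((hSd z).fun_pow 2).congr_deriv (by push_cast; ring)).hasDerivWithinAt)
    (fun z _ w _ h => by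
      have h : S z = S w := (pow_left_inj₀ (hSpos z).le (hSpos w).le two_ne_zero).1 h
      have h1 := hSeq z
      have h2 := hSeq w
      rw [h] at h1
      have : z * S w = w * S w := by linarith
      exact mul_right_cancel₀ (hSpos w).ne' this) (rigDens q)
  have hsup : ∫⁻ y, rigDens q y ≤ ∫⁻ y in (fun z => S z ^ 2) '' Set.univ, rigDens q y := by
    have himg : Set.Ioi 0 ⊆ (fun z => S z ^ 2) '' Set.univ := by
      intro y hy
      have hy : 0 < y := hy
      have hsy := Real.sqrt_pos.2 hy
      refine ⟨√y - a / √y, Set.mem_univ _, ?_⟩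
      have : R (√y - a / √y) = √y + a / √y := by
        simp only [hR]
        rw [Real.sqrt_eq_iff_mul_self_eq (by positivity) (by positivity)]
        field_simp; ring
      simp only [hS, this]
      rw [show (√y - a / √y + (√y + a / √y)) / 2 = √y by ring, Real.sq_sqrt hy.le]
    refine le_trans (le_of_eq ?_) (lintegral_mono_set himg)
    rw [← lintegral_indicator measurableSet_Ioi]
    congr 1
    ext y
    by_cases hy : 0 < y
    · rw [Set.indicator_of_mem (Set.mem_Ioi.2 hy)]
    · rw [Set.indicator_of_notMem (by simpa using hy), rigDens, if_neg hy]
  refine hsup.trans ?_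
  rw [hcv, Measure.restrict_univ]
  have hg := integrable_exp_neg_mul_sq (b := 1 / 2) (by norm_num)
  have hRc : Continuous R := by simp only [hR]; fun_prop
  have hodd : Integrable (fun z : ℝ => z / R z * Real.exp (-(1 / 2) * z ^ 2)) := by
    refine hg.mono' ?_ (Filter.Eventually.of_forall fun z => ?_)
    · exact ((continuous_id.div hRc fun z => (hRpos z).ne').mul (by fun_prop)).aestronglyMeasurable
    · rw [norm_mul, Real.norm_eq_abs, Real.norm_eq_abs, Real.abs_exp, abs_div,
        abs_of_pos (hRpos z)]
      exact mul_le_of_le_one_left (Real.exp_pos _).le ((div_le_one (hRpos z)).2 (hRlt z).le)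
  have hodd0 : ∫ z : ℝ, z / R z * Real.exp (-(1 / 2) * z ^ 2) = 0 := by
    have h := integral_neg_eq_self (fun z : ℝ => z / R z * Real.exp (-(1 / 2) * z ^ 2)) volume
    have h2 : ∀ z : ℝ, -z / R (-z) * Real.exp (-(1 / 2) * (-z) ^ 2) =
        -(z / R z * Real.exp (-(1 / 2) * z ^ 2)) := fun z => by
      simp only [hR, neg_sq]; ring
    simp only [h2, integral_neg] at h
    linarith
  have hint : Integrable fun z : ℝ => Real.exp (-a) * (Real.exp (-(1 / 2) * z ^ 2) +
      z / R z * Real.exp (-(1 / 2) * z ^ 2)) := (hg.add hodd).const_mul (Real.exp (-a))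
  have hval : ∫ z : ℝ, Real.exp (-a) * (Real.exp (-(1 / 2) * z ^ 2) +
      z / R z * Real.exp (-(1 / 2) * z ^ 2)) = √(2 * π) * Real.exp (-a) := by
    rw [integral_const_mul, integral_add hg hodd, hodd0, integral_gaussian, add_zero, mul_comm]
    congr 2; ring
  have hnn : ∀ z, 0 ≤ 1 + z / R z := fun z => by
    have : -1 ≤ z / R z := by
      rw [le_div_iff₀ (hRpos z)]
      have := hRlt z; have := neg_abs_le z; linarith
    linarith
  have hfin : ∫⁻ z, ENNReal.ofReal |2 * S z * ((1 + z / R z) / 2)| * rigDens q (S z ^ 2) =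
      ∫⁻ z, ENNReal.ofReal (Real.exp (-a) * (Real.exp (-(1 / 2) * z ^ 2) +
      z / R z * Real.exp (-(1 / 2) * z ^ 2))) := by
    refine lintegral_congr fun z => ?_
    have hs := hSpos z
    simp only [rigDens]
    rw [if_pos (by positivity), ← ENNReal.ofReal_mul (abs_nonneg _),
      abs_of_nonneg (mul_nonneg (by positivity) (by linarith [hnn z])),
      Real.sqrt_sq hs.le]
    congr 1
    have hz : S z ^ 2 + q ^ 2 / S z ^ 2 = z ^ 2 + 2 * a := by
      have hzz : z = S z - a / S z := by
        rw [eq_sub_iff_add_eq, ← eq_sub_iff_add_eq', div_eq_iff hs.ne']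
        linarith [hSeq z, sq (S z)]
      nth_rewrite 3 [hzz]
      rw [hqa]; field_simp; ring
    rw [hz, show -(z ^ 2 + 2 * a) / 2 = -a + -(1 / 2) * z ^ 2 by ring, Real.exp_add]
    field_simp
  rw [hfin, ← ofReal_integral_eq_lintegral_ofReal hint
    (Filter.Eventually.of_forall fun z => ?_)]
  · refine ENNReal.ofReal_le_ofReal ?_
    refine le_trans (le_of_eq hval) ?_
    gcongr
    exact le_abs_self q
  · have := hnn z
    have h : Real.exp (-(1 / 2) * z ^ 2) + z / R z * Real.exp (-(1 / 2) * z ^ 2) =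
      (1 + z / R z) * Real.exp (-(1 / 2) * z ^ 2) := by ring
    simp only [Pi.zero_apply]
    rw [h]
    positivity

/-! ### The random potential -/

/-- The random Schrödinger operator `diag β - W` attached to the potential `β`. -/
noncomputable def schro (W : V → V → ℝ) (β : V → ℝ) : Matrix V V ℝ :=
  Matrix.diagonal β - Matrix.of W

/-- The (unnormalised) density of the random potential `β` of the model, supported on the
potentials for which `schro W β` is positive definite. -/
noncomputable def potDens (W : V → V → ℝ) (ε β : V → ℝ) : ENNReal :=
  if (schro W β).PosDef then
    ENNReal.ofReal (Real.exp (-(∑ i, β i) / 2 - (ε ⬝ᵥ (schro W β)⁻¹.mulVec ε) / 2) /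
      √(schro W β).det) else 0

section FinStep

variable {n : ℕ} (W : Fin (n + 1) → Fin (n + 1) → ℝ) (b : ℝ) (β : Fin n → ℝ)

lemma schro_tail : (schro W (Fin.cons b β)).submatrix Fin.succ Fin.succ =
    schro (fun i j => W i.succ j.succ) β := by
  ext i j
  simp [schro, Matrix.diagonal_apply, Fin.succ_inj]

lemma schro_mulVec_cons (hW : ∀ i j, W i j = W j i) (c : ℝ) (v : Fin n → ℝ) :
    (schro W (Fin.cons b β)).mulVec (Fin.cons c v) =
      Fin.cons ((b - W 0 0) * c - (fun j : Fin n => W 0 j.succ) ⬝ᵥ v)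
        ((schro (fun i j => W i.succ j.succ) β).mulVec v - c • fun j : Fin n => W 0 j.succ) := by
  ext i
  refine Fin.cases ?_ (fun i => ?_) i
  · simp only [schro, Matrix.sub_mulVec, Matrix.mulVec_diagonal, Pi.sub_apply, Fin.cons_zero]
    simp only [Matrix.mulVec, dotProduct, Matrix.of_apply, Fin.sum_univ_succ, Fin.cons_zero,
      Fin.cons_succ]
    ring
  · simp only [schro, Matrix.sub_mulVec, Matrix.mulVec_diagonal, Pi.sub_apply, Fin.cons_succ,
      Pi.smul_apply, smul_eq_mul]
    simp only [Matrix.mulVec, dotProduct, Matrix.of_apply, Fin.sum_univ_succ, Fin.cons_zero,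
      Fin.cons_succ, hW i.succ 0]
    ring

/-- Schur complement decomposition of `schro W` with respect to the first vertex: the
determinant and the quadratic form of the inverse. -/
lemma schro_schur (hW : ∀ i j, W i j = W j i) (hH : (schro W (Fin.cons b β)).PosDef)
    (e : ℝ) (ε : Fin n → ℝ) :
    let w : Fin n → ℝ := fun j => W 0 j.succ
    let H' := schro (fun i j => W i.succ j.succ) β
    let y := b - W 0 0 - w ⬝ᵥ H'⁻¹.mulVec w
    let q := e + w ⬝ᵥ H'⁻¹.mulVec ε
    H'.PosDef ∧ 0 < y ∧ (schro W (Fin.cons b β)).det = y * H'.det ∧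
      (Fin.cons e ε : Fin (n + 1) → ℝ) ⬝ᵥ (schro W (Fin.cons b β))⁻¹.mulVec (Fin.cons e ε) =
        ε ⬝ᵥ H'⁻¹.mulVec ε + q ^ 2 / y := by
  intro w H' y q
  have hH' : H'.PosDef := by
    have := hH.submatrix (e := Fin.succ) (Fin.succ_injective n)
    rwa [schro_tail] at this
  have hdet' : IsUnit H'.det := hH'.det_pos.ne'.isUnit
  have hdet : IsUnit (schro W (Fin.cons b β)).det := hH.det_pos.ne'.isUnit
  have hKs : ∀ v u : Fin n → ℝ, v ⬝ᵥ H'⁻¹.mulVec u = u ⬝ᵥ H'⁻¹.mulVec v := by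
    intro v u
    have hs : (H'⁻¹).transpose = H'⁻¹ := by
      have := hH'.inv.isHermitian
      rwa [Matrix.IsHermitian, Matrix.conjTranspose_eq_transpose_of_trivial] at this
    rw [Matrix.dotProduct_mulVec, ← Matrix.mulVec_transpose, hs, dotProduct_comm]
  have hHK : ∀ u, H'.mulVec (H'⁻¹.mulVec u) = u := fun u => by
    rw [Matrix.mulVec_mulVec, Matrix.mul_nonsing_inv _ hdet', Matrix.one_mulVec]
  have hy : 0 < y := by
    have h := hH.dotProduct_mulVec_pos (x := Fin.cons 1 (H'⁻¹.mulVec w))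
      (fun h => one_ne_zero (congrFun h 0))
    rw [star_trivial, schro_mulVec_cons W b β hW, hHK] at h
    simpa [dotProduct, Fin.sum_univ_succ, y, w] using h
  -- the solution of `H v = (e', ε')` by block elimination
  have hinv : ∀ (e' : ℝ) (ε' : Fin n → ℝ),
      (schro W (Fin.cons b β))⁻¹.mulVec (Fin.cons e' ε') =
        Fin.cons ((e' + w ⬝ᵥ H'⁻¹.mulVec ε') / y)
          (H'⁻¹.mulVec ε' + ((e' + w ⬝ᵥ H'⁻¹.mulVec ε') / y) • H'⁻¹.mulVec w) := by
    intro e' ε'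
    set q' := e' + w ⬝ᵥ H'⁻¹.mulVec ε' with hq'
    have h : (schro W (Fin.cons b β)).mulVec (Fin.cons (q' / y)
          (H'⁻¹.mulVec ε' + (q' / y) • H'⁻¹.mulVec w)) = Fin.cons e' ε' := by
      rw [schro_mulVec_cons W b β hW]
      congr 1
      · rw [dotProduct_add, dotProduct_smul, smul_eq_mul]
        have : (b - W 0 0) = y + w ⬝ᵥ H'⁻¹.mulVec w := by simp only [y]; ring
        rw [this]
        have h2 : y * (q' / y) = q' := mul_div_cancel₀ _ hy.ne'
        change (y + w ⬝ᵥ H'⁻¹.mulVec w) * (q' / y) -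
          (w ⬝ᵥ H'⁻¹.mulVec ε' + q' / y * w ⬝ᵥ H'⁻¹.mulVec w) = e'
        rw [add_mul, h2]
        simp only [hq']; ring
      · change H'.mulVec _ - _ • w = _
        rw [Matrix.mulVec_add, Matrix.mulVec_smul, hHK, hHK]
        simp
    rw [← h, Matrix.mulVec_mulVec, Matrix.nonsing_inv_mul _ hdet, Matrix.one_mulVec]
  refine ⟨hH', hy, ?_, ?_⟩
  · have h := congrFun (hinv 1 0) 0
    have h0 : (Fin.cons 1 0 : Fin (n + 1) → ℝ) = Pi.single 0 1 := by
      ext i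
      refine Fin.cases ?_ (fun i => ?_) i <;> simp
    rw [h0, Matrix.mulVec_single_one] at h
    simp only [Matrix.col_apply, Fin.cons_zero, Matrix.mulVec_zero, dotProduct_zero, add_zero] at h
    rw [inv_entry, Matrix.adjugate_fin_succ_eq_det_submatrix] at h
    simp only [Fin.val_zero, add_zero, pow_zero, one_mul, Fin.succAbove_zero] at h
    rw [schro_tail] at h
    have hd := hH.det_pos.ne'
    change _ * H'.det = _ at h
    field_simp at h
    linarith
  · rw [hinv]
    simp only [dotProduct, Fin.sum_univ_succ, Fin.cons_zero, Fin.cons_succ]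
    change e * (q / y) + ε ⬝ᵥ (H'⁻¹.mulVec ε + (q / y) • H'⁻¹.mulVec w) =
      ε ⬝ᵥ H'⁻¹.mulVec ε + q ^ 2 / y
    rw [dotProduct_add, dotProduct_smul, hKs ε w, smul_eq_mul]
    simp only [q]; ring

/-- Given the potential at the other vertices, the density of the potential at the first
vertex is, after a translation, of reciprocal inverse Gaussian form. -/
lemma potDens_cons_le (hW : ∀ i j, W i j = W j i) (e : ℝ) (ε : Fin n → ℝ) :
    potDens W (Fin.cons e ε) (Fin.cons b β) ≤
      (if (schro (fun i j => W i.succ j.succ) β).PosDef then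
        ENNReal.ofReal (Real.exp (-(∑ i, β i) / 2 - W 0 0 / 2 -
          ((fun j => W 0 j.succ) ⬝ᵥ (schro (fun i j => W i.succ j.succ) β)⁻¹.mulVec
            fun j => W 0 j.succ) / 2 -
          (ε ⬝ᵥ (schro (fun i j => W i.succ j.succ) β)⁻¹.mulVec ε) / 2) /
          √(schro (fun i j => W i.succ j.succ) β).det) else 0) *
      rigDens (e + (fun j => W 0 j.succ) ⬝ᵥ
          (schro (fun i j => W i.succ j.succ) β)⁻¹.mulVec ε)
        (b - (W 0 0 + (fun j => W 0 j.succ) ⬝ᵥ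
          (schro (fun i j => W i.succ j.succ) β)⁻¹.mulVec fun j => W 0 j.succ)) := by
  unfold potDens
  split_ifs with hH hH' hH'
  · obtain ⟨-, hy, hdet, hquad⟩ := schro_schur W b β hW hH e ε
    rw [sub_sub] at hy hdet hquad
    rw [hdet, hquad, rigDens, if_pos hy, ← ENNReal.ofReal_mul (by positivity)]
    refine ENNReal.ofReal_le_ofReal (le_of_eq ?_)
    set y := b - (W 0 0 + (fun j => W 0 j.succ) ⬝ᵥ
          (schro (fun i j => W i.succ j.succ) β)⁻¹.mulVec fun j => W 0 j.succ) with hy'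
    have hd := Real.sqrt_pos.2 hH'.det_pos
    have hsy := Real.sqrt_pos.2 hy
    rw [Real.sqrt_mul hy.le, div_mul_eq_mul_div, div_eq_div_iff (by positivity) hd.ne']
    have : ∀ A B C : ℝ, A = B + C → Real.exp A * √(schro (fun i j => W i.succ j.succ) β).det =
      Real.exp B * ((√y)⁻¹ * Real.exp C) *
        (√y * √(schro (fun i j => W i.succ j.succ) β).det) := by
      intro A B C h
      rw [h, Real.exp_add]; field_simp
    apply this
    rw [Fin.sum_univ_succ]
    simp only [Fin.cons_zero, Fin.cons_succ]
    have : b = y + (W 0 0 + (fun j => W 0 j.succ) ⬝ᵥ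
          (schro (fun i j => W i.succ j.succ) β)⁻¹.mulVec fun j => W 0 j.succ) := by
      rw [hy']; ring
    nth_rewrite 1 [this]
    ring
  · exact absurd (schro_schur W b β hW hH e ε).1 hH'
  · exact zero_le
  · exact zero_le

end FinStep

/-- A bound on the total mass of the density of the random potential, one vertex at a time. -/
lemma lintegral_potDens_fin (n : ℕ) : ∀ (W : Fin n → Fin n → ℝ) (_ : ∀ i j, W i j = W j i)
    (ε : Fin n → ℝ),
    ∫⁻ β, potDens W ε β ≤
      ENNReal.ofReal (√(2 * π) ^ n * Real.exp (-(∑ i, ∑ j, W i j) / 2 - ∑ i, ε i)) := by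
  induction n with
  | zero =>
    intro W _ ε
    rw [lintegral_unique]
    simp only [Finset.univ_eq_empty, Finset.sum_empty, pow_zero, neg_zero, zero_div, sub_zero,
      Real.exp_zero, mul_one, ENNReal.ofReal_one]
    have : (volume : Measure (Fin 0 → ℝ)) Set.univ = 1 := by
      rw [volume_pi, Measure.pi_of_empty]; simp
    rw [this, mul_one, potDens]
    split_ifs
    · simp
    · exact zero_le
  | succ n ih =>
    intro W hW ε
    obtain ⟨e, ε, rfl⟩ : ∃ e ε', ε = Fin.cons e ε' := ⟨ε 0, Fin.tail ε, (Fin.cons_self_tail ε).symm⟩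
    set w : Fin n → ℝ := fun j => W 0 j.succ with hw
    set W' : Fin n → Fin n → ℝ := fun i j => W i.succ j.succ with hW'
    have h1 : ∫⁻ β, potDens W (Fin.cons e ε) β =
        ∫⁻ p : (Fin n → ℝ) × ℝ, potDens W (Fin.cons e ε) (Fin.cons p.2 p.1) := by
      have hA := (volume_preserving_piFinSuccAbove (fun _ : Fin (n + 1) => ℝ) 0).symm
      rw [← hA.lintegral_comp_emb (MeasurableEquiv.measurableEmbedding _)]
      have hB := (Measure.measurePreserving_swap (μ := (volume : Measure (Fin n → ℝ)))
        (ν := (volume : Measure ℝ)))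
      rw [← Measure.volume_eq_prod, ← Measure.volume_eq_prod] at hB
      rw [← hB.lintegral_comp_emb (MeasurableEquiv.prodComm.measurableEmbedding)]
      refine lintegral_congr fun p => ?_
      congr 1
      ext i
      refine Fin.cases ?_ (fun i => ?_) i
      · simp [MeasurableEquiv.piFinSuccAbove, Fin.insertNthEquiv]
      · simp [MeasurableEquiv.piFinSuccAbove, Fin.insertNthEquiv]
    rw [h1, Measure.volume_eq_prod]
    refine (lintegral_prod_le _).trans ?_
    have h2 : ∀ β : Fin n → ℝ, ∫⁻ b, potDens W (Fin.cons e ε) (Fin.cons b β) ≤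
        ENNReal.ofReal (√(2 * π) * Real.exp (-e - W 0 0 / 2)) *
          potDens W' (fun i => ε i + w i) β := by
      intro β
      refine (lintegral_mono fun b => potDens_cons_le W b β hW e ε).trans ?_
      rw [← hw, ← hW']
      by_cases hP : (schro W' β).PosDef
      · simp only [if_pos hP]
        rw [lintegral_const_mul' _ _ ENNReal.ofReal_ne_top,
          lintegral_sub_right_eq_self (fun y => rigDens _ y)]
        refine (mul_le_mul_right (lintegral_rigDens_le _) _).trans ?_
        rw [potDens, if_pos hP, ← ENNReal.ofReal_mul (by positivity),
          ← ENNReal.ofReal_mul (by positivity)]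
        refine ENNReal.ofReal_le_ofReal (le_of_eq ?_)
        have hs : ((schro W' β)⁻¹).transpose = (schro W' β)⁻¹ := by
          have := hP.inv.isHermitian
          rwa [Matrix.IsHermitian, Matrix.conjTranspose_eq_transpose_of_trivial] at this
        have hq : (fun i => ε i + w i) ⬝ᵥ (schro W' β)⁻¹.mulVec (fun i => ε i + w i) =
            ε ⬝ᵥ (schro W' β)⁻¹.mulVec ε + w ⬝ᵥ (schro W' β)⁻¹.mulVec w +
              2 * (w ⬝ᵥ (schro W' β)⁻¹.mulVec ε) := by
          have h3 : ε ⬝ᵥ (schro W' β)⁻¹.mulVec w = w ⬝ᵥ (schro W' β)⁻¹.mulVec ε := by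
            rw [Matrix.dotProduct_mulVec, ← Matrix.mulVec_transpose, hs, dotProduct_comm]
          change (ε + w) ⬝ᵥ (schro W' β)⁻¹.mulVec (ε + w) = _
          rw [Matrix.mulVec_add, add_dotProduct, dotProduct_add, dotProduct_add, h3]
          ring
        rw [hq]
        have : ∀ A B C D d s : ℝ, A + B = C + D → Real.exp A / d * (s * Real.exp B) =
            s * Real.exp C * (Real.exp D / d) := by
          intro A B C D d s h
          have : Real.exp A * Real.exp B = Real.exp C * Real.exp D := by
            rw [← Real.exp_add, ← Real.exp_add, h]
          linear_combination (s / d) * this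
        apply this
        ring
      · simp [if_neg hP]
    refine (lintegral_mono h2).trans ?_
    rw [lintegral_const_mul' _ _ ENNReal.ofReal_ne_top]
    refine (mul_le_mul_right (ih W' (fun i j => hW _ _) _) _).trans ?_
    rw [← ENNReal.ofReal_mul (by positivity)]
    refine ENNReal.ofReal_le_ofReal (le_of_eq ?_)
    have hsum : ∑ i, ∑ j, W i j = W 0 0 + 2 * ∑ j, w j + ∑ i, ∑ j, W' i j := by
      simp only [Fin.sum_univ_succ, Finset.sum_add_distrib, hw, hW']
      rw [Finset.sum_congr rfl fun (i : Fin n) _ => hW i.succ 0]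
      ring
    rw [hsum, Fin.sum_univ_succ]
    simp only [Fin.cons_zero, Fin.cons_succ, Finset.sum_add_distrib]
    have : ∀ A B C s t : ℝ, A + B = C → s * Real.exp A * (t * Real.exp B) =
        t * s * Real.exp C := by
      intro A B C s t h
      rw [← h, Real.exp_add]; ring
    rw [pow_succ]
    apply this
    ring

/-! ### The normalisation bound -/

lemma lintegral_potDens_le {W : V → V → ℝ} (hW : ∀ i j, W i j = W j i) (ε : V → ℝ) :
    ∫⁻ β, potDens W ε β ≤
      ENNReal.ofReal (√(2 * π) ^ Fintype.card V *
        Real.exp (-(∑ i, ∑ j, W i j) / 2 - ∑ i, ε i)) := by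
  set n := Fintype.card V with hn
  set f : Fin n ≃ V := (Fintype.equivFin V).symm with hf
  have hA := volume_measurePreserving_piCongrLeft (fun _ : V => ℝ) f
  rw [← hA.lintegral_comp_emb (MeasurableEquiv.measurableEmbedding _)]
  have hval : ∀ (β : Fin n → ℝ) (i : Fin n),
      (MeasurableEquiv.piCongrLeft (fun _ : V => ℝ) f) β (f i) = β i := fun β i => by
    rw [MeasurableEquiv.coe_piCongrLeft, Equiv.piCongrLeft_apply_apply]
  have key : ∀ β : Fin n → ℝ,
      potDens W ε ((MeasurableEquiv.piCongrLeft (fun _ : V => ℝ) f) β) =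
        potDens (fun i j => W (f i) (f j)) (fun i => ε (f i)) β := by
    intro β
    set γ := (MeasurableEquiv.piCongrLeft (fun _ : V => ℝ) f) β with hγ
    have hs : schro (fun i j => W (f i) (f j)) β = (schro W γ).submatrix f f := by
      ext i j
      simp [schro, Matrix.diagonal_apply, hγ, hval]
    have hPD : (schro (fun i j => W (f i) (f j)) β).PosDef ↔ (schro W γ).PosDef := by
      constructor
      · intro h
        have h2 := h.submatrix (e := f.symm) f.symm.injective
        rw [hs, Matrix.submatrix_submatrix] at h2
        simpa using h2
      · intro h
        rw [hs]
        exact h.submatrix f.injective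
    have hdet : (schro (fun i j => W (f i) (f j)) β).det = (schro W γ).det := by
      rw [hs, Matrix.det_submatrix_equiv_self]
    have hsum : ∑ i, γ i = ∑ i, β i := by
      rw [← Equiv.sum_comp f]
      exact Finset.sum_congr rfl fun i _ => hval β i
    have hq : (fun i => ε (f i)) ⬝ᵥ (schro (fun i j => W (f i) (f j)) β)⁻¹.mulVec
        (fun i => ε (f i)) = ε ⬝ᵥ (schro W γ)⁻¹.mulVec ε := by
      rw [hs, Matrix.inv_submatrix_equiv]
      simp only [dotProduct, Matrix.mulVec, Matrix.submatrix_apply]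
      rw [← Equiv.sum_comp f]
      refine Finset.sum_congr rfl fun i _ => ?_
      congr 1
      exact Equiv.sum_comp f fun j => (schro W γ)⁻¹ (f i) j * ε j
    unfold potDens
    simp only [hPD, hdet, hsum, hq]
  simp only [key]
  refine (lintegral_potDens_fin n _ (fun i j => hW _ _) _).trans (le_of_eq ?_)
  have h1 : ∑ i, ε (f i) = ∑ i, ε i := Equiv.sum_comp f ε
  have h2 : ∑ i, ∑ j, W (f i) (f j) = ∑ i, ∑ j, W i j := by
    rw [← Equiv.sum_comp f]
    exact Finset.sum_congr rfl fun i _ => Equiv.sum_comp f fun j => W (f i) j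
  rw [h1, h2]

/-- The random potential as a function of the field `t`: the one for which
`schro W β` maps `exp t` to `ε`. -/
noncomputable def potOf (W : V → V → ℝ) (ε t : V → ℝ) (i : V) : ℝ :=
  ∑ k, W i k * Real.exp (t k - t i) + ε i * Real.exp (-t i)

lemma schro_potOf (W : V → V → ℝ) (ε t : V → ℝ) :
    schro W (potOf W ε t) = Matrix.diagonal (fun i => Real.exp (-t i)) * pinLap W ε t *
      Matrix.diagonal (fun i => Real.exp (-t i)) := by
  ext i j
  rw [Matrix.mul_diagonal, Matrix.diagonal_mul]
  simp only [schro, pinLap, lap, epsHat, Matrix.sub_apply, Matrix.add_apply, Matrix.of_apply,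
    Matrix.diagonal_apply]
  have hE : Real.exp (-t i) * (W i j * Real.exp (t i + t j)) * Real.exp (-t j) = W i j := by
    rw [show Real.exp (-t i) * (W i j * Real.exp (t i + t j)) * Real.exp (-t j) =
      W i j * (Real.exp (-t i) * Real.exp (t i + t j) * Real.exp (-t j)) by ring,
      ← Real.exp_add, ← Real.exp_add]
    simp
  by_cases h : i = j
  · subst h
    simp only [if_true]
    rw [mul_add, add_mul, mul_sub, sub_mul, hE, Finset.mul_sum, Finset.sum_mul]
    have h1 : ∑ k, Real.exp (-t i) * (W i k * Real.exp (t i + t k)) * Real.exp (-t i) =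
        ∑ k, W i k * Real.exp (t k - t i) := by
      refine Finset.sum_congr rfl fun k _ => ?_
      rw [show Real.exp (-t i) * (W i k * Real.exp (t i + t k)) * Real.exp (-t i) =
        W i k * (Real.exp (-t i) * Real.exp (t i + t k) * Real.exp (-t i)) by ring,
        ← Real.exp_add, ← Real.exp_add]
      congr 2; ring
    have h2 : Real.exp (-t i) * (ε i * Real.exp (t i)) * Real.exp (-t i) =
        ε i * Real.exp (-t i) := by
      rw [show Real.exp (-t i) * (ε i * Real.exp (t i)) * Real.exp (-t i) =
        ε i * (Real.exp (-t i) * Real.exp (t i)) * Real.exp (-t i) by ring, ← Real.exp_add]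
      simp
    rw [h1, h2, potOf]; ring
  · simp only [if_neg h]
    rw [add_zero, zero_sub, zero_sub, mul_neg, neg_mul, hE]

lemma schro_potOf_mulVec (W : V → V → ℝ) (ε t : V → ℝ) :
    (schro W (potOf W ε t)).mulVec (fun i => Real.exp (t i)) = ε := by
  ext i
  simp only [schro, Matrix.sub_mulVec, Pi.sub_apply, Matrix.mulVec_diagonal]
  simp only [Matrix.mulVec, dotProduct, Matrix.of_apply, potOf]
  rw [add_mul, Finset.sum_mul, mul_assoc, ← Real.exp_add]
  simp only [neg_add_cancel, Real.exp_zero, mul_one]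
  have : ∀ k, W i k * Real.exp (t k - t i) * Real.exp (t i) = W i k * Real.exp (t k) := fun k => by
    rw [mul_assoc, ← Real.exp_add, sub_add_cancel]
  simp only [this]; ring

lemma schro_potOf_posDef {W : V → V → ℝ} (hW : IsNet W) {ε : V → ℝ} (hε : ∀ i, 0 ≤ ε i)
    (hε' : ∃ i, 0 < ε i) (t : V → ℝ) : (schro W (potOf W ε t)).PosDef := by
  have hM := pinLap_posDef hW hε hε' t
  rw [schro_potOf]
  have hD : IsUnit (Matrix.diagonal fun i => Real.exp (-t i)) := by
    rw [Matrix.isUnit_iff_isUnit_det, Matrix.det_diagonal]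
    exact (Finset.prod_pos fun i _ => Real.exp_pos _).ne'.isUnit
  have := (Matrix.IsUnit.posDef_star_left_conjugate_iff hD (x := pinLap W ε t)).2 hM
  rwa [Matrix.star_eq_conjTranspose, Matrix.conjTranspose_eq_transpose_of_trivial,
    Matrix.diagonal_transpose] at this

lemma schro_potOf_det (W : V → V → ℝ) (ε t : V → ℝ) :
    (pinLap W ε t).det = Real.exp (∑ i, t i) ^ 2 * (schro W (potOf W ε t)).det := by
  rw [schro_potOf, Matrix.det_mul, Matrix.det_mul, Matrix.det_diagonal, ← Real.exp_sum,
    Finset.sum_neg_distrib, Real.exp_neg]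
  have := Real.exp_pos (∑ i, t i)
  field_simp

lemma potOf_injective {W : V → V → ℝ} (hW : IsNet W) {ε : V → ℝ} (hε : ∀ i, 0 ≤ ε i)
    (hε' : ∃ i, 0 < ε i) : Function.Injective (potOf W ε) := by
  intro t t' h
  have h1 := schro_potOf_mulVec W ε t
  have h2 := schro_potOf_mulVec W ε t'
  rw [← h] at h2
  have hd : IsUnit (schro W (potOf W ε t)).det :=
    (schro_potOf_posDef hW hε hε' t).det_pos.ne'.isUnit
  have h3 : (fun i => Real.exp (t i)) = fun i => Real.exp (t' i) := by
    have h4 := congrArg (schro W (potOf W ε t))⁻¹.mulVec (h1.trans h2.symm)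
    rwa [Matrix.mulVec_mulVec, Matrix.mulVec_mulVec, Matrix.nonsing_inv_mul _ hd,
      Matrix.one_mulVec, Matrix.one_mulVec] at h4
  ext i
  exact Real.exp_injective (congrFun h3 i)

/-- The Jacobian matrix of `potOf`. -/
noncomputable def potJac (W : V → V → ℝ) (ε t : V → ℝ) : Matrix V V ℝ :=
  -(Matrix.diagonal (fun i => Real.exp (-t i)) * schro W (potOf W ε t) *
    Matrix.diagonal (fun i => Real.exp (t i)))

lemma hasFDerivAt_potOf (W : V → V → ℝ) (ε t : V → ℝ) :
    HasFDerivAt (potOf W ε) (LinearMap.toContinuousLinearMap (Matrix.toLin' (potJac W ε t))) t := by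
  rw [hasFDerivAt_pi']
  intro i
  have hp : ∀ k, HasFDerivAt (fun t : V → ℝ => t k)
      (ContinuousLinearMap.proj k : (V → ℝ) →L[ℝ] ℝ) t := fun k => hasFDerivAt_apply k t
  let pr : V → (V → ℝ) →L[ℝ] ℝ := fun k => ContinuousLinearMap.proj k
  have hk : ∀ k, HasFDerivAt (fun t : V → ℝ => W i k * Real.exp (t k - t i))
      (W i k • (Real.exp (t k - t i) • (pr k - pr i))) t := fun k =>
    ((hp k).sub (hp i)).exp.const_mul (W i k)
  have hi : HasFDerivAt (fun t : V → ℝ => ε i * Real.exp (-t i))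
      (ε i • (Real.exp (-t i) • (-pr i))) t := (hp i).neg.exp.const_mul (ε i)
  have h1 : HasFDerivAt (fun t : V → ℝ => potOf W ε t i)
      (∑ k, W i k • (Real.exp (t k - t i) • (pr k - pr i)) +
        ε i • (Real.exp (-t i) • (-pr i))) t :=
    (HasFDerivAt.fun_sum fun k _ => hk k).add hi
  refine h1.congr_fderiv ?_
  ext v
  simp only [add_apply, sum_apply,
    smul_apply, sub_apply, neg_apply,
    ContinuousLinearMap.proj_apply, ContinuousLinearMap.comp_apply, pr,
    LinearMap.coe_toContinuousLinearMap', Matrix.toLin'_apply, smul_eq_mul]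
  have h2 : (potJac W ε t).mulVec v i = -(Real.exp (-t i) *
      (potOf W ε t i * (Real.exp (t i) * v i) - ∑ k, W i k * (Real.exp (t k) * v k))) := by
    unfold potJac
    rw [Matrix.neg_mulVec, Pi.neg_apply, ← Matrix.mulVec_mulVec, ← Matrix.mulVec_mulVec,
      Matrix.mulVec_diagonal]
    congr 2
    simp only [schro, Matrix.sub_mulVec, Pi.sub_apply, Matrix.mulVec_diagonal]
    simp only [Matrix.mulVec, dotProduct, Matrix.of_apply, Matrix.diagonal_apply, ite_mul, zero_mul,
      Finset.sum_ite_eq, Finset.mem_univ, if_true]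
  rw [h2]
  have h3 : Real.exp (-t i) * Real.exp (t i) = 1 := by rw [← Real.exp_add]; simp
  have h4 : -(Real.exp (-t i) *
      (potOf W ε t i * (Real.exp (t i) * v i) - ∑ k, W i k * (Real.exp (t k) * v k))) =
      -(potOf W ε t i * v i) + ∑ k, W i k * (Real.exp (-t i) * Real.exp (t k)) * v k := by
    rw [mul_sub, Finset.mul_sum]
    have : ∀ k, Real.exp (-t i) * (W i k * (Real.exp (t k) * v k)) =
      W i k * (Real.exp (-t i) * Real.exp (t k)) * v k := fun k => by ring
    simp only [this]
    linear_combination (-(potOf W ε t i * v i)) * h3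
  rw [h4, potOf, add_mul, Finset.sum_mul, neg_add, ← Finset.sum_neg_distrib, add_right_comm,
    ← Finset.sum_add_distrib]
  congr 1
  · refine Finset.sum_congr rfl fun k _ => ?_
    rw [← Real.exp_add, show -t i + t k = t k - t i by ring]; ring
  · ring

lemma abs_det_potJac {W : V → V → ℝ} (hW : IsNet W) {ε : V → ℝ} (hε : ∀ i, 0 ≤ ε i)
    (hε' : ∃ i, 0 < ε i) (t : V → ℝ) :
    |(LinearMap.toContinuousLinearMap (Matrix.toLin' (potJac W ε t))).det| =
      (schro W (potOf W ε t)).det := by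
  have : (LinearMap.toContinuousLinearMap (Matrix.toLin' (potJac W ε t))).det =
      (potJac W ε t).det := by
    rw [ContinuousLinearMap.det, LinearMap.coe_toContinuousLinearMap, LinearMap.det_toLin']
  rw [this, potJac, Matrix.det_neg, abs_mul, abs_pow, abs_neg, abs_one, one_pow, one_mul,
    Matrix.det_mul, Matrix.det_mul, Matrix.det_diagonal, Matrix.det_diagonal, ← Real.exp_sum,
    ← Real.exp_sum, Finset.sum_neg_distrib, mul_right_comm, ← Real.exp_add, neg_add_cancel,
    Real.exp_zero, one_mul, abs_of_pos (schro_potOf_posDef hW hε hε' t).det_pos]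

/-- The exponent in the density of the random potential equals, up to constants, twice the energy
and pinning terms of the field `t`. -/
lemma sum_potOf {W : V → V → ℝ} (hW : IsNet W) (ε t : V → ℝ) :
    ∑ i, potOf W ε t i + ε ⬝ᵥ (fun i => Real.exp (t i)) =
      2 * energy W t + ∑ i, ∑ j, W i j + 2 * ∑ i, ε i * (Real.cosh (t i) - 1) +
        2 * ∑ i, ε i := by
  have h1 : ∑ i, ∑ k, W i k * Real.exp (t k - t i) =
      ∑ i, ∑ k, W i k * Real.exp (t i - t k) := by
    rw [Finset.sum_comm]
    refine Finset.sum_congr rfl fun i _ => Finset.sum_congr rfl fun k _ => ?_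
    rw [hW.symm]
  have h2 : ∑ i, ∑ k, W i k * Real.exp (t k - t i) = ∑ i, ∑ k, W i k * Real.cosh (t i - t k) := by
    have : ∑ i, ∑ k, W i k * Real.cosh (t i - t k) =
        (∑ i, ∑ k, W i k * Real.exp (t i - t k) + ∑ i, ∑ k, W i k * Real.exp (t k - t i)) / 2 := by
      simp only [← Finset.sum_add_distrib, Finset.sum_div]
      refine Finset.sum_congr rfl fun i _ => Finset.sum_congr rfl fun k _ => ?_
      rw [Real.cosh_eq, neg_sub]; ring
    rw [this, ← h1]; ring
  simp only [potOf, energy, Finset.sum_add_distrib, h2, dotProduct, mul_sub, Finset.sum_sub_distrib,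
    mul_one]
  have h3 : ∑ i, ε i * Real.cosh (t i) =
      (∑ i, ε i * Real.exp (-t i) + ∑ i, ε i * Real.exp (t i)) / 2 := by
    simp only [← Finset.sum_add_distrib, Finset.sum_div]
    exact Finset.sum_congr rfl fun i _ => by rw [Real.cosh_eq]; ring
  rw [h3]; ring

/-- The normalisation bound for the sigma model: the marginal density of the field `t` has total
mass at most `(2π)^{|V|/2}`, obtained by passing to the random potential `potOf`. -/
lemma lintegral_margT_le {W : V → V → ℝ} (hW : IsNet W) {ε : V → ℝ} (hε : ∀ i, 0 ≤ ε i)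
    (hε' : ∃ i, 0 < ε i) :
    ∫⁻ t, ENNReal.ofReal (margT W ε t) ≤ ENNReal.ofReal (√(2 * π) ^ Fintype.card V) := by
  set C := (∑ i, ∑ j, W i j) / 2 + ∑ i, ε i with hC
  have hpt : ∀ t, ENNReal.ofReal (margT W ε t) = ENNReal.ofReal (Real.exp C) *
      (ENNReal.ofReal |(LinearMap.toContinuousLinearMap (Matrix.toLin' (potJac W ε t))).det| *
        potDens W ε (potOf W ε t)) := by
    intro t
    have hP := schro_potOf_posDef hW hε hε' t
    have hd := hP.det_pos
    have hu : IsUnit (schro W (potOf W ε t)).det := hd.ne'.isUnit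
    have hinv : (schro W (potOf W ε t))⁻¹.mulVec ε = fun i => Real.exp (t i) := by
      nth_rewrite 2 [← schro_potOf_mulVec W ε t]
      rw [Matrix.mulVec_mulVec, Matrix.nonsing_inv_mul _ hu, Matrix.one_mulVec]
    rw [abs_det_potJac hW hε hε', potDens, if_pos hP, ← ENNReal.ofReal_mul hd.le,
      ← ENNReal.ofReal_mul (Real.exp_pos _).le]
    congr 1
    rw [hinv, margT, schro_potOf_det, Real.sqrt_mul (sq_nonneg _), Real.sqrt_sq (Real.exp_pos _).le,
      show ∀ a b : ℝ, -a / 2 - b / 2 = -(a + b) / 2 from fun a b => by ring, sum_potOf hW]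
    have hs := Real.sqrt_pos.2 hd
    have hss := Real.mul_self_sqrt hd.le
    set s := √(schro W (potOf W ε t)).det
    rw [← hss]
    have : ∀ A B D E F : ℝ, A + B + D + E = C + F →
        Real.exp A * Real.exp B * Real.exp D * (Real.exp E * s) =
        Real.exp C * (s * s * (Real.exp F / s)) := by
      intro A B D E F h
      have h2 : Real.exp A * Real.exp B * Real.exp D * Real.exp E = Real.exp C * Real.exp F := by
        rw [← Real.exp_add, ← Real.exp_add, ← Real.exp_add, h, Real.exp_add]
      field_simp
      linear_combination h2
    apply this
    rw [hC]; ring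
  simp only [hpt]
  rw [lintegral_const_mul' _ _ ENNReal.ofReal_ne_top]
  have hcv := lintegral_image_eq_lintegral_abs_det_fderiv_mul (volume : Measure (V → ℝ))
    MeasurableSet.univ (fun t _ => (hasFDerivAt_potOf W ε t).hasFDerivWithinAt)
    (potOf_injective hW hε hε').injOn (potDens W ε)
  rw [Measure.restrict_univ] at hcv
  rw [← hcv]
  refine (mul_le_mul_right ((setLIntegral_le_lintegral _ _).trans
    (lintegral_potDens_le hW.symm ε)) _).trans ?_
  rw [← ENNReal.ofReal_mul (Real.exp_pos _).le]
  refine ENNReal.ofReal_le_ofReal (le_of_eq ?_)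
  rw [mul_left_comm, ← Real.exp_add, hC]
  rw [show (∑ i, ∑ j, W i j) / 2 + ∑ i, ε i + (-(∑ i, ∑ j, W i j) / 2 - ∑ i, ε i) = 0 by ring]
  simp

/-! ### Integrating out the constant mode -/

/-- A rapidly decreasing density used to fix the value of the field at one vertex. With this
choice, `freeDens` times `gaugeDens (u x) * exp (u x)` is the density of the sigma model pinned at
`x` alone with strength `1`. -/
noncomputable def gaugeDens (T : ℝ) : ℝ := Real.exp (-T / 2) * Real.exp (-(Real.cosh T - 1))

lemma gaugeDens_pos (T : ℝ) : 0 < gaugeDens T := by unfold gaugeDens; positivity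

lemma continuous_gaugeDens : Continuous gaugeDens := by unfold gaugeDens; fun_prop

lemma integrable_gaugeDens : Integrable gaugeDens := by
  have hg := (integrable_exp_neg_mul_sq (b := 1 / 4) (by norm_num)).const_mul (Real.exp (1 / 4))
  refine hg.mono' continuous_gaugeDens.aestronglyMeasurable
    (Filter.Eventually.of_forall fun T => ?_)
  rw [Real.norm_eq_abs, abs_of_pos (gaugeDens_pos T), gaugeDens, ← Real.exp_add, ← Real.exp_add,
    Real.exp_le_exp]
  nlinarith [sq_div_two_le_cosh_sub_one T, sq_nonneg (T + 1)]

/-- The total mass of `gaugeDens`; a universal constant. -/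
noncomputable def gaugeMass : ℝ := ∫ T, gaugeDens T

lemma gaugeMass_pos : 0 < gaugeMass :=
  integral_pos_of_integrable_nonneg_nonzero continuous_gaugeDens integrable_gaugeDens
    (fun T => (gaugeDens_pos T).le) (gaugeDens_pos 0).ne'

lemma lintegral_gaugeDens : ∫⁻ T, ENNReal.ofReal (gaugeDens T) = ENNReal.ofReal gaugeMass :=
  (ofReal_integral_eq_lintegral_ofReal integrable_gaugeDens
    (Filter.Eventually.of_forall fun T => (gaugeDens_pos T).le)).symm

/-- Integration over all fields, decomposed into fields modulo constants and the constant;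
fields modulo constants are integrated with the help of a weight on `u x`. -/
lemma lintegral_gauge (x : V) {f : (V → ℝ) → ENNReal} (hf : Measurable f) :
    ENNReal.ofReal gaugeMass * ∫⁻ u, f u =
      ∫⁻ u : V → ℝ, ENNReal.ofReal (gaugeDens (u x)) * ∫⁻ T : ℝ, f (fun i => u i + T) := by
  have hk : Measurable fun T : ℝ => ENNReal.ofReal (gaugeDens T) :=
    ENNReal.measurable_ofReal.comp continuous_gaugeDens.measurable
  have h1 : ∀ u : V → ℝ, ENNReal.ofReal (gaugeDens (u x)) * ∫⁻ T : ℝ, f (fun i => u i + T) =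
      ∫⁻ T : ℝ, ENNReal.ofReal (gaugeDens (u x)) * f (fun i => u i + T) := fun u =>
    (lintegral_const_mul' _ _ ENNReal.ofReal_ne_top).symm
  simp only [h1]
  rw [lintegral_lintegral_swap]
  · have h2 : ∀ T : ℝ, ∫⁻ u : V → ℝ, ENNReal.ofReal (gaugeDens (u x)) * f (fun i => u i + T) =
        ∫⁻ u : V → ℝ, ENNReal.ofReal (gaugeDens (u x - T)) * f u := by
      intro T
      rw [← lintegral_add_right_eq_self (fun u : V → ℝ =>
        ENNReal.ofReal (gaugeDens (u x - T)) * f u) (fun _ => T)]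
      refine lintegral_congr fun u => ?_
      simp only [Pi.add_apply, add_sub_cancel_right]
      rfl
    simp only [h2]
    rw [lintegral_lintegral_swap]
    · rw [← lintegral_const_mul' _ _ ENNReal.ofReal_ne_top]
      refine lintegral_congr fun u => ?_
      rw [lintegral_mul_const (f := fun T => ENNReal.ofReal (gaugeDens (u x - T))) _
        (hk.comp (measurable_const.sub measurable_id)),
        ← lintegral_gaugeDens,
        lintegral_sub_left_eq_self (fun T => ENNReal.ofReal (gaugeDens T)) (u x)]
    · refine Measurable.aemeasurable ?_
      refine (hk.comp ?_).mul (hf.comp measurable_snd)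
      exact ((measurable_pi_apply x).comp measurable_snd).sub measurable_fst
  · refine Measurable.aemeasurable ?_
    refine (hk.comp ((measurable_pi_apply x).comp measurable_fst)).mul (hf.comp ?_)
    exact measurable_pi_lambda _ fun i =>
      ((measurable_pi_apply i).comp measurable_fst).add measurable_snd

/-- For shift-invariant observables the vertex carrying the weight may be moved. -/
lemma lintegral_gauge_comm (x y : V) {g : (V → ℝ) → ENNReal} (hg : Measurable g)
    (hinv : ∀ (u : V → ℝ) (T : ℝ), g (fun i => u i + T) = g u) :
    ∫⁻ u : V → ℝ, ENNReal.ofReal (gaugeDens (u x)) * g u =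
      ∫⁻ u : V → ℝ, ENNReal.ofReal (gaugeDens (u y)) * g u := by
  have hk : Measurable fun T : ℝ => ENNReal.ofReal (gaugeDens T) :=
    ENNReal.measurable_ofReal.comp continuous_gaugeDens.measurable
  have h := lintegral_gauge x (f := fun u => ENNReal.ofReal (gaugeDens (u y)) * g u)
    ((hk.comp (measurable_pi_apply y)).mul hg)
  simp only [hinv] at h
  have h2 : ∀ u : V → ℝ, ∫⁻ T : ℝ, ENNReal.ofReal (gaugeDens (u y + T)) * g u =
      ENNReal.ofReal gaugeMass * g u := fun u => by
    rw [lintegral_mul_const (f := fun T => ENNReal.ofReal (gaugeDens (u y + T))) _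
        (hk.comp (measurable_const.add measurable_id)),
      lintegral_add_left_eq_self (fun T => ENNReal.ofReal (gaugeDens T)) (u y),
      lintegral_gaugeDens]
  simp only [h2, mul_left_comm _ (ENNReal.ofReal gaugeMass)] at h
  rw [lintegral_const_mul' _ _ ENNReal.ofReal_ne_top] at h
  exact ((ENNReal.mul_right_inj (ENNReal.ofReal_pos.2 gaugeMass_pos).ne'
    ENNReal.ofReal_ne_top).1 h).symm

/-- The density of the `t`-field without pinning; it does not depend on `x`. -/
noncomputable def freeDens (W : V → V → ℝ) (x : V) (u : V → ℝ) : ℝ :=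
  Real.exp (-∑ i, u i) * Real.exp (-energy W u) * √(cof W x u)

lemma freeDens_nonneg (W : V → V → ℝ) (x : V) (u : V → ℝ) : 0 ≤ freeDens W x u := by
  unfold freeDens; positivity

lemma continuous_freeDens (W : V → V → ℝ) (x : V) : Continuous (freeDens W x) := by
  have := continuous_cof W x
  have := continuous_energy W
  unfold freeDens
  fun_prop

lemma sqrt_cof_shift (W : V → V → ℝ) (x : V) (u : V → ℝ) (T : ℝ) :
    √(cof W x (fun i => u i + T)) = Real.exp ((Fintype.card V - 1) * T) * √(cof W x u) := by
  have hN : 1 ≤ Fintype.card V := Fintype.card_pos_iff.2 ⟨x⟩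
  rw [cof_shift, Real.sqrt_mul (by positivity)]
  congr 1
  rw [show 2 * T = T + T by ring, Real.exp_add, mul_pow, Real.sqrt_mul_self (by positivity),
    ← Real.exp_nat_mul, Nat.cast_sub hN, Nat.cast_one]

lemma freeDens_shift (W : V → V → ℝ) (x : V) (u : V → ℝ) (T : ℝ) :
    freeDens W x (fun i => u i + T) = Real.exp (-T) * freeDens W x u := by
  unfold freeDens
  rw [sqrt_cof_shift, energy_add_const]
  simp only [Finset.sum_add_distrib, Finset.sum_const, Finset.card_univ, nsmul_eq_mul]
  have : Real.exp (-(∑ i, u i + Fintype.card V * T)) * Real.exp ((Fintype.card V - 1) * T) =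
      Real.exp (-T) * Real.exp (-∑ i, u i) := by
    rw [← Real.exp_add, ← Real.exp_add]; congr 1; ring
  linear_combination (Real.exp (-energy W u) * √(cof W x u)) * this

/-- The normalisation bound for pinning at the single vertex `x`. -/
lemma lintegral_freeDens_self {W : V → V → ℝ} (hW : IsNet W) (x : V) :
    ∫⁻ u : V → ℝ, ENNReal.ofReal (gaugeDens (u x)) *
      ENNReal.ofReal (freeDens W x u * Real.exp (u x)) ≤
      ENNReal.ofReal (√(2 * π) ^ Fintype.card V) := by
  refine le_trans (le_of_eq ?_) (lintegral_margT_le hW (singlePin_nonneg x) (singlePin_pos x))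
  refine lintegral_congr fun u => ?_
  rw [← ENNReal.ofReal_mul (gaugeDens_pos _).le]
  congr 1
  rw [margT, pinLap_single_det, Real.sqrt_mul (Real.exp_pos _).le]
  have h1 : ∑ i, singlePin x 1 i * (Real.cosh (u i) - 1) = Real.cosh (u x) - 1 := by
    simp [singlePin]
  have h2 : √(Real.exp (u x)) = Real.exp (-u x / 2) * Real.exp (u x) := by
    rw [← Real.exp_add, Real.sqrt_eq_rpow, ← Real.exp_mul]; congr 1; ring
  rw [h1, h2, freeDens, gaugeDens]
  ring

/-- The normalisation bound with the factor `exp (u y)` while the gauge weight sits at `x`: the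
integrand is invariant under constant shifts, so the weight can be moved to `y`. -/
lemma lintegral_freeDens_le {W : V → V → ℝ} (hW : IsNet W) (x y : V) :
    ∫⁻ u : V → ℝ, ENNReal.ofReal (gaugeDens (u x)) *
      ENNReal.ofReal (freeDens W x u * Real.exp (u y)) ≤
      ENNReal.ofReal (√(2 * π) ^ Fintype.card V) := by
  rw [lintegral_gauge_comm x y (g := fun u => ENNReal.ofReal (freeDens W x u * Real.exp (u y)))]
  · have : freeDens W x = freeDens W y := by
      ext u; unfold freeDens; rw [cof_eq hW x y]
    rw [this]
    exact lintegral_freeDens_self hW y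
  · exact ENNReal.measurable_ofReal.comp
      ((continuous_freeDens W x).mul (by fun_prop)).measurable
  · intro u T
    rw [freeDens_shift, Real.exp_add]
    congr 1
    have : Real.exp (-T) * Real.exp T = 1 := by rw [← Real.exp_add]; simp
    linear_combination (freeDens W x u * Real.exp (u y)) * this

/-- Along a constant shift `T` the limiting density is, in the variable `S * exp T`, a Gamma
density of shape `1 / 2`; the first factor in the second line is the Jacobian. -/
lemma limDens_shift {W : V → V → ℝ} {p : V → ℝ} (x y : V) (u : V → ℝ) (T : ℝ)
    (hS : 0 < ∑ i, p i * Real.exp (u i)) :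
    ENNReal.ofReal (limDens W p x y (fun i => u i + T)) =
      ENNReal.ofReal (freeDens W x u * Real.exp (u x + u y) / ∑ i, p i * Real.exp (u i)) *
      (ENNReal.ofReal |(∑ i, p i * Real.exp (u i)) * Real.exp T| *
        rigDens 0 ((∑ i, p i * Real.exp (u i)) * Real.exp T)) := by
  set S := ∑ i, p i * Real.exp (u i) with hSdef
  have hfd := freeDens_nonneg W x u
  have hST : 0 < S * Real.exp T := by positivity
  rw [rigDens, if_pos hST, ← ENNReal.ofReal_mul (abs_nonneg _), ← ENNReal.ofReal_mul (by positivity)]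
  congr 1
  unfold limDens freeDens
  have h1 : ∑ i, p i * Real.exp (u i + T) = S * Real.exp T := by
    rw [hSdef, Finset.sum_mul]; exact Finset.sum_congr rfl fun i _ => by rw [Real.exp_add]; ring
  have h2 : ∑ i, p i * (Real.exp (u i + T) / 2) = S * Real.exp T / 2 := by
    rw [← h1, Finset.sum_div]; exact Finset.sum_congr rfl fun i _ => by ring
  rw [h1, h2, energy_add_const, Real.sqrt_div' _ hST.le, sqrt_cof_shift, abs_of_pos hST]
  simp only [Finset.sum_add_distrib, Finset.sum_const, Finset.card_univ, nsmul_eq_mul]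
  have h3 : Real.exp (-(∑ i, u i + Fintype.card V * T)) * Real.exp ((Fintype.card V - 1) * T) *
      Real.exp (u x + T + (u y + T)) = Real.exp T * Real.exp (-∑ i, u i) * Real.exp (u x + u y) := by
    simp only [← Real.exp_add]; congr 1; ring
  rw [show -(S * Real.exp T + 0 ^ 2 / (S * Real.exp T)) / 2 = -(S * Real.exp T / 2) by simp; ring]
  rw [div_mul_eq_mul_div, eq_div_iff hS.ne']
  linear_combination (Real.exp (-energy W u) * Real.exp (-(S * Real.exp T / 2)) * √(cof W x u) * S /
    √(S * Real.exp T)) * h3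

/-- Integrating out the constant mode and bounding the pinning sum below by its terms at `x`
and `y`, through `p x e^{u x} + p y e^{u y} ≥ min (p x) (p y) e^{(u x + u y) / 2}`. -/
lemma lintegral_limDens_le {W : V → V → ℝ} {p : V → ℝ} (hp : ∀ i, 0 ≤ p i)
    (x : V) {y : V} (hx : 0 < p x) (hy : 0 < p y) :
    ENNReal.ofReal gaugeMass * ∫⁻ u, ENNReal.ofReal (limDens W p x y u) ≤
      ENNReal.ofReal (√(2 * π) * (min (p x) (p y))⁻¹) *
      ∫⁻ u : V → ℝ, ENNReal.ofReal (gaugeDens (u x)) *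
        ENNReal.ofReal (freeDens W x u * Real.exp ((u x + u y) / 2)) := by
  rw [lintegral_gauge x (f := fun u => ENNReal.ofReal (limDens W p x y u))
    (ENNReal.measurable_ofReal.comp (continuous_limDens hp x hy).measurable),
    ← lintegral_const_mul' _ _ ENNReal.ofReal_ne_top]
  refine lintegral_mono fun u => ?_
  rw [mul_left_comm]
  gcongr
  set S := ∑ i, p i * Real.exp (u i) with hSdef
  have hterm : ∀ z, p z * Real.exp (u z) ≤ S := fun z =>
    Finset.single_le_sum (f := fun i => p i * Real.exp (u i))
      (fun i _ => mul_nonneg (hp i) (Real.exp_pos _).le) (Finset.mem_univ z)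
  have hS : 0 < S := lt_of_lt_of_le (by positivity) (hterm x)
  have hm : 0 < min (p x) (p y) := lt_min hx hy
  have hSge : min (p x) (p y) * Real.exp ((u x + u y) / 2) ≤ S := by
    rcases le_total (u x) (u y) with h | h
    · refine le_trans ?_ (hterm y)
      exact mul_le_mul (min_le_right _ _) (Real.exp_le_exp.2 (by linarith)) (Real.exp_pos _).le
        hy.le
    · refine le_trans ?_ (hterm x)
      exact mul_le_mul (min_le_left _ _) (Real.exp_le_exp.2 (by linarith)) (Real.exp_pos _).le
        hx.le
  simp only [limDens_shift x y u _ hS, ← hSdef]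
  rw [lintegral_const_mul' _ _ ENNReal.ofReal_ne_top]
  have hcv := lintegral_image_eq_lintegral_abs_deriv_mul (s := Set.univ)
    (f := fun T => S * Real.exp T) (f' := fun T => S * Real.exp T) MeasurableSet.univ
    (fun T _ => ((Real.hasDerivAt_exp T).const_mul S).hasDerivWithinAt)
    (fun T _ T' _ h => Real.exp_injective (mul_left_cancel₀ hS.ne' h)) (rigDens 0)
  rw [Measure.restrict_univ] at hcv
  rw [← hcv]
  refine (mul_le_mul_right ((setLIntegral_le_lintegral _ _).trans lintegral_rigDens_zero) _).trans ?_
  have hfd := freeDens_nonneg W x u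
  rw [← ENNReal.ofReal_mul (by positivity), ← ENNReal.ofReal_mul (by positivity)]
  refine ENNReal.ofReal_le_ofReal ?_
  have hE : Real.exp (u x + u y) = Real.exp ((u x + u y) / 2) * Real.exp ((u x + u y) / 2) := by
    rw [← Real.exp_add]; congr 1; ring
  have hkey : Real.exp (u x + u y) / S ≤ (min (p x) (p y))⁻¹ * Real.exp ((u x + u y) / 2) := by
    rw [div_le_iff₀ hS, hE]
    have := mul_le_mul_of_nonneg_left hSge
      (mul_nonneg (inv_nonneg.2 hm.le) (Real.exp_pos ((u x + u y) / 2)).le)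
    refine le_trans (le_of_eq ?_) this
    field_simp
  calc freeDens W x u * Real.exp (u x + u y) / S * √(2 * π)
      = √(2 * π) * freeDens W x u * (Real.exp (u x + u y) / S) := by ring
    _ ≤ √(2 * π) * freeDens W x u * ((min (p x) (p y))⁻¹ * Real.exp ((u x + u y) / 2)) := by
        gcongr
    _ = _ := by ring

/-! ### Tilting the field -/

/-- The edge weights divided by `cosh` of the gradient of `h`; these compensate the energy of
the two fields `u + h` and `u - h` against twice the energy of `u`. -/
noncomputable def tiltW (W : V → V → ℝ) (h : V → ℝ) (i j : V) : ℝ := W i j / Real.cosh (h i - h j)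

lemma tiltW_isNet {W : V → V → ℝ} (hW : IsNet W) (h : V → ℝ) : IsNet (tiltW W h) where
  symm i j := by
    unfold tiltW
    rw [hW.symm i j, ← Real.cosh_neg, neg_sub]
  nonneg i j := div_nonneg (hW.nonneg i j) (Real.cosh_pos _).le
  conn i j := Relation.ReflTransGen.mono (fun _ _ hab => div_pos hab (Real.cosh_pos _)) _ _
    (hW.conn i j)

lemma energy_tilt (W : V → V → ℝ) (u h : V → ℝ) :
    energy (tiltW W h) (fun i => u i + h i) + energy (tiltW W h) (fun i => u i - h i) =
      2 * energy W u + ∑ i, ∑ j, (W i j - tiltW W h i j) := by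
  simp only [energy, ← mul_add, ← Finset.sum_add_distrib]
  rw [← mul_assoc, Finset.mul_sum]
  rw [show (2 * (1 / 2) : ℝ) = 1 by norm_num, one_mul, ← Finset.sum_add_distrib]
  refine Finset.sum_congr rfl fun i _ => ?_
  rw [Finset.mul_sum, ← Finset.sum_add_distrib]
  refine Finset.sum_congr rfl fun j _ => ?_
  have h1 : u i + h i - (u j + h j) = (u i - u j) + (h i - h j) := by ring
  have h2 : u i - h i - (u j - h j) = (u i - u j) - (h i - h j) := by ring
  have key : ∀ A B : ℝ, Real.cosh (A + B) + Real.cosh (A - B) = 2 * Real.cosh A * Real.cosh B :=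
    fun A B => by rw [Real.cosh_add, Real.cosh_sub]; ring
  have hT : tiltW W h i j * Real.cosh (h i - h j) = W i j :=
    div_mul_cancel₀ _ (Real.cosh_pos _).ne'
  rw [h1, h2]
  linear_combination (1 / 2) * tiltW W h i j * key (u i - u j) (h i - h j) +
    Real.cosh (u i - u j) * hT

/-- Log-convexity of the spanning tree sums bounds the density at `u` by the geometric mean of
the densities, with tilted weights, at `u + h` and `u - h`. -/
lemma freeDens_sq_le {W : V → V → ℝ} (hW : IsNet W) (x : V) (u h : V → ℝ) {a : V → ℝ}
    (ha0 : ∀ i, 0 < a i) (ha1 : ∀ i, a i ≤ 1) (ha : ∀ i j, a i * W i j ≤ tiltW W h i j) :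
    freeDens W x u ^ 2 ≤ Real.exp (∑ i, ∑ j, (W i j - tiltW W h i j)) / (∏ i, a i) *
      (freeDens (tiltW W h) x (u + h) * freeDens (tiltW W h) x (u - h)) := by
  have hc := cof_log_convex (tiltW_isNet hW h) x u h
  have hm := cof_mono hW.nonneg (fun i => (ha0 i).le) ha1 ha x u
  have hP : 0 < ∏ i, a i := Finset.prod_pos fun i _ => ha0 i
  have he := energy_tilt W u h
  change energy (tiltW W h) (u + h) + energy (tiltW W h) (u - h) = _ at he
  have hcof : cof W x u ≤ (∏ i, a i)⁻¹ *
      (√(cof (tiltW W h) x (u + h)) * √(cof (tiltW W h) x (u - h))) := by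
    rw [inv_mul_eq_div, le_div_iff₀ hP, mul_comm]
    exact hm.trans hc
  unfold freeDens
  rw [mul_pow, mul_pow, Real.sq_sqrt (cof_pos hW x u).le]
  refine (mul_le_mul_of_nonneg_left hcof (by positivity)).trans (le_of_eq ?_)
  have h1 : Real.exp (-∑ i, u i) ^ 2 =
      Real.exp (-∑ i, (u + h) i) * Real.exp (-∑ i, (u - h) i) := by
    rw [sq, ← Real.exp_add, ← Real.exp_add]
    congr 1
    simp only [Pi.add_apply, Pi.sub_apply, Finset.sum_add_distrib, Finset.sum_sub_distrib]
    ring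
  have h2 : Real.exp (-energy W u) ^ 2 = Real.exp (∑ i, ∑ j, (W i j - tiltW W h i j)) *
      Real.exp (-energy (tiltW W h) (u + h)) * Real.exp (-energy (tiltW W h) (u - h)) := by
    rw [sq, ← Real.exp_add, ← Real.exp_add, ← Real.exp_add]
    congr 1
    linarith
  rw [h1, h2]
  ring

/-- By the arithmetic-geometric mean inequality the geometric mean of the shifted densities is
at most their average, each of which has bounded mass. The shifts produce the gain `e^{-h y / 2}`. -/
lemma lintegral_tilt_le {W : V → V → ℝ} (hW : IsNet W) (x y : V) (h : V → ℝ) (hx : h x = 0)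
    {a : V → ℝ} (ha0 : ∀ i, 0 < a i) (ha1 : ∀ i, a i ≤ 1)
    (ha : ∀ i j, a i * W i j ≤ tiltW W h i j) :
    ∫⁻ u : V → ℝ, ENNReal.ofReal (gaugeDens (u x)) *
        ENNReal.ofReal (freeDens W x u * Real.exp ((u x + u y) / 2)) ≤
      ENNReal.ofReal (Real.exp (-h y / 2) *
        √(Real.exp (∑ i, ∑ j, (W i j - tiltW W h i j)) / ∏ i, a i) *
          √(2 * π) ^ Fintype.card V) := by
  set D := √(Real.exp (∑ i, ∑ j, (W i j - tiltW W h i j)) / ∏ i, a i) with hD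
  have hP : 0 < ∏ i, a i := Finset.prod_pos fun i _ => ha0 i
  have hD2 : D ^ 2 = Real.exp (∑ i, ∑ j, (W i j - tiltW W h i j)) / ∏ i, a i :=
    Real.sq_sqrt (by positivity)
  have hD0 : 0 ≤ D := Real.sqrt_nonneg _
  set b := freeDens (tiltW W h) x with hb
  have hb0 : ∀ u, 0 ≤ b u := freeDens_nonneg _ x
  have hN := tiltW_isNet hW h
  have hpt : ∀ u : V → ℝ, freeDens W x u * Real.exp ((u x + u y) / 2) ≤
      Real.exp (-h y / 2) * D / 2 * (b (u + h) * Real.exp ((u + h) y) +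
        b (u - h) * Real.exp ((u - h) x)) := by
    intro u
    have h1 := freeDens_sq_le hW x u h ha0 ha1 ha
    rw [← hD2, ← hb] at h1
    have hp := hb0 (u + h)
    have hm := hb0 (u - h)
    refine abs_le_of_sq_le_sq' ?_ (by positivity) |>.2
    have e1 : (Real.exp ((u x + u y) / 2)) ^ 2 = Real.exp (-h y / 2) ^ 2 *
        (Real.exp ((u + h) y) * Real.exp ((u - h) x)) := by
      simp only [sq, ← Real.exp_add, Pi.add_apply, Pi.sub_apply, hx]
      congr 1; ring
    have e2 : 4 * (b (u + h) * Real.exp ((u + h) y) * (b (u - h) * Real.exp ((u - h) x))) ≤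
        (b (u + h) * Real.exp ((u + h) y) + b (u - h) * Real.exp ((u - h) x)) ^ 2 := by
      nlinarith [sq_nonneg (b (u + h) * Real.exp ((u + h) y) - b (u - h) * Real.exp ((u - h) x))]
    calc (freeDens W x u * Real.exp ((u x + u y) / 2)) ^ 2
        = freeDens W x u ^ 2 * Real.exp ((u x + u y) / 2) ^ 2 := by ring
      _ ≤ D ^ 2 * (b (u + h) * b (u - h)) * Real.exp ((u x + u y) / 2) ^ 2 := by gcongr
      _ = (Real.exp (-h y / 2) * D / 2) ^ 2 *
          (4 * (b (u + h) * Real.exp ((u + h) y) * (b (u - h) * Real.exp ((u - h) x)))) := by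
        rw [e1]; ring
      _ ≤ (Real.exp (-h y / 2) * D / 2) ^ 2 *
          (b (u + h) * Real.exp ((u + h) y) + b (u - h) * Real.exp ((u - h) x)) ^ 2 := by gcongr
      _ = _ := by ring
  -- translating the field by `± h` does not move its value at `x`
  have hplus : ∫⁻ u : V → ℝ, ENNReal.ofReal (gaugeDens (u x)) *
      ENNReal.ofReal (b (u + h) * Real.exp ((u + h) y)) ≤
        ENNReal.ofReal (√(2 * π) ^ Fintype.card V) := by
    refine le_trans (le_of_eq ?_) (lintegral_freeDens_le hN x y)
    rw [← lintegral_add_right_eq_self (fun u : V → ℝ => ENNReal.ofReal (gaugeDens (u x)) *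
      ENNReal.ofReal (freeDens (tiltW W h) x u * Real.exp (u y))) h]
    refine lintegral_congr fun u => ?_
    rw [Pi.add_apply u h x, hx, add_zero]
  have hminus : ∫⁻ u : V → ℝ, ENNReal.ofReal (gaugeDens (u x)) *
      ENNReal.ofReal (b (u - h) * Real.exp ((u - h) x)) ≤
        ENNReal.ofReal (√(2 * π) ^ Fintype.card V) := by
    refine le_trans (le_of_eq ?_) (lintegral_freeDens_le hN x x)
    rw [← lintegral_sub_right_eq_self (fun u : V → ℝ => ENNReal.ofReal (gaugeDens (u x)) *
      ENNReal.ofReal (freeDens (tiltW W h) x u * Real.exp (u x))) h]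
    refine lintegral_congr fun u => ?_
    rw [Pi.sub_apply u h x, hx, sub_zero]
  have hbc : Continuous b := continuous_freeDens _ x
  have hmeas : Measurable fun u : V → ℝ => ENNReal.ofReal (gaugeDens (u x)) *
      ENNReal.ofReal (b (u + h) * Real.exp ((u + h) y)) := by
    have := continuous_gaugeDens
    refine Measurable.mul (ENNReal.measurable_ofReal.comp ?_) (ENNReal.measurable_ofReal.comp ?_)
    · exact (this.comp (continuous_apply x)).measurable
    · refine Continuous.measurable ?_
      exact (hbc.comp (continuous_id.add continuous_const)).mul
        (Real.continuous_exp.comp ((continuous_apply y).comp (continuous_id.add continuous_const)))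
  calc _ ≤ ∫⁻ u : V → ℝ, ENNReal.ofReal (Real.exp (-h y / 2) * D / 2) *
        (ENNReal.ofReal (gaugeDens (u x)) *
          ENNReal.ofReal (b (u + h) * Real.exp ((u + h) y)) +
        ENNReal.ofReal (gaugeDens (u x)) *
          ENNReal.ofReal (b (u - h) * Real.exp ((u - h) x))) := by
        refine lintegral_mono fun u => ?_
        rw [← mul_add, mul_left_comm]
        refine mul_le_mul_right ?_ _
        have hp := hb0 (u + h)
        have hm := hb0 (u - h)
        rw [← ENNReal.ofReal_add (by positivity) (by positivity),
          ← ENNReal.ofReal_mul (by positivity)]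
        exact ENNReal.ofReal_le_ofReal (hpt u)
    _ ≤ ENNReal.ofReal (Real.exp (-h y / 2) * D / 2) *
        (ENNReal.ofReal (√(2 * π) ^ Fintype.card V) +
          ENNReal.ofReal (√(2 * π) ^ Fintype.card V)) := by
        rw [lintegral_const_mul' _ _ ENNReal.ofReal_ne_top, lintegral_add_left hmeas]
        exact mul_le_mul_right (add_le_add hplus hminus) _
    _ = _ := by
        rw [← ENNReal.ofReal_add (by positivity) (by positivity),
          ← ENNReal.ofReal_mul (by positivity)]
        congr 1; ring

/-- Exponential decay for a general weighted graph, in terms of a function `h` growing from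
`x` to `y`. -/
lemma integral_limDens_le {W : V → V → ℝ} (hW : IsNet W) {p : V → ℝ} (hp : ∀ i, 0 ≤ p i)
    {x y : V} (hpx : 0 < p x) (hpy : 0 < p y) (hint : Integrable (limDens W p x y))
    (h : V → ℝ) (hx : h x = 0)
    {a : V → ℝ} (ha0 : ∀ i, 0 < a i) (ha1 : ∀ i, a i ≤ 1)
    (ha : ∀ i j, a i * W i j ≤ tiltW W h i j) :
    (√(2 * π) ^ Fintype.card V)⁻¹ * ∫ u, limDens W p x y u ≤
      √(2 * π) / gaugeMass * (min (p x) (p y))⁻¹ * (Real.exp (-h y / 2) *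
        √(Real.exp (∑ i, ∑ j, (W i j - tiltW W h i j)) / ∏ i, a i)) := by
  have hK := gaugeMass_pos
  have hm : 0 < min (p x) (p y) := lt_min hpx hpy
  have h1 := (lintegral_limDens_le (W := W) hp x hpx hpy).trans
    (mul_le_mul_right (lintegral_tilt_le hW x y h hx ha0 ha1 ha) _)
  have hnn : ∀ u, 0 ≤ limDens W p x y u := fun u => (limDens_pos hW hp x hpy u).le
  rw [← ofReal_integral_eq_lintegral_ofReal hint (Filter.Eventually.of_forall hnn),
    ← ENNReal.ofReal_mul hK.le, ← ENNReal.ofReal_mul (by positivity),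
    ENNReal.ofReal_le_ofReal_iff (by positivity)] at h1
  set D := √(Real.exp (∑ i, ∑ j, (W i j - tiltW W h i j)) / ∏ i, a i)
  have hN : 0 < √(2 * π) ^ Fintype.card V := by positivity
  rw [inv_mul_le_iff₀ hN]
  have h2 : √(2 * π) ^ Fintype.card V * (√(2 * π) / gaugeMass * (min (p x) (p y))⁻¹ *
      (Real.exp (-h y / 2) * D)) = (√(2 * π) * (min (p x) (p y))⁻¹ *
        (Real.exp (-h y / 2) * D * √(2 * π) ^ Fintype.card V)) / gaugeMass := by ring
  rw [h2, le_div_iff₀ hK, mul_comm]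
  exact h1

/-! ### Decay along a height function -/

lemma one_sub_inv_cosh_le (s : ℝ) : 1 - (Real.cosh s)⁻¹ ≤ s ^ 2 / 2 := by
  have h1 : Real.exp (-(s ^ 2 / 2)) ≤ (Real.cosh s)⁻¹ := by
    rw [Real.exp_neg]
    exact inv_anti₀ (Real.cosh_pos _) (Real.cosh_le_exp_half_sq s)
  have h2 := Real.add_one_le_exp (-(s ^ 2 / 2))
  linarith

lemma abs_min_abs_sub_le {q s : ℤ} (h : |q - s| ≤ 1) (k m : ℤ) :
    |min |q - k| m - min |s - k| m| ≤ 1 := by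
  rw [abs_le] at h ⊢
  rcases abs_cases (q - k) with h1 | h1 <;> rcases abs_cases (s - k) with h2 | h2 <;> omega

/-- Beyond the truncation level, neighbouring heights have the same truncated distance. -/
lemma min_abs_sub_eq {q s : ℤ} (h : |q - s| ≤ 1) {k m : ℤ} (hm : m < |q - k|) :
    min |q - k| m = min |s - k| m := by
  rw [abs_le] at h
  rcases abs_cases (q - k) with h1 | h1 <;> rcases abs_cases (s - k) with h2 | h2 <;> omega

/-- Exponential decay along an integer-valued height function `n` whose level sets are uniformly
bounded and whose steps across an edge are at most one: `h` is taken to be a small multiple of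
the truncated height difference to `x`. -/
lemma integral_limDens_le_exp {W : V → V → ℝ} (hW : IsNet W) {p : V → ℝ} (hp : ∀ i, 0 ≤ p i)
    {x y : V} (hpx : 0 < p x) (hpy : 0 < p y) (hint : Integrable (limDens W p x y))
    (n : V → ℤ) {b d C : ℝ} (hb : 0 ≤ b) (hd : 0 ≤ d) (hC : C = d * (b + 1 / 2) / 2 + 1)
    (hn : ∀ i j, 0 < W i j → |n i - n j| ≤ 1)
    (hdeg : ∀ i, ∑ j with n j ≠ n i, W i j ≤ 2 * b)
    (hcard : ∀ (k : ℤ) (m : ℕ),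
      ((Finset.univ.filter fun i => |n i - k| ≤ (m : ℤ)).card : ℝ) ≤ d * (2 * m + 1)) :
    (√(2 * π) ^ Fintype.card V)⁻¹ * ∫ u, limDens W p x y u ≤
      √(2 * π) / gaugeMass * Real.exp (1 / (64 * C)) * (min (p x) (p y))⁻¹ *
        Real.exp (-(1 / (32 * C)) * |(n x : ℝ) - (n y : ℝ)|) := by
  have hC1 : 1 ≤ C := by rw [hC]; have : 0 ≤ d * (b + 1 / 2) := by positivity
                         linarith
  have hC0 : 0 < C := by linarith
  set m : ℕ := (n x - n y).natAbs with hm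
  have hmZ : (m : ℤ) = |n x - n y| := by rw [hm]; exact Int.natCast_natAbs _
  have hmR : (m : ℝ) = |(n x : ℝ) - (n y : ℝ)| := by
    have : ((m : ℤ) : ℝ) = ((|n x - n y| : ℤ) : ℝ) := by rw [hmZ]
    push_cast at this
    exact this
  set r : ℝ := 1 / (8 * C) with hr
  have hr0 : 0 < r := by positivity
  set l : V → ℤ := fun i => min |n i - n x| (m : ℤ) with hl
  set h : V → ℝ := fun i => r * (l i : ℝ) with hh
  set B := Finset.univ.filter fun i => |n i - n x| ≤ (m : ℤ) with hB
  set a : V → ℝ := fun i => if i ∈ B then (Real.cosh r)⁻¹ else 1 with ha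
  have hx : h x = 0 := by simp [hh, hl]
  have hy : h y = r * m := by
    have : l y = m := by simp only [hl]; rw [hmZ, abs_sub_comm, min_self]
    simp only [hh]
    rw [this]
    norm_cast
  have ha0 : ∀ i, 0 < a i := fun i => by
    simp only [ha]
    have := Real.cosh_pos r
    split_ifs <;> positivity
  have ha1 : ∀ i, a i ≤ 1 := fun i => by
    simp only [ha]
    split_ifs
    · exact inv_le_one_of_one_le₀ (Real.one_le_cosh r)
    · exact le_rfl
  have hle : ∀ i j, 0 < W i j → |h i - h j| ≤ r := by
    intro i j hij
    have h1 := hn i j hij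
    have h2 : |l i - l j| ≤ 1 := abs_min_abs_sub_le h1 _ _
    have h3 : |(l i : ℝ) - (l j : ℝ)| ≤ 1 := by exact_mod_cast h2
    simp only [hh]
    rw [← mul_sub, abs_mul, abs_of_pos hr0]
    exact mul_le_of_le_one_right hr0.le h3
  have heq : ∀ i j, 0 < W i j → i ∉ B → h i - h j = 0 := by
    intro i j hij hi
    have h1 := hn i j hij
    have hi' : (m : ℤ) < |n i - n x| := by simpa [hB] using hi
    have h2 : l i = l j := min_abs_sub_eq h1 hi'
    simp only [hh]
    rw [h2, sub_self]
  have haW : ∀ i j, a i * W i j ≤ tiltW W h i j := by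
    intro i j
    rcases (hW.nonneg i j).eq_or_lt with h0 | h0
    · simp [tiltW, ← h0]
    · rw [tiltW, div_eq_mul_inv, mul_comm]
      refine mul_le_mul_of_nonneg_left ?_ h0.le
      by_cases hi : i ∈ B
      · simp only [ha, hi, if_true]
        refine inv_anti₀ (Real.cosh_pos _) (Real.cosh_le_cosh.2 ?_)
        rw [abs_of_pos hr0]
        exact hle i j h0
      · simp [ha, hi, heq i j h0 hi]
  have hrow : ∀ i, ∑ j, (W i j - tiltW W h i j) ≤ if i ∈ B then b * r ^ 2 else 0 := by
    intro i
    split_ifs with hi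
    · have hterm : ∀ j, W i j - tiltW W h i j ≤
          if n j ≠ n i then W i j * (r ^ 2 / 2) else 0 := by
        intro j
        rcases (hW.nonneg i j).eq_or_lt with h0 | h0
        · simp [tiltW, ← h0]
        · rw [tiltW, div_eq_mul_inv, ← mul_one_sub]
          split_ifs with hne
          · refine mul_le_mul_of_nonneg_left ((one_sub_inv_cosh_le _).trans ?_) h0.le
            have := sq_le_sq' (abs_le.1 (hle i j h0)).1 (abs_le.1 (hle i j h0)).2
            linarith
          · have : n j = n i := not_not.1 hne
            simp [hh, hl, this]
      refine (Finset.sum_le_sum fun j _ => hterm j).trans ?_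
      rw [← Finset.sum_filter, ← Finset.sum_mul]
      have := mul_le_mul_of_nonneg_right (hdeg i) (by positivity : 0 ≤ r ^ 2 / 2)
      linarith
    · refine le_of_eq (Finset.sum_eq_zero fun j _ => ?_)
      rcases (hW.nonneg i j).eq_or_lt with h0 | h0
      · simp [tiltW, ← h0]
      · simp [tiltW, heq i j h0 hi]
  have hS : ∑ i, ∑ j, (W i j - tiltW W h i j) ≤ B.card * (b * r ^ 2) := by
    refine (Finset.sum_le_sum fun i _ => hrow i).trans (le_of_eq ?_)
    rw [← Finset.sum_filter, Finset.sum_const, nsmul_eq_mul, Finset.filter_mem_eq_inter,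
      Finset.univ_inter]
  have hprod : ∏ i, a i = (Real.cosh r ^ B.card)⁻¹ := by
    simp only [ha]
    rw [← Finset.prod_filter, Finset.prod_const, Finset.filter_mem_eq_inter,
      Finset.univ_inter, inv_pow]
  have hD : √(Real.exp (∑ i, ∑ j, (W i j - tiltW W h i j)) / ∏ i, a i) ≤
      Real.exp ((2 * m + 1) * C * r ^ 2) := by
    refine Real.sqrt_le_iff.2 ⟨(Real.exp_pos _).le, ?_⟩
    rw [hprod, div_inv_eq_mul, sq, ← Real.exp_add]
    have h1 : Real.cosh r ^ B.card ≤ Real.exp (B.card * (r ^ 2 / 2)) := by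
      rw [Real.exp_nat_mul]
      exact pow_le_pow_left₀ (Real.cosh_pos _).le (Real.cosh_le_exp_half_sq r) _
    refine (mul_le_mul_of_nonneg_left h1 (Real.exp_pos _).le).trans ?_
    rw [← Real.exp_add]
    refine Real.exp_le_exp.2 ?_
    have h2 := mul_le_mul_of_nonneg_right (hcard (n x) m)
      (by positivity : 0 ≤ (b + 1 / 2) * r ^ 2)
    have h3 : 0 ≤ (2 * (m : ℝ) + 1) * r ^ 2 := by positivity
    rw [hC]
    change (B.card : ℝ) * _ ≤ _ at h2
    nlinarith
  refine (integral_limDens_le hW hp hpx hpy hint h hx ha0 ha1 haW).trans ?_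
  have hpos : 0 ≤ √(2 * π) / gaugeMass * (min (p x) (p y))⁻¹ := by
    have := gaugeMass_pos
    have := lt_min hpx hpy
    positivity
  refine (mul_le_mul_of_nonneg_left
    (mul_le_mul_of_nonneg_left hD (Real.exp_pos _).le) hpos).trans (le_of_eq ?_)
  rw [mul_right_comm _ (Real.exp (1 / (64 * C))), mul_assoc _ (Real.exp (1 / (64 * C))),
    ← Real.exp_add, ← Real.exp_add, ← hmR, hy]
  congr 2
  rw [hr]
  field_simp
  ring

end

/-! ### The ladder graph -/

section

variable {V0 : Type*}

lemma ladderL_adj {G0 : SimpleGraph V0} {L1 L2 : ℕ}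
    {a b : ↥(Set.Icc (-(L1 : ℤ)) (L2 : ℤ)) × V0} :
    (ladderL G0 L1 L2).Adj a b ↔ ((a.1 : ℤ) = (b.1 : ℤ) ∧ G0.Adj a.2 b.2) ∨
      (a.2 = b.2 ∧ ((b.1 : ℤ) = (a.1 : ℤ) + 1 ∨ (a.1 : ℤ) = (b.1 : ℤ) + 1)) := by
  rw [ladderL, SimpleGraph.fromRel_adj]
  constructor
  · rintro ⟨-, (⟨h1, h2⟩ | ⟨h1, h2⟩) | (⟨h1, h2⟩ | ⟨h1, h2⟩)⟩
    · exact Or.inl ⟨h1, h2⟩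
    · exact Or.inr ⟨h1, Or.inl h2⟩
    · exact Or.inl ⟨h1.symm, h2.symm⟩
    · exact Or.inr ⟨h1.symm, Or.inr h2⟩
  · rintro (⟨h1, h2⟩ | ⟨h1, h2 | h2⟩)
    · exact ⟨fun h => h2.ne (congrArg Prod.snd h), Or.inl (Or.inl ⟨h1, h2⟩)⟩
    · exact ⟨fun h => by rw [h] at h2; omega, Or.inl (Or.inr ⟨h1, h2⟩)⟩
    · exact ⟨fun h => by rw [h] at h2; omega, Or.inr (Or.inr ⟨h1.symm, h2⟩)⟩

variable {G0 : SimpleGraph V0} {βV : V0 → V0 → ℝ} {βH : V0 → ℝ}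

lemma ladderWeights_symm [DecidableEq V0] (hβVsymm : ∀ v w, βV v w = βV w v) (L1 L2 : ℕ)
    (a b : ↥(Set.Icc (-(L1 : ℤ)) (L2 : ℤ)) × V0) :
    ladderWeights βV βH L1 L2 a b = ladderWeights βV βH L1 L2 b a := by
  unfold ladderWeights
  by_cases h : a.2 = b.2
  · rw [if_pos h, if_pos h.symm, h]
  · rw [if_neg h, if_neg (Ne.symm h), hβVsymm]

lemma netW_ladder_pos [DecidableEq V0] (hβVpos : ∀ v w, G0.Adj v w → 0 < βV v w) (hβHpos : ∀ v, 0 < βH v)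
    {L1 L2 : ℕ} {a b : ↥(Set.Icc (-(L1 : ℤ)) (L2 : ℤ)) × V0}
    (h : (ladderL G0 L1 L2).Adj a b) :
    0 < netW (ladderL G0 L1 L2) (ladderWeights βV βH L1 L2) a b := by
  rw [netW, if_pos h, ladderWeights]
  rcases ladderL_adj.1 h with ⟨-, h2⟩ | ⟨h2, -⟩
  · rw [if_neg h2.ne]
    exact hβVpos _ _ h2
  · rw [if_pos h2]
    exact hβHpos _

lemma adj_of_netW_pos {V : Type*} {G : SimpleGraph V} {β : V → V → ℝ} {a b : V}
    (h : 0 < netW G β a b) : G.Adj a b := by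
  by_contra hn
  rw [netW, if_neg hn] at h
  exact lt_irrefl _ h

lemma ladder_isNet [DecidableEq V0] (hG0 : G0.Connected) (hβVsymm : ∀ v w, βV v w = βV w v)
    (hβVpos : ∀ v w, G0.Adj v w → 0 < βV v w) (hβHpos : ∀ v, 0 < βH v) (L1 L2 : ℕ) :
    IsNet (netW (ladderL G0 L1 L2) (ladderWeights βV βH L1 L2)) where
  symm a b := by
    simp only [netW]
    rw [SimpleGraph.adj_comm, ladderWeights_symm hβVsymm]
  nonneg a b := by
    by_cases h : (ladderL G0 L1 L2).Adj a b
    · exact (netW_ladder_pos hβVpos hβHpos h).le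
    · rw [netW, if_neg h]
  conn a b := by
    have hmono : ∀ {a b}, Relation.ReflTransGen (ladderL G0 L1 L2).Adj a b →
        Relation.ReflTransGen (fun a b =>
          0 < netW (ladderL G0 L1 L2) (ladderWeights βV βH L1 L2) a b) a b := fun {a b} h =>
      Relation.ReflTransGen.mono (fun _ _ hab => netW_ladder_pos hβVpos hβHpos hab) _ _ h
    refine hmono ?_
    have hvert : ∀ (n : ↥(Set.Icc (-(L1 : ℤ)) (L2 : ℤ))) (v w : V0),
        (ladderL G0 L1 L2).Reachable (n, v) (n, w) := by
      intro n v w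
      have := (SimpleGraph.reachable_iff_reflTransGen v w).1 (hG0.preconnected v w)
      refine (SimpleGraph.reachable_iff_reflTransGen _ _).2 (this.lift (fun v => (n, v)) ?_)
      exact fun v w h => ladderL_adj.2 (Or.inl ⟨rfl, h⟩)
    have hhor : ∀ (k : ℕ) (n m : ↥(Set.Icc (-(L1 : ℤ)) (L2 : ℤ))) (v : V0),
        (m : ℤ) = n + k → (ladderL G0 L1 L2).Reachable (n, v) (m, v) := by
      intro k
      induction k with
      | zero =>
        intro n m v h
        have : m = n := Subtype.ext (by simpa using h)
        rw [this]
      | succ k ih =>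
        intro n m v h
        have hn := n.2
        have hm := m.2
        rw [Set.mem_Icc] at hn hm
        have hc : (m : ℤ) - 1 ∈ Set.Icc (-(L1 : ℤ)) (L2 : ℤ) := by
          rw [Set.mem_Icc]; push_cast at h; omega
        refine (ih n ⟨(m : ℤ) - 1, hc⟩ v (by push_cast at h ⊢; omega)).trans
          (SimpleGraph.Adj.reachable (ladderL_adj.2 (Or.inr ⟨rfl, Or.inl ?_⟩)))
        simp
    rw [← SimpleGraph.reachable_iff_reflTransGen]
    refine SimpleGraph.Reachable.trans ?_ (hvert b.1 a.2 b.2)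
    rcases le_total (a.1 : ℤ) b.1 with hab | hab
    · exact hhor ((b.1 : ℤ) - a.1).toNat a.1 b.1 a.2 (by omega)
    · exact (hhor ((a.1 : ℤ) - b.1).toNat b.1 a.1 a.2 (by omega)).symm

/-- Each vertex has at most two horizontal edges. -/
lemma ladder_horizontal_le [Fintype V0] [DecidableEq V0] (hβHpos : ∀ v, 0 < βH v) (L1 L2 : ℕ)
    (a : ↥(Set.Icc (-(L1 : ℤ)) (L2 : ℤ)) × V0) :
    ∑ b with (b.1 : ℤ) ≠ a.1, netW (ladderL G0 L1 L2) (ladderWeights βV βH L1 L2) a b ≤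
      2 * ∑ v, βH v := by
  set S := Finset.univ.filter fun b : ↥(Set.Icc (-(L1 : ℤ)) (L2 : ℤ)) × V0 =>
    a.2 = b.2 ∧ ((b.1 : ℤ) = (a.1 : ℤ) + 1 ∨ (a.1 : ℤ) = (b.1 : ℤ) + 1) with hS
  have hcard : S.card ≤ 2 := by
    refine le_trans (Finset.card_le_card_of_injOn (t := {(a.1 : ℤ) + 1, (a.1 : ℤ) - 1})
      (fun b => (b.1 : ℤ)) ?_ ?_) Finset.card_le_two
    · intro b hb
      have hb' := (Finset.mem_filter.1 hb).2.2
      simp only [Finset.coe_insert, Finset.coe_singleton, Set.mem_insert_iff,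
        Set.mem_singleton_iff]
      omega
    · intro b hb c hc hbc
      have h1 := (Finset.mem_filter.1 hb).2.1
      have h2 := (Finset.mem_filter.1 hc).2.1
      exact Prod.ext (Subtype.ext hbc) (h1.symm.trans h2)
  have hterm : ∀ b, (if (b.1 : ℤ) ≠ a.1 then
      netW (ladderL G0 L1 L2) (ladderWeights βV βH L1 L2) a b else 0) ≤
        if b ∈ S then βH a.2 else 0 := by
    intro b
    have hβ := (hβHpos a.2).le
    by_cases hne : (b.1 : ℤ) ≠ a.1
    · rw [if_pos hne, netW]
      by_cases hadj : (ladderL G0 L1 L2).Adj a b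
      · rw [if_pos hadj]
        rcases ladderL_adj.1 hadj with ⟨h1, -⟩ | h
        · exact absurd h1.symm hne
        · have hb : b ∈ S := Finset.mem_filter.2 ⟨Finset.mem_univ _, h⟩
          rw [if_pos hb, ladderWeights, if_pos h.1]
      · rw [if_neg hadj]
        split_ifs <;> simp [hβ]
    · rw [if_neg hne]
      split_ifs <;> simp [hβ]
  rw [Finset.sum_filter]
  refine (Finset.sum_le_sum fun b _ => hterm b).trans ?_
  rw [← Finset.sum_filter, Finset.filter_mem_eq_inter, Finset.univ_inter, Finset.sum_const,
    nsmul_eq_mul]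
  have h2 : (S.card : ℝ) ≤ 2 := by exact_mod_cast hcard
  exact mul_le_mul h2 (Finset.single_le_sum (f := βH) (fun v _ => (hβHpos v).le)
    (Finset.mem_univ a.2)) (hβHpos _).le (by norm_num)

lemma ladder_card_le [Fintype V0] (L1 L2 : ℕ) (k : ℤ) (m : ℕ) :
    ((Finset.univ.filter fun a : ↥(Set.Icc (-(L1 : ℤ)) (L2 : ℤ)) × V0 =>
      |(a.1 : ℤ) - k| ≤ (m : ℤ)).card : ℝ) ≤ Fintype.card V0 * (2 * m + 1) := by
  have h : (Finset.univ.filter fun a : ↥(Set.Icc (-(L1 : ℤ)) (L2 : ℤ)) × V0 =>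
      |(a.1 : ℤ) - k| ≤ (m : ℤ)).card ≤
        (Finset.Icc (k - m) (k + m) ×ˢ (Finset.univ : Finset V0)).card := by
    refine Finset.card_le_card_of_injOn (fun a => ((a.1 : ℤ), a.2)) ?_ ?_
    · intro a ha
      have := abs_le.1 (Finset.mem_filter.1 ha).2
      simp only [Finset.coe_product, Finset.coe_Icc, Finset.coe_univ, Set.mem_prod, Set.mem_Icc,
        Set.mem_univ, and_true]
      omega
    · intro a _ b _ hab
      simp only [Prod.mk.injEq] at hab
      exact Prod.ext (Subtype.ext hab.1) hab.2
  rw [Finset.card_product, Int.card_Icc, Finset.card_univ,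
    show (k + m + 1 - (k - m)).toNat = 2 * m + 1 by omega] at h
  calc _ ≤ (((2 * m + 1) * Fintype.card V0 : ℕ) : ℝ) := by exact_mod_cast h
    _ = _ := by push_cast; ring

end

/-- exponential decay of correlations on ladder graphs:
there exist constants `c₁, c₂ > 0` depending only on `G₀` and the (translation-invariant)
weights such that for all window parameters `L = (−L̲, L̄)`, all `π ≥ 0` and all distinct
vertices `x, y` with `π_x, π_y > 0`, the limit `lim_{ε↓0} ε E_{μ^ε_L}[G^ε_{xy}]` exists,
is positive, and is at most `c₁ c₃(π) e^{−c₂ |x−y|}` with `c₃(π) = min{π_x, π_y}⁻¹` and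
`|x−y|` the horizontal distance. -/
theorem stmt_7 {V0 : Type*} [Fintype V0] [DecidableEq V0]
    (G0 : SimpleGraph V0) (hG0 : G0.Connected)
    (βV : V0 → V0 → ℝ) (βH : V0 → ℝ)
    (hβVsymm : ∀ v w, βV v w = βV w v)
    (hβVpos : ∀ v w, G0.Adj v w → 0 < βV v w)
    (hβHpos : ∀ v, 0 < βH v) :
    ∃ c1 c2 : ℝ, 0 < c1 ∧ 0 < c2 ∧
      ∀ (L1 L2 : ℕ) (pv : (↥(Set.Icc (-(L1 : ℤ)) (L2 : ℤ)) × V0) → ℝ),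
        (∀ i, 0 ≤ pv i) →
        ∀ x y, x ≠ y → 0 < pv x → 0 < pv y →
        ∃ L : ℝ,
          Filter.Tendsto
            (fun ε : ℝ => ε * expect (ladderL G0 L1 L2) (ladderWeights βV βH L1 L2)
              (pinOf pv ε)
              (fun t _ _ => Gfun (ladderL G0 L1 L2) (ladderWeights βV βH L1 L2)
                (pinOf pv ε) t x y))
            (𝓝[>] (0 : ℝ)) (𝓝 L) ∧
          0 < L ∧
          L ≤ c1 * (min (pv x) (pv y))⁻¹ *
                Real.exp (-c2 * |((x.1 : ℤ) : ℝ) - ((y.1 : ℤ) : ℝ)|) := by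
  have hC : 0 < (Fintype.card V0 : ℝ) * (∑ v, βH v + 1 / 2) / 2 + 1 := by
    have := Finset.sum_nonneg fun v (_ : v ∈ Finset.univ) => (hβHpos v).le
    positivity
  set C : ℝ := (Fintype.card V0 : ℝ) * (∑ v, βH v + 1 / 2) / 2 + 1 with hCdef
  have hK := gaugeMass_pos
  refine ⟨√(2 * π) / gaugeMass * Real.exp (1 / (64 * C)), 1 / (32 * C), by positivity,
    by positivity, ?_⟩
  intro L1 L2 pv hpv x y _ hx hy
  have hW := ladder_isNet hG0 hβVsymm hβVpos hβHpos L1 L2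
  obtain ⟨hlim, hint, hpos⟩ := tendsto_expect (ladderL G0 L1 L2)
    (ladderWeights_symm (βH := βH) hβVsymm L1 L2) hW hpv x hy
  refine ⟨_, hlim, by positivity, ?_⟩
  refine integral_limDens_le_exp hW hpv hx hy hint (fun a => (a.1 : ℤ))
    (Finset.sum_nonneg fun v _ => (hβHpos v).le) (Nat.cast_nonneg _) hCdef ?_
    (ladder_horizontal_le hβHpos L1 L2) (ladder_card_le L1 L2)
  intro a b hab
  rcases ladderL_adj.1 (adj_of_netW_pos hab) with ⟨h, -⟩ | ⟨-, h⟩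
  · simp [h]
  · rw [abs_le]
    omega

end H22
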